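/- arXiv:2008.03812 — 2 statements merged into one kernel-verified Lean document; each statement's English description precedes it below -/
import Mathlib

section
/- There exists a constant C > 0 such that for every natural number n ≥ 5 there is an element x of the alternating group A_n — an n-cycle if n is odd, and a product of two disjoint (n/2)-cycles if n is even — such that the number of y ∈ A_n for which {x, y} invariably generates A_n is at least (1 − C·n^{−2/25}) · |A_n|. -/
/-- `{x, y}` invariably generates `G`: for all `g, h`, the conjugates
`g * x * g⁻¹` and `h * y * h⁻¹` generate `G`. -/
def InvGen {G : Type*} [Group G] (x y : G) : Prop :=
  ∀ g h : G, Subgroup.closure {g * x * g⁻¹, h * y * h⁻¹} = ⊤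

/-!
Let `H` be generated by a conjugate of `y` and one of an element `x` with one or two cycles, of
equal length. The invariant sets of `x` are empty, everything, or half of the points, so a `y`
without invariant set of half size makes `H` transitive. If `H` preserved a system of blocks, then
the cycles of `y` would permute them: with few blocks, a suitable set of blocks is an invariant set
of an unlikely size or divisibility pattern, and with many blocks two cycle lengths share a large
divisor. For typical `y` none of this happens, and `H` is primitive. A typical `y` also has a short
cycle whose length is divisible by a large prime power, and hence a nontrivial power of small
support. By Babai's bound (if `H` is not doubly transitive) and Bochert's argument (if it is), `H`
contains the alternating group.

The probabilities rest on the means of the products `∏ w(ℓ)` over all cycle lengths `ℓ`, whose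
generating function is `exp (∑ w(ℓ) x ^ ℓ / ℓ)`. Each way of being atypical has probability
`O(n ^ (-2 / 25))`.
-/

namespace InvariableGeneration

open Finset Equiv
open scoped BigOperators

section InvariantSets

variable {α : Type*} {σ : Perm α} {X : Finset α}

/-- `X` is mapped onto itself by `σ`. -/
def IsInvariant (σ : Perm α) (X : Finset α) : Prop := ∀ a, σ a ∈ X ↔ a ∈ X

instance [Fintype α] [DecidableEq α] : Decidable (IsInvariant σ X) :=
  inferInstanceAs (Decidable (∀ a, σ a ∈ X ↔ a ∈ X))

lemma IsInvariant.compl [Fintype α] [DecidableEq α] (h : IsInvariant σ X) :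
    IsInvariant σ Xᶜ :=
  fun a ↦ by simp only [mem_compl, h a]

lemma IsInvariant.mem_iff_of_sameCycle [Finite α] (h : IsInvariant σ X) {a b : α}
    (hab : σ.SameCycle a b) : a ∈ X ↔ b ∈ X := by
  obtain ⟨i, rfl⟩ := hab.exists_nat_pow_eq
  induction i with
  | zero => rfl
  | succ i ih => rw [pow_succ', Perm.mul_apply, h, ih ⟨i, rfl⟩]

lemma isInvariant_subtypeCongr [DecidableEq α] (X : Finset α)
    (σ : Perm {a // a ∈ X}) (τ : Perm {a // a ∉ X}) :
    IsInvariant (Perm.subtypeCongr σ τ) X := by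
  intro a
  by_cases ha : a ∈ X
  · simp [Perm.subtypeCongr.left_apply _ _ ha, ha]
  · simp [Perm.subtypeCongr.right_apply _ _ ha, ha, (τ ⟨a, ha⟩).2]

lemma map_pow_of_semiconj {β : Type*} {σ : Perm α} {τ : Perm β} {F : α → β}
    (h : Function.Semiconj F σ τ) (i : ℕ) (a : α) :
    F ((σ ^ i) a) = (τ ^ i) (F a) := by
  simpa only [Perm.iterate_eq_pow] using h.iterate_right i a

end InvariantSets

section Cycles

variable {α β : Type*} [Fintype α] [DecidableEq α] {σ : Perm α} {X Y : Finset α} {a b : α}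

open Classical in
/-- The partition of the points into the cycles of `σ`. In contrast to
`Equiv.Perm.cycleFactorsFinset` and `Equiv.Perm.cycleType`, a fixed point is a cycle of length
one. -/
noncomputable def cyclePartition (σ : Perm α) : Finpartition (univ : Finset α) :=
  Finpartition.ofSetoid (Perm.SameCycle.setoid σ)

/-- The set of cycles of `σ`, each cycle being encoded by the set of its points. -/
noncomputable abbrev cycles (σ : Perm α) : Finset (Finset α) := (cyclePartition σ).parts

/-- The cycle of `σ` through `a`. -/
noncomputable abbrev cycleAt (σ : Perm α) (a : α) : Finset α := (cyclePartition σ).part a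

/-- The multiset of lengths of the cycles of `σ` contained in `X`. -/
noncomputable def cycleLengthsIn (σ : Perm α) (X : Finset α) : Multiset ℕ :=
  ((cycles σ).filter (· ⊆ X)).val.map Finset.card

/-- The multiset of lengths of all cycles of `σ`. -/
noncomputable def cycleLengths (σ : Perm α) : Multiset ℕ := (cycles σ).val.map Finset.card

lemma mem_cycleAt : b ∈ cycleAt σ a ↔ σ.SameCycle a b := by
  classical
  exact Finpartition.mem_part_ofSetoid_iff_rel

lemma mem_cycleAt_self (σ : Perm α) (a : α) : a ∈ cycleAt σ a :=
  mem_cycleAt.2 (Perm.SameCycle.refl _ _)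

lemma cycleAt_mem_cycles (σ : Perm α) (a : α) : cycleAt σ a ∈ cycles σ :=
  (cyclePartition σ).part_mem.2 (mem_univ a)

lemma cycleAt_eq_of_mem (hX : X ∈ cycles σ) (ha : a ∈ X) : cycleAt σ a = X :=
  (cyclePartition σ).part_eq_of_mem hX ha

lemma mem_cycles : X ∈ cycles σ ↔ ∃ a, cycleAt σ a = X := by
  constructor
  · intro hX
    obtain ⟨a, ha⟩ := (cyclePartition σ).nonempty_of_mem_parts hX
    exact ⟨a, cycleAt_eq_of_mem hX ha⟩
  · rintro ⟨a, rfl⟩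
    exact cycleAt_mem_cycles σ a

lemma sum_card_cycles (σ : Perm α) : ∑ X ∈ cycles σ, #X = Fintype.card α := by
  rw [(cyclePartition σ).sum_card_parts, card_univ]

lemma card_cycleAt (σ : Perm α) (a : α) : #(cycleAt σ a) = Function.minimalPeriod σ a := by
  classical
  have horbit (b : α) : b ∈ cycleAt σ a ↔ b ∈ MulAction.orbit (Subgroup.zpowers σ) a := by
    rw [mem_cycleAt, MulAction.mem_orbit_iff, Subgroup.exists_zpowers]
    rfl
  rw [← Fintype.card_coe, Fintype.card_congr (Equiv.subtypeEquivRight horbit)]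
  exact (MulAction.minimalPeriod_eq_card σ a).symm

lemma pow_apply_eq_self_iff_card_cycleAt_dvd (σ : Perm α) (a : α) (k : ℕ) :
    (σ ^ k) a = a ↔ #(cycleAt σ a) ∣ k := by
  rw [card_cycleAt, ← Function.isPeriodicPt_iff_minimalPeriod_dvd, Function.IsPeriodicPt,
    Function.IsFixedPt, Perm.iterate_eq_pow]

namespace IsInvariant

lemma cycleAt_subset (h : IsInvariant σ X) (ha : a ∈ X) : cycleAt σ a ⊆ X :=
  fun _ hb ↦ (h.mem_iff_of_sameCycle (mem_cycleAt.1 hb)).1 ha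

lemma subset_compl_iff (h : IsInvariant σ X) (hY : Y ∈ cycles σ) : Y ⊆ Xᶜ ↔ ¬ Y ⊆ X := by
  obtain ⟨a, rfl⟩ := mem_cycles.1 hY
  have ha := mem_cycleAt_self σ a
  refine ⟨fun hc hX ↦ mem_compl.1 (hc ha) (hX ha), fun hX ↦ h.compl.cycleAt_subset ?_⟩
  exact mem_compl.2 fun haX ↦ hX (h.cycleAt_subset haX)

lemma cycleLengthsIn_add_compl (h : IsInvariant σ X) :
    cycleLengthsIn σ X + cycleLengthsIn σ Xᶜ = cycleLengths σ := by
  have hcompl : (cycles σ).filter (· ⊆ Xᶜ) = (cycles σ).filter (fun Y ↦ ¬ Y ⊆ X) :=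
    filter_congr fun Y hY ↦ h.subset_compl_iff hY
  rw [cycleLengthsIn, cycleLengthsIn, cycleLengths, hcompl, ← Multiset.map_add, filter_val,
    filter_val, Multiset.filter_add_not]

end IsInvariant

lemma isInvariant_of_mem_cycles (hX : X ∈ cycles σ) : IsInvariant σ X := by
  obtain ⟨a, rfl⟩ := mem_cycles.1 hX
  intro b
  rw [mem_cycleAt, mem_cycleAt, Perm.sameCycle_apply_right]

lemma cycleLengthsIn_of_mem_cycles (hX : X ∈ cycles σ) : cycleLengthsIn σ X = {#X} := by
  have hfilter : (cycles σ).filter (· ⊆ X) = {X} := by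
    refine eq_singleton_iff_unique_mem.2 ⟨mem_filter.2 ⟨hX, subset_rfl⟩, fun Y hY ↦ ?_⟩
    obtain ⟨hY, hYX⟩ := mem_filter.1 hY
    obtain ⟨a, ha⟩ := (cyclePartition σ).nonempty_of_mem_parts hY
    exact (cyclePartition σ).eq_of_mem_parts hY hX ha (hYX ha)
  rw [cycleLengthsIn, hfilter, singleton_val, Multiset.map_singleton]

lemma mem_cycles_iff_cycleLengthsIn :
    X ∈ cycles σ ↔ X.Nonempty ∧ IsInvariant σ X ∧ cycleLengthsIn σ X = {#X} := by
  refine ⟨fun hX ↦ ⟨(cyclePartition σ).nonempty_of_mem_parts hX, isInvariant_of_mem_cycles hX,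
    cycleLengthsIn_of_mem_cycles hX⟩, ?_⟩
  rintro ⟨⟨a, ha⟩, hinv, hlen⟩
  have hsub := hinv.cycleAt_subset ha
  have hcard : #(cycleAt σ a) ∈ cycleLengthsIn σ X :=
    Multiset.mem_map_of_mem _ (mem_filter.2 ⟨cycleAt_mem_cycles σ a, hsub⟩)
  rw [hlen, Multiset.mem_singleton] at hcard
  rw [← eq_of_subset_of_card_le hsub hcard.ge]
  exact cycleAt_mem_cycles σ a

lemma cycleLengths_eq_add_of_mem_cycles (hX : X ∈ cycles σ) :
    cycleLengths σ = {#X} + cycleLengthsIn σ Xᶜ := by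
  rw [← (isInvariant_of_mem_cycles hX).cycleLengthsIn_add_compl, cycleLengthsIn_of_mem_cycles hX]

variable [Fintype β] [DecidableEq β] {τ : Perm β}

lemma map_mem_cycleAt {F : α → β} (h : Function.Semiconj F σ τ) (hb : b ∈ cycleAt σ a) :
    F b ∈ cycleAt τ (F a) := by
  obtain ⟨i, rfl⟩ := (mem_cycleAt.1 hb).exists_nat_pow_eq
  exact mem_cycleAt.2 ⟨i, by rw [zpow_natCast, map_pow_of_semiconj h]⟩

lemma map_cycleAt {f : α ↪ β} (h : Function.Semiconj f σ τ) (a : α) :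
    (cycleAt σ a).map f = cycleAt τ (f a) := by
  ext b
  rw [mem_map]
  constructor
  · rintro ⟨c, hc, rfl⟩
    exact map_mem_cycleAt h hc
  · intro hb
    obtain ⟨i, rfl⟩ := (mem_cycleAt.1 hb).exists_nat_pow_eq
    exact ⟨(σ ^ i) a, mem_cycleAt.2 ⟨i, by rw [zpow_natCast]⟩, map_pow_of_semiconj h i a⟩

lemma filter_cycles_subset_map {f : α ↪ β} (h : Function.Semiconj f σ τ) :
    (cycles τ).filter (· ⊆ univ.map f) = (cycles σ).map (mapEmbedding f).toEmbedding := by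
  ext Y
  simp only [mem_filter, mem_map, RelEmbedding.coe_toEmbedding, mapEmbedding_apply]
  constructor
  · rintro ⟨hY, hsub⟩
    obtain ⟨b, rfl⟩ := mem_cycles.1 hY
    obtain ⟨a, -, rfl⟩ := mem_map.1 (hsub (mem_cycleAt_self τ b))
    exact ⟨_, cycleAt_mem_cycles σ a, map_cycleAt h a⟩
  · rintro ⟨X, hX, rfl⟩
    obtain ⟨a, rfl⟩ := mem_cycles.1 hX
    exact ⟨map_cycleAt h a ▸ cycleAt_mem_cycles τ (f a), map_subset_map.2 (subset_univ _)⟩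

lemma cycleLengthsIn_map_univ {f : α ↪ β} (h : Function.Semiconj f σ τ) :
    cycleLengthsIn τ (univ.map f) = cycleLengths σ := by
  rw [cycleLengthsIn, filter_cycles_subset_map h, map_val, Multiset.map_map, cycleLengths]
  exact Multiset.map_congr rfl fun X _ ↦ card_map f

lemma cycleLengths_permCongr (e : α ≃ β) (σ : Perm α) :
    cycleLengths (e.permCongr σ) = cycleLengths σ := by
  have h : Function.Semiconj e.toEmbedding σ (e.permCongr σ) := fun a ↦ by simp
  rw [← cycleLengthsIn_map_univ h, map_univ_equiv, cycleLengthsIn, cycleLengths,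
    filter_true_of_mem fun X _ ↦ subset_univ X]

lemma cycleLengthsIn_subtypeCongr (X : Finset α) (σ : Perm {a // a ∈ X})
    (τ : Perm {a // a ∉ X}) : cycleLengthsIn (Perm.subtypeCongr σ τ) X = cycleLengths σ := by
  have h : Function.Semiconj (Function.Embedding.subtype (· ∈ X)) σ (Perm.subtypeCongr σ τ) :=
    fun a ↦ (Perm.subtypeCongr.left_apply_subtype σ τ a).symm
  convert cycleLengthsIn_map_univ h
  ext a
  simp

lemma cycleLengthsIn_compl_subtypeCongr (X : Finset α) (σ : Perm {a // a ∈ X})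
    (τ : Perm {a // a ∉ X}) : cycleLengthsIn (Perm.subtypeCongr σ τ) Xᶜ = cycleLengths τ := by
  have h : Function.Semiconj (Function.Embedding.subtype (· ∉ X)) τ (Perm.subtypeCongr σ τ) :=
    fun a ↦ (Perm.subtypeCongr.right_apply_subtype σ τ a).symm
  convert cycleLengthsIn_map_univ h
  ext a
  simp

end Cycles

section CycleAverages

/-- The mean of the statistic `F` of the cycle lengths of a uniformly random permutation of `n`
points. -/
noncomputable def cycleAvg (n : ℕ) (F : Multiset ℕ → ℝ) : ℝ :=
  𝔼 σ : Perm (Fin n), F (cycleLengths σ)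

lemma cycleAvg_const (n : ℕ) (c : ℝ) : cycleAvg n (fun _ ↦ c) = c := Fintype.expect_const c

variable {α : Type*} [Fintype α] [DecidableEq α]

lemma expect_cycleLengths {n : ℕ} (hn : Fintype.card α = n) (F : Multiset ℕ → ℝ) :
    𝔼 σ : Perm α, F (cycleLengths σ) = cycleAvg n F :=
  Fintype.expect_equiv (Fintype.equivFinOfCardEq hn).permCongr _ _
    fun σ ↦ by rw [cycleLengths_permCongr]

lemma sum_cycleLengths {n : ℕ} (hn : Fintype.card α = n) (F : Multiset ℕ → ℝ) :
    ∑ σ : Perm α, F (cycleLengths σ) = n.factorial * cycleAvg n F := by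
  rw [← expect_cycleLengths hn, ← Fintype.card_mul_expect, Fintype.card_perm, hn]

lemma sum_isInvariant (X : Finset α) (F G : Multiset ℕ → ℝ) :
    ∑ σ : Perm α with IsInvariant σ X, F (cycleLengthsIn σ X) * G (cycleLengthsIn σ Xᶜ) =
      (∑ σ : Perm {a // a ∈ X}, F (cycleLengths σ)) *
        ∑ σ : Perm {a // a ∉ X}, G (cycleLengths σ) := by
  rw [sum_mul_sum, ← sum_product']
  symm
  apply sum_bij (fun p _ ↦ Perm.subtypeCongr p.1 p.2)
  · exact fun p _ ↦ mem_filter.2 ⟨mem_univ _, isInvariant_subtypeCongr X p.1 p.2⟩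
  · exact fun p _ q _ h ↦ Perm.subtypeCongrHom_injective (· ∈ X) h
  · intro σ hσ
    have hinv : IsInvariant σ X := (mem_filter.1 hσ).2
    refine ⟨(σ.subtypePerm hinv, σ.subtypePerm (p := (· ∉ X)) fun a ↦ not_congr (hinv a)),
      by simp, ?_⟩
    ext a
    by_cases ha : a ∈ X
    · exact Perm.subtypeCongr.left_apply _ _ ha
    · exact Perm.subtypeCongr.right_apply _ _ ha
  · intro p _
    rw [cycleLengthsIn_subtypeCongr, cycleLengthsIn_compl_subtypeCongr]

lemma expect_sum_isInvariant (F G : Multiset ℕ → ℝ) {n k : ℕ} (hn : Fintype.card α = n)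
    (hk : k ≤ n) :
    𝔼 σ : Perm α, ∑ X ∈ powersetCard k univ with IsInvariant σ X,
      F (cycleLengthsIn σ X) * G (cycleLengthsIn σ Xᶜ) = cycleAvg k F * cycleAvg (n - k) G := by
  have hX : ∀ X ∈ powersetCard k (univ : Finset α),
      ∑ σ : Perm α with IsInvariant σ X, F (cycleLengthsIn σ X) * G (cycleLengthsIn σ Xᶜ) =
        (k.factorial * cycleAvg k F) * ((n - k).factorial * cycleAvg (n - k) G) := by
    intro X hX
    have hcard : #X = k := (mem_powersetCard.1 hX).2
    rw [sum_isInvariant, sum_cycleLengths ((Fintype.card_coe X).trans hcard), sum_cycleLengths]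
    rw [Fintype.card_subtype_compl, hn, Fintype.card_coe, hcard]
  simp only [sum_filter] at hX ⊢
  rw [Fintype.expect_eq_sum_div_card, sum_comm, sum_congr rfl hX, sum_const, card_powersetCard,
    card_univ, Fintype.card_perm, hn, nsmul_eq_mul, ← Nat.choose_mul_factorial_mul_factorial hk]
  have := (Nat.choose_pos hk).ne'
  push_cast
  field_simp

lemma filter_cycles_card_eq (σ : Perm α) {k : ℕ} (hk : 1 ≤ k) :
    (cycles σ).filter (#· = k) =
      (powersetCard k univ).filter fun X ↦ IsInvariant σ X ∧ cycleLengthsIn σ X = {k} := by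
  ext X
  simp only [mem_filter, mem_powersetCard_univ, mem_cycles_iff_cycleLengthsIn, ← card_pos]
  constructor
  · rintro ⟨⟨-, hinv, hlen⟩, rfl⟩
    exact ⟨rfl, hinv, hlen⟩
  · rintro ⟨rfl, hinv, hlen⟩
    exact ⟨⟨hk, hinv, hlen⟩, rfl⟩

lemma sum_cycles_eq_sum_card (σ : Perm α) (f : Finset α → ℝ) :
    ∑ X ∈ cycles σ, f X = ∑ k ∈ Icc 1 (Fintype.card α), ∑ X ∈ cycles σ with #X = k, f X :=
  (sum_fiberwise_of_maps_to (fun X hX ↦ mem_Icc.2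
    ⟨card_pos.2 ((cyclePartition σ).nonempty_of_mem_parts hX), card_le_univ X⟩) f).symm

lemma expect_sum_cycles_eq_sum_cycleAvg (G : ℕ → Multiset ℕ → ℝ) {n : ℕ} (hn : Fintype.card α = n) :
    𝔼 σ : Perm α, ∑ X ∈ cycles σ, G #X (cycleLengthsIn σ Xᶜ) =
      ∑ k ∈ Icc 1 n, cycleAvg k (fun m ↦ if m = {k} then 1 else 0) * cycleAvg (n - k) (G k) := by
  simp only [sum_cycles_eq_sum_card, hn]
  rw [expect_sum_comm]
  refine sum_congr rfl fun k hk ↦ ?_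
  rw [← expect_sum_isInvariant _ _ hn (mem_Icc.1 hk).2]
  refine expect_congr rfl fun σ _ ↦ ?_
  rw [filter_cycles_card_eq σ (mem_Icc.1 hk).1, ← filter_filter, sum_filter]
  refine sum_congr rfl fun X hX ↦ ?_
  rw [(mem_powersetCard.1 (mem_filter.1 hX).1).2, ite_mul, one_mul, zero_mul]

/-- The number of points is the sum of the cycle lengths; averaging this identity over the
permutations of `k` and of `k - 1` points and subtracting determines the proportion of `k`-cycles.
-/
lemma cycleAvg_eq_singleton {k : ℕ} (hk : 1 ≤ k) :
    cycleAvg k (fun m ↦ if m = {k} then 1 else 0) = 1 / k := by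
  have hsum (n : ℕ) :
      (n : ℝ) = ∑ k ∈ Icc 1 n, cycleAvg k (fun m ↦ if m = {k} then 1 else 0) * k := by
    have h := expect_sum_cycles_eq_sum_cycleAvg (fun k _ ↦ (k : ℝ)) (Fintype.card_fin n)
    simp only [cycleAvg_const, ← Nat.cast_sum, sum_card_cycles, Fintype.card_fin,
      Fintype.expect_const] at h
    exact h
  obtain ⟨m, rfl⟩ := Nat.exists_eq_add_of_le' hk
  have hm := hsum (m + 1)
  rw [sum_Icc_succ_top (by lia), ← hsum m, Nat.cast_add_one, add_right_inj] at hm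
  rw [eq_div_iff (by positivity), Nat.cast_add_one, ← hm]

lemma expect_sum_cycles (G : ℕ → Multiset ℕ → ℝ) {n : ℕ} (hn : Fintype.card α = n) :
    𝔼 σ : Perm α, ∑ X ∈ cycles σ, G #X (cycleLengthsIn σ Xᶜ) =
      ∑ k ∈ Icc 1 n, 1 / (k : ℝ) * cycleAvg (n - k) (G k) := by
  rw [expect_sum_cycles_eq_sum_cycleAvg G hn]
  exact sum_congr rfl fun k hk ↦ by rw [cycleAvg_eq_singleton (mem_Icc.1 hk).1]

lemma cycleAvg_sum (g : ℕ → ℝ) (n : ℕ) :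
    cycleAvg n (fun m ↦ (m.map g).sum) = ∑ k ∈ Icc 1 n, g k / k := by
  have h := expect_sum_cycles (fun k _ ↦ g k) (Fintype.card_fin n)
  simp only [cycleAvg_const] at h
  simp only [cycleAvg, cycleLengths, Multiset.map_map]
  exact h.trans (sum_congr rfl fun k _ ↦ one_div_mul_eq_div _ _)

end CycleAverages

section WeightedCycles

/-- The mean of `∏ w(ℓ)`, the product running over the cycle lengths `ℓ` of a uniformly random
permutation of `n` points. Their generating function is `exp (∑ w(ℓ) x ^ ℓ / ℓ)`. -/
noncomputable def cycleWeight (w : ℕ → ℝ) (n : ℕ) : ℝ := cycleAvg n fun m ↦ (m.map w).prod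

variable {w : ℕ → ℝ} {n : ℕ}

lemma cycleWeight_zero (w : ℕ → ℝ) : cycleWeight w 0 = 1 := by
  have hempty (σ : Perm (Fin 0)) : cycles σ = ∅ :=
    eq_empty_of_forall_notMem fun X hX ↦ (mem_cycles.1 hX).choose.elim0
  simp [cycleWeight, cycleAvg, cycleLengths, hempty]

/-- The coefficient form of `x * f' = f * ∑ w(ℓ) x ^ ℓ` for the generating function `f`. -/
lemma mul_cycleWeight (w : ℕ → ℝ) (n : ℕ) :
    n * cycleWeight w n = ∑ k ∈ Icc 1 n, w k * cycleWeight w (n - k) := by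
  have hσ (σ : Perm (Fin n)) :
      ∑ X ∈ cycles σ, (#X : ℝ) * (w #X * ((cycleLengthsIn σ Xᶜ).map w).prod) =
        n * ((cycleLengths σ).map w).prod := by
    have hX : ∀ X ∈ cycles σ, (#X : ℝ) * (w #X * ((cycleLengthsIn σ Xᶜ).map w).prod) =
        #X * ((cycleLengths σ).map w).prod := by
      intro X hX
      rw [cycleLengths_eq_add_of_mem_cycles hX, Multiset.map_add, Multiset.prod_add,
        Multiset.map_singleton, Multiset.prod_singleton]
    rw [sum_congr rfl hX, ← sum_mul, ← Nat.cast_sum, sum_card_cycles, Fintype.card_fin]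
  have h := expect_sum_cycles (fun k m ↦ (k : ℝ) * (w k * (m.map w).prod)) (Fintype.card_fin n)
  simp only [hσ, ← mul_expect] at h
  rw [cycleWeight, cycleAvg, h]
  refine sum_congr rfl fun k hk ↦ ?_
  have hk0 : (k : ℝ) ≠ 0 := Nat.cast_ne_zero.2 (by grind)
  simp only [cycleWeight, cycleAvg, ← mul_expect]
  field_simp

end WeightedCycles

section HarmonicSums

lemma sum_one_div_le (n : ℕ) : ∑ l ∈ Icc 1 n, (1 : ℝ) / l ≤ 1 + Real.log n := by
  have h := harmonic_le_one_add_log n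
  rw [harmonic_eq_sum_Icc] at h
  push_cast at h
  simpa only [one_div] using h

lemma log_add_one_le_sum_one_div (n : ℕ) : Real.log (n + 1) ≤ ∑ l ∈ Icc 1 n, (1 : ℝ) / l := by
  have h := log_add_one_le_harmonic n
  rw [harmonic_eq_sum_Icc] at h
  push_cast at h
  simpa only [one_div] using h

lemma sum_one_div_filter_dvd_le {d : ℕ} (hd : 1 ≤ d) (n : ℕ) :
    ∑ l ∈ Icc 1 n with d ∣ l, (1 : ℝ) / l ≤ (1 + Real.log n) / d := by
  have hsub : (Icc 1 n).filter (d ∣ ·) ⊆ (Icc 1 n).image (d * ·) := by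
    intro l hl
    simp only [mem_filter, mem_Icc, mem_image] at hl ⊢
    obtain ⟨⟨hl1, hln⟩, j, rfl⟩ := hl
    exact ⟨j, ⟨Nat.pos_of_mul_pos_left hl1, (Nat.le_mul_of_pos_left j hd).trans hln⟩, rfl⟩
  calc ∑ l ∈ Icc 1 n with d ∣ l, (1 : ℝ) / l
      ≤ ∑ l ∈ (Icc 1 n).image (d * ·), (1 : ℝ) / l :=
        sum_le_sum_of_subset_of_nonneg hsub fun _ _ _ ↦ by positivity
    _ = (∑ j ∈ Icc 1 n, (1 : ℝ) / j) / d := by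
        rw [sum_image fun a _ b _ h ↦ Nat.eq_of_mul_eq_mul_left hd h, sum_div]
        refine sum_congr rfl fun j _ ↦ ?_
        rw [Nat.cast_mul, div_div, mul_comm]
    _ ≤ (1 + Real.log n) / d := by
        gcongr
        exact sum_one_div_le n

end HarmonicSums

lemma le_mul_exp_sub_of_deriv_le {f f' g g' : ℝ → ℝ} {a b : ℝ} (hab : a ≤ b)
    (hf : ∀ x ∈ Set.Icc a b, HasDerivAt f (f' x) x)
    (hg : ∀ x ∈ Set.Icc a b, HasDerivAt g (g' x) x)
    (hle : ∀ x ∈ Set.Ioo a b, f' x ≤ g' x * f x) : f b ≤ f a * Real.exp (g b - g a) := by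
  have hderiv : ∀ x ∈ Set.Icc a b, HasDerivAt (fun x ↦ f x * Real.exp (-g x))
      ((f' x - g' x * f x) * Real.exp (-g x)) x := by
    intro x hx
    exact ((hf x hx).mul (hg x hx).neg.exp).congr_deriv (by rw [Pi.neg_apply]; ring)
  have hanti : AntitoneOn (fun x ↦ f x * Real.exp (-g x)) (Set.Icc a b) := by
    refine antitoneOn_of_hasDerivWithinAt_nonpos (convex_Icc a b)
      (fun x hx ↦ (hderiv x hx).continuousAt.continuousWithinAt)
      (fun x hx ↦ (hderiv x (interior_subset hx)).hasDerivWithinAt) fun x hx ↦ ?_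
    rw [interior_Icc] at hx
    exact mul_nonpos_of_nonpos_of_nonneg (sub_nonpos.2 (hle x hx)) (Real.exp_pos _).le
  have h : f b * Real.exp (-g b) ≤ f a * Real.exp (-g a) :=
    hanti (Set.left_mem_Icc.2 hab) (Set.right_mem_Icc.2 hab) hab
  rwa [Real.exp_neg, Real.exp_neg, ← div_eq_mul_inv, ← div_eq_mul_inv,
    div_le_iff₀ (Real.exp_pos _), div_mul_eq_mul_div, mul_div_assoc, ← Real.exp_sub] at h

section WeightBounds

variable {w : ℕ → ℝ} {n : ℕ}

lemma cycleWeight_nonneg (hw : ∀ l, 0 ≤ w l) (n : ℕ) : 0 ≤ cycleWeight w n :=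
  expect_nonneg fun _ _ ↦ Multiset.prod_map_nonneg fun l _ ↦ hw l

/-- The truncation `f` of the generating function satisfies `f' ≤ f * ∑ w(ℓ) x ^ (ℓ - 1)`. -/
lemma sum_mul_cycleWeight_mul_pow_le (hw : ∀ l, 0 ≤ w l) (n : ℕ) {x : ℝ} (hx : 0 ≤ x) :
    ∑ j ∈ range (n + 1), j * cycleWeight w j * x ^ (j - 1) ≤
      (∑ l ∈ Icc 1 n, w l * x ^ (l - 1)) * ∑ m ∈ range (n + 1), cycleWeight w m * x ^ m := by
  simp only [mul_cycleWeight, sum_mul]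
  rw [sum_comm' (t' := Icc 1 n) (s' := fun l ↦ Ico l (n + 1))
    (by simp only [mem_range, mem_Icc, mem_Ico]; lia)]
  refine sum_le_sum fun l hl ↦ ?_
  rw [sum_Ico_eq_sum_range, mul_sum]
  calc ∑ m ∈ range (n + 1 - l), w l * cycleWeight w (l + m - l) * x ^ (l + m - 1)
      = ∑ m ∈ range (n + 1 - l), w l * x ^ (l - 1) * (cycleWeight w m * x ^ m) := by
        refine sum_congr rfl fun m _ ↦ ?_
        rw [Nat.add_sub_cancel_left, Nat.sub_add_comm (mem_Icc.1 hl).1, pow_add]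
        ring
    _ ≤ ∑ m ∈ range (n + 1), w l * x ^ (l - 1) * (cycleWeight w m * x ^ m) := by
        refine sum_le_sum_of_subset_of_nonneg (range_mono (n.succ.sub_le l)) fun m _ _ ↦ ?_
        have hwl := hw l
        have hwm := cycleWeight_nonneg hw m
        positivity

lemma sum_cycleWeight_le_exp (hw : ∀ l, 0 ≤ w l) (n : ℕ) :
    ∑ j ∈ range (n + 1), cycleWeight w j ≤ Real.exp (∑ l ∈ Icc 1 n, w l / l) := by
  have hf (x : ℝ) : HasDerivAt (fun x ↦ ∑ j ∈ range (n + 1), cycleWeight w j * x ^ j)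
      (∑ j ∈ range (n + 1), j * cycleWeight w j * x ^ (j - 1)) x :=
    HasDerivAt.fun_sum fun j _ ↦ by
      simpa only [mul_assoc, mul_left_comm] using (hasDerivAt_pow j x).const_mul (cycleWeight w j)
  have hg (x : ℝ) : HasDerivAt (fun x ↦ ∑ l ∈ Icc 1 n, w l / l * x ^ l)
      (∑ l ∈ Icc 1 n, w l * x ^ (l - 1)) x := by
    refine HasDerivAt.fun_sum fun l hl ↦ ?_
    have hl0 : (l : ℝ) ≠ 0 := Nat.cast_ne_zero.2 (by grind)
    refine ((hasDerivAt_pow l x).const_mul (w l / l)).congr_deriv ?_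
    rw [← mul_assoc, div_mul_cancel₀ _ hl0]
  have h := le_mul_exp_sub_of_deriv_le zero_le_one (fun x _ ↦ hf x) (fun x _ ↦ hg x)
    fun x hx ↦ sum_mul_cycleWeight_mul_pow_le hw n hx.1.le
  have hf0 : ∑ j ∈ range (n + 1), cycleWeight w j * (0 : ℝ) ^ j = 1 := by
    simp [sum_range_succ', cycleWeight_zero]
  have hg0 : ∑ l ∈ Icc 1 n, w l / l * (0 : ℝ) ^ l = 0 :=
    sum_eq_zero fun l hl ↦ by rw [zero_pow (by grind), mul_zero]
  simpa only [hf0, hg0, one_pow, mul_one, one_mul, sub_zero] using h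

lemma cycleWeight_le (hw : ∀ l, 0 ≤ w l) {B : ℝ} (hB : ∀ l, w l ≤ B) (hn : 1 ≤ n) :
    cycleWeight w n ≤ B / n * Real.exp (∑ l ∈ Icc 1 n, w l / l) := by
  have hB0 : 0 ≤ B := (hw 0).trans (hB 0)
  rw [div_mul_eq_mul_div, le_div_iff₀ (by positivity), mul_comm, mul_cycleWeight]
  calc ∑ l ∈ Icc 1 n, w l * cycleWeight w (n - l)
      ≤ ∑ l ∈ Icc 1 n, B * cycleWeight w (n - l) :=
        sum_le_sum fun l _ ↦ mul_le_mul_of_nonneg_right (hB l) (cycleWeight_nonneg hw _)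
    _ ≤ ∑ l ∈ range (n + 1), B * cycleWeight w (n - l) :=
        sum_le_sum_of_subset_of_nonneg (fun l ↦ by simp only [mem_range, mem_Icc]; lia)
          fun l _ _ ↦ mul_nonneg hB0 (cycleWeight_nonneg hw _)
    _ = B * ∑ j ∈ range (n + 1), cycleWeight w j := by
        rw [← mul_sum, ← sum_range_reflect (cycleWeight w), Nat.add_sub_cancel]
    _ ≤ B * Real.exp (∑ l ∈ Icc 1 n, w l / l) :=
        mul_le_mul_of_nonneg_left (sum_cycleWeight_le_exp hw n) hB0

lemma cycleWeight_const_le {t : ℝ} (ht : 0 ≤ t) (hn : 1 ≤ n) :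
    cycleWeight (fun _ ↦ t) n ≤ t * Real.exp t * (n : ℝ) ^ (t - 1) := by
  have hn0 : (0 : ℝ) < n := by positivity
  have hsum : ∑ l ∈ Icc 1 n, t / (l : ℝ) ≤ t * (1 + Real.log n) := by
    simpa only [mul_sum, mul_one_div] using mul_le_mul_of_nonneg_left (sum_one_div_le n) ht
  calc cycleWeight (fun _ ↦ t) n ≤ t / n * Real.exp (∑ l ∈ Icc 1 n, t / (l : ℝ)) :=
        cycleWeight_le (fun _ ↦ ht) (fun _ ↦ le_rfl) hn
    _ ≤ t / n * Real.exp (t + Real.log n * t) := by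
        gcongr
        linarith
    _ = t * Real.exp t * (n : ℝ) ^ (t - 1) := by
        rw [Real.exp_add, ← Real.rpow_def_of_pos hn0, Real.rpow_sub hn0, Real.rpow_one]
        ring

lemma cycleWeight_notMem_le (A : Set ℕ) [DecidablePred (· ∈ A)] (hn : 1 ≤ n) :
    cycleWeight (fun l ↦ if l ∈ A then 0 else 1) n ≤
      Real.exp (1 - ∑ l ∈ Icc 1 n with l ∈ A, (1 : ℝ) / l) := by
  have hn0 : (0 : ℝ) < n := by positivity
  have hsum : ∑ l ∈ Icc 1 n, (if l ∈ A then (0 : ℝ) else 1) / l =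
      ∑ l ∈ Icc 1 n, (1 : ℝ) / l - ∑ l ∈ Icc 1 n with l ∈ A, (1 : ℝ) / l := by
    rw [sum_filter, ← sum_sub_distrib]
    exact sum_congr rfl fun l _ ↦ by split_ifs <;> simp
  have hweight := cycleWeight_le (w := fun l ↦ if l ∈ A then 0 else 1) (B := 1)
    (fun l ↦ by positivity) (fun l ↦ by split_ifs <;> norm_num) hn
  calc cycleWeight (fun l ↦ if l ∈ A then 0 else 1) n
      ≤ 1 / n * Real.exp (Real.log n + (1 - ∑ l ∈ Icc 1 n with l ∈ A, (1 : ℝ) / l)) := by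
        refine hweight.trans ?_
        gcongr
        linarith [sum_one_div_le n]
    _ = Real.exp (1 - ∑ l ∈ Icc 1 n with l ∈ A, (1 : ℝ) / l) := by
        rw [Real.exp_add, Real.exp_log hn0, ← mul_assoc, one_div_mul_cancel hn0.ne', one_mul]

lemma cycleWeight_dvd_le {d : ℕ} (hd : 1 ≤ d) (hn : 1 ≤ n) :
    cycleWeight (fun l ↦ if d ∣ l then 1 else 0) n ≤ 1 / n * Real.exp ((1 + Real.log n) / d) := by
  refine (cycleWeight_le (w := fun l ↦ if d ∣ l then 1 else 0) (B := 1) (fun l ↦ by positivity)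
    (fun l ↦ by split_ifs <;> norm_num) hn).trans ?_
  gcongr
  simpa only [ite_div, zero_div, sum_filter] using sum_one_div_filter_dvd_le hd n

end WeightBounds

section Probability

variable {α : Type*} [Fintype α] [DecidableEq α] {P Q : Perm α → Prop}

open Classical in
/-- The probability that a uniformly random permutation of `α` satisfies `P`. -/
noncomputable def permProb (P : Perm α → Prop) : ℝ := 𝔼 σ, if P σ then 1 else 0

lemma natCard_subtype_eq_mul_permProb (P : Perm α → Prop) :
    (Nat.card {σ // P σ} : ℝ) = (Fintype.card α).factorial * permProb P := by
  classical
  rw [permProb, ← Fintype.card_perm, Fintype.card_mul_expect, sum_boole, Nat.card_eq_fintype_card,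
    Fintype.card_subtype]

/-- Markov's inequality. -/
lemma mul_permProb_le_expect {Φ : Perm α → ℝ} {δ : ℝ} (h0 : ∀ σ, 0 ≤ Φ σ)
    (h1 : ∀ σ, P σ → δ ≤ Φ σ) : δ * permProb P ≤ 𝔼 σ, Φ σ := by
  classical
  rw [permProb, mul_expect]
  refine expect_le_expect fun σ _ ↦ ?_
  split_ifs with hσ
  · exact (mul_one δ).trans_le (h1 σ hσ)
  · exact (mul_zero δ).trans_le (h0 σ)

lemma permProb_le_expect {Φ : Perm α → ℝ} (h0 : ∀ σ, 0 ≤ Φ σ) (h1 : ∀ σ, P σ → 1 ≤ Φ σ) :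
    permProb P ≤ 𝔼 σ, Φ σ :=
  (one_mul _).symm.trans_le (mul_permProb_le_expect h0 h1)

lemma permProb_mono (h : ∀ σ, P σ → Q σ) : permProb P ≤ permProb Q :=
  permProb_le_expect (fun σ ↦ by positivity) fun σ hσ ↦ by rw [if_pos (h σ hσ)]

lemma permProb_or_le {a b : ℝ} (hP : permProb P ≤ a) (hQ : permProb Q ≤ b) :
    permProb (fun σ ↦ P σ ∨ Q σ) ≤ a + b := by
  classical
  refine le_trans ?_ (add_le_add hP hQ)
  refine (permProb_le_expect (fun σ ↦ add_nonneg ?_ ?_) fun σ hσ ↦ ?_).trans_eq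
    (expect_add_distrib univ (fun σ ↦ if P σ then 1 else 0) fun σ ↦ if Q σ then 1 else 0)
  · positivity
  · positivity
  · split_ifs <;> simp_all

lemma permProb_exists_le {ι : Type*} (s : Finset ι) (P : ι → Perm α → Prop) :
    permProb (fun σ ↦ ∃ i ∈ s, P i σ) ≤ ∑ i ∈ s, permProb (P i) := by
  classical
  refine (permProb_le_expect (fun σ ↦ sum_nonneg fun i _ ↦ ?_) fun σ ⟨i, hi, hσ⟩ ↦ ?_).trans_eq
    (expect_sum_comm univ s fun σ i ↦ if P i σ then 1 else 0)
  · positivity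
  · calc (1 : ℝ) = if P i σ then 1 else 0 := (if_pos hσ).symm
      _ ≤ ∑ i ∈ s, if P i σ then 1 else 0 :=
        single_le_sum (f := fun i ↦ if P i σ then (1 : ℝ) else 0) (fun i _ ↦ by positivity) hi

lemma permProb_exists_le_card_mul {ι : Type*} {s : Finset ι} {P : ι → Perm α → Prop} {b : ℝ}
    (h : ∀ i ∈ s, permProb (P i) ≤ b) : permProb (fun σ ↦ ∃ i ∈ s, P i σ) ≤ #s * b :=
  (permProb_exists_le s P).trans ((sum_le_card_nsmul _ _ _ h).trans_eq (nsmul_eq_mul _ _))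

end Probability

section CycleStatistics

variable {n k : ℕ}

lemma prod_map_cycleLengths_const (σ : Perm (Fin n)) (t : ℝ) :
    ((cycleLengths σ).map fun _ ↦ t).prod = t ^ (#(cycles σ) : ℝ) := by
  rw [cycleLengths, Multiset.map_map, Real.rpow_natCast]
  exact prod_const t

lemma permProb_le_card_cycles_le {t : ℝ} (c : ℝ) (ht : 1 ≤ t) (hn : 1 ≤ n) :
    permProb (fun σ : Perm (Fin n) ↦ c ≤ #(cycles σ)) ≤
      t * Real.exp t * (n : ℝ) ^ (t - 1) * t ^ (-c) := by
  have ht0 : 0 < t := by linarith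
  have h : t ^ c * permProb (fun σ : Perm (Fin n) ↦ c ≤ #(cycles σ)) ≤
      cycleWeight (fun _ ↦ t) n :=
    mul_permProb_le_expect (fun σ ↦ Multiset.prod_map_nonneg fun _ _ ↦ ht0.le) fun σ hσ ↦ by
      rw [prod_map_cycleLengths_const]
      exact Real.rpow_le_rpow_of_exponent_le ht hσ
  rw [Real.rpow_neg ht0.le, ← div_eq_mul_inv, le_div_iff₀' (by positivity)]
  exact h.trans (cycleWeight_const_le ht0.le hn)

lemma permProb_card_notMem_le (A : Set ℕ) [DecidablePred (· ∈ A)] (hn : 1 ≤ n) :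
    permProb (fun σ : Perm (Fin n) ↦ ∀ X ∈ cycles σ, #X ∉ A) ≤
      Real.exp (1 - ∑ l ∈ Icc 1 n with l ∈ A, (1 : ℝ) / l) := by
  refine le_trans ?_ (cycleWeight_notMem_le A hn)
  refine permProb_le_expect
    (fun σ ↦ Multiset.prod_map_nonneg fun l _ ↦ by positivity) fun σ hσ ↦ ?_
  rw [cycleLengths, Multiset.map_map]
  exact (prod_eq_one fun X hX ↦ if_neg (hσ X hX)).ge

lemma mul_permProb_exists_isInvariant_le {w v : ℕ → ℝ} (hw : ∀ l, 0 ≤ w l) (hv : ∀ l, 0 ≤ v l)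
    (δ : ℝ) (hk : k ≤ n) :
    δ * permProb (fun σ : Perm (Fin n) ↦ ∃ X, #X = k ∧ IsInvariant σ X ∧
      δ ≤ ((cycleLengthsIn σ X).map w).prod * ((cycleLengthsIn σ Xᶜ).map v).prod) ≤
      cycleWeight w k * cycleWeight v (n - k) := by
  have hterm (σ : Perm (Fin n)) (X : Finset (Fin n)) :
      0 ≤ ((cycleLengthsIn σ X).map w).prod * ((cycleLengthsIn σ Xᶜ).map v).prod :=
    mul_nonneg (Multiset.prod_map_nonneg fun l _ ↦ hw l) (Multiset.prod_map_nonneg fun l _ ↦ hv l)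
  refine (mul_permProb_le_expect (fun σ ↦ sum_nonneg fun X _ ↦ hterm σ X)
    fun σ ⟨X, hX, hinv, hδ⟩ ↦ ?_).trans_eq
    (expect_sum_isInvariant (fun m ↦ (m.map w).prod) (fun m ↦ (m.map v).prod)
      (Fintype.card_fin n) hk)
  exact hδ.trans (single_le_sum
    (f := fun X ↦ ((cycleLengthsIn σ X).map w).prod * ((cycleLengthsIn σ Xᶜ).map v).prod)
    (fun X _ ↦ hterm σ X) (mem_filter.2 ⟨mem_powersetCard_univ.2 hX, hinv⟩))

lemma permProb_card_cycles_le_and_isInvariant_le {u : ℝ} (c : ℝ) (hu : 0 < u) (hu1 : u ≤ 1)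
    (hk : 1 ≤ k) (hkn : k < n) :
    permProb (fun σ : Perm (Fin n) ↦ #(cycles σ) ≤ c ∧ ∃ X, #X = k ∧ IsInvariant σ X) ≤
      (u * Real.exp u * (k : ℝ) ^ (u - 1)) *
        (u * Real.exp u * ((n - k : ℕ) : ℝ) ^ (u - 1)) * u ^ (-c) := by
  rw [Real.rpow_neg hu.le, ← div_eq_mul_inv, le_div_iff₀' (by positivity)]
  calc u ^ c * permProb (fun σ : Perm (Fin n) ↦ #(cycles σ) ≤ c ∧ ∃ X, #X = k ∧ IsInvariant σ X)
      ≤ u ^ c * permProb (fun σ : Perm (Fin n) ↦ ∃ X, #X = k ∧ IsInvariant σ X ∧ u ^ c ≤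
          ((cycleLengthsIn σ X).map fun _ ↦ u).prod *
            ((cycleLengthsIn σ Xᶜ).map fun _ ↦ u).prod) := by
        refine mul_le_mul_of_nonneg_left (permProb_mono fun σ ⟨hc, X, hX, hinv⟩ ↦
          ⟨X, hX, hinv, ?_⟩) (by positivity)
        rw [← Multiset.prod_add, ← Multiset.map_add, hinv.cycleLengthsIn_add_compl,
          prod_map_cycleLengths_const]
        exact Real.rpow_le_rpow_of_exponent_ge hu hu1 hc
    _ ≤ cycleWeight (fun _ ↦ u) k * cycleWeight (fun _ ↦ u) (n - k) :=
        mul_permProb_exists_isInvariant_le (fun _ ↦ hu.le) (fun _ ↦ hu.le) _ hkn.le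
    _ ≤ _ :=
        mul_le_mul (cycleWeight_const_le hu.le hk) (cycleWeight_const_le hu.le (by lia))
          (cycleWeight_nonneg (fun _ ↦ hu.le) _) (by positivity)

lemma permProb_isInvariant_and_dvd_le {l : ℕ} (hl : 1 ≤ l) (hk : 1 ≤ k) (hkn : k ≤ n) :
    permProb (fun σ : Perm (Fin n) ↦ ∃ X, #X = k ∧ IsInvariant σ X ∧
      ∀ Y ∈ cycles σ, Y ⊆ X → l ∣ #Y) ≤ 1 / k * Real.exp ((1 + Real.log k) / l) := by
  have h := mul_permProb_exists_isInvariant_le (w := fun j ↦ if l ∣ j then 1 else 0)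
    (v := fun _ ↦ 1) (fun _ ↦ by positivity) (fun _ ↦ zero_le_one) 1 hkn
  have hone : cycleWeight (fun _ ↦ 1) (n - k) = 1 := by
    simp only [cycleWeight, Multiset.map_const', Multiset.prod_replicate, one_pow, cycleAvg_const]
  rw [one_mul, hone, mul_one] at h
  refine (permProb_mono fun σ ⟨X, hX, hinv, hdvd⟩ ↦ ⟨X, hX, hinv, ?_⟩).trans
    (h.trans (cycleWeight_dvd_le hl hk))
  rw [Multiset.map_const', Multiset.prod_replicate, one_pow, mul_one, cycleLengthsIn,
    Multiset.map_map]
  exact (prod_eq_one fun Y hY ↦ if_pos (hdvd Y (mem_filter.1 hY).1 (mem_filter.1 hY).2)).ge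

lemma expect_sum_pairs (f : ℕ → ℕ → ℝ) (n : ℕ) :
    𝔼 σ : Perm (Fin n), ∑ X ∈ cycles σ, ((cycleLengthsIn σ Xᶜ).map (f #X)).sum =
      ∑ a ∈ Icc 1 n, 1 / (a : ℝ) * ∑ b ∈ Icc 1 (n - a), f a b / b := by
  rw [expect_sum_cycles (fun k m ↦ (m.map (f k)).sum) (Fintype.card_fin n)]
  simp only [cycleAvg_sum]

lemma sum_Icc_one_div_sq_le {Q : ℕ} (hQ : 1 ≤ Q) (n : ℕ) :
    ∑ q ∈ Icc Q n, (1 : ℝ) / (q : ℝ) ^ 2 ≤ 2 / Q := by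
  have h := sum_Ioo_inv_sq_le (α := ℝ) (Q - 1) (n + 1)
  have hIoo : Ioo (Q - 1) (n + 1) = Icc Q n := by
    ext a
    simp only [mem_Icc, mem_Ioo]
    lia
  rw [hIoo, Nat.cast_pred hQ, sub_add_cancel] at h
  simpa only [one_div] using h

open Classical in
lemma sum_pairs_common_divisor_le {Q : ℕ} (hQ : 1 ≤ Q) (n : ℕ) :
    ∑ a ∈ Icc 1 n, ∑ b ∈ Icc 1 n,
      (if ∃ q, Q ≤ q ∧ q ∣ a ∧ q ∣ b then 1 / (a : ℝ) * (1 / (b : ℝ)) else 0) ≤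
      2 / Q * (1 + Real.log n) ^ 2 := by
  calc _ ≤ ∑ a ∈ Icc 1 n, ∑ b ∈ Icc 1 n, ∑ q ∈ Icc Q n,
        (if q ∣ a then 1 / (a : ℝ) else 0) * (if q ∣ b then 1 / (b : ℝ) else 0) := by
        refine sum_le_sum fun a ha ↦ sum_le_sum fun b _ ↦ ?_
        split_ifs with h
        · obtain ⟨q, hQq, hqa, hqb⟩ := h
          have hq : q ∈ Icc Q n :=
            mem_Icc.2 ⟨hQq, (Nat.le_of_dvd (mem_Icc.1 ha).1 hqa).trans (mem_Icc.1 ha).2⟩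
          refine (single_le_sum (f := fun q ↦ (if q ∣ a then 1 / (a : ℝ) else 0) *
            (if q ∣ b then 1 / (b : ℝ) else 0)) (fun q _ ↦ by positivity) hq).trans' ?_
          rw [if_pos hqa, if_pos hqb]
        · exact sum_nonneg fun q _ ↦ by positivity
    _ = ∑ q ∈ Icc Q n, (∑ a ∈ Icc 1 n with q ∣ a, 1 / (a : ℝ)) ^ 2 := by
        simp only [sum_comm (s := Icc 1 n) (t := Icc Q n), sum_filter, sq, sum_mul_sum]
    _ ≤ ∑ q ∈ Icc Q n, 1 / (q : ℝ) ^ 2 * (1 + Real.log n) ^ 2 := by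
        refine sum_le_sum fun q hq ↦ ?_
        rw [one_div_mul_eq_div, ← div_pow]
        exact pow_le_pow_left₀ (sum_nonneg fun _ _ ↦ by positivity)
          (sum_one_div_filter_dvd_le (hQ.trans (mem_Icc.1 hq).1) n) 2
    _ ≤ 2 / Q * (1 + Real.log n) ^ 2 := by
        rw [← sum_mul]
        gcongr
        exact sum_Icc_one_div_sq_le hQ n

lemma permProb_exists_pair_le (P : ℕ → ℕ → Prop) [DecidableRel P] (n : ℕ) :
    permProb (fun σ : Perm (Fin n) ↦ ∃ X ∈ cycles σ, ∃ Y ∈ cycles σ, X ≠ Y ∧ P #X #Y) ≤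
      ∑ a ∈ Icc 1 n, 1 / (a : ℝ) * ∑ b ∈ Icc 1 (n - a), (if P a b then 1 else 0) / (b : ℝ) := by
  let f (a b : ℕ) : ℝ := if P a b then 1 else 0
  have hf (a b : ℕ) : 0 ≤ f a b := by positivity
  have hsum (σ : Perm (Fin n)) (X : Finset (Fin n)) : ((cycleLengthsIn σ Xᶜ).map (f #X)).sum =
      ∑ Y ∈ cycles σ with Y ⊆ Xᶜ, f #X #Y := by
    rw [cycleLengthsIn, Multiset.map_map]
    rfl
  have hsum_nonneg (σ : Perm (Fin n)) (X : Finset (Fin n)) :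
      0 ≤ ((cycleLengthsIn σ Xᶜ).map (f #X)).sum :=
    (hsum σ X).symm ▸ sum_nonneg fun Y _ ↦ hf _ _
  refine (permProb_le_expect (fun σ ↦ sum_nonneg fun X _ ↦ hsum_nonneg σ X) ?_).trans_eq
    (expect_sum_pairs f n)
  rintro σ ⟨X, hX, Y, hY, hne, hXY⟩
  have hYX : Y ⊆ Xᶜ :=
    subset_compl_iff_disjoint_right.2 ((cyclePartition σ).disjoint hY hX hne.symm)
  calc (1 : ℝ) = f #X #Y := (if_pos hXY).symm
    _ ≤ ((cycleLengthsIn σ Xᶜ).map (f #X)).sum := by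
      rw [hsum]
      exact single_le_sum (f := fun Y ↦ f #X #Y) (fun _ _ ↦ hf _ _) (mem_filter.2 ⟨hY, hYX⟩)
    _ ≤ ∑ X ∈ cycles σ, ((cycleLengthsIn σ Xᶜ).map (f #X)).sum :=
      single_le_sum (f := fun X ↦ ((cycleLengthsIn σ Xᶜ).map (f #X)).sum)
        (fun X _ ↦ hsum_nonneg σ X) hX

lemma permProb_common_divisor_le {Q : ℕ} (hQ : 1 ≤ Q) (n : ℕ) :
    permProb (fun σ : Perm (Fin n) ↦ ∃ X ∈ cycles σ, ∃ Y ∈ cycles σ, X ≠ Y ∧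
      ∃ q, Q ≤ q ∧ q ∣ #X ∧ q ∣ #Y) ≤ 2 / Q * (1 + Real.log n) ^ 2 := by
  classical
  let P (a b : ℕ) : Prop := ∃ q, Q ≤ q ∧ q ∣ a ∧ q ∣ b
  refine (permProb_exists_pair_le P n).trans <|
    (sum_le_sum fun a _ ↦ ?_).trans (sum_pairs_common_divisor_le hQ n)
  calc 1 / (a : ℝ) * ∑ b ∈ Icc 1 (n - a), (if P a b then 1 else 0) / (b : ℝ)
      ≤ 1 / (a : ℝ) * ∑ b ∈ Icc 1 n, (if P a b then 1 else 0) / (b : ℝ) :=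
        mul_le_mul_of_nonneg_left (sum_le_sum_of_subset_of_nonneg
          (Icc_subset_Icc_right (n.sub_le a)) fun b _ _ ↦ by positivity) (by positivity)
    _ = _ := by simp only [P, ite_div, zero_div, mul_sum, mul_ite, mul_zero]

end CycleStatistics

section InvariantRelations

variable {G α : Type*} [Group G] [MulAction G α] {R : α → α → Prop} {a b x y z : α}

/-- The relation `R` is preserved by the action of `G`; an orbital graph of `G` is one whose
adjacency relation is of this kind. -/
def IsInvariantRel (G : Type*) {α : Type*} [SMul G α] (R : α → α → Prop) : Prop :=
  ∀ (g : G) (x y : α), R x y → R (g • x) (g • y)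

lemma IsInvariantRel.smul_iff (hR : IsInvariantRel G R) (g : G) : R (g • x) (g • y) ↔ R x y :=
  ⟨fun h ↦ by simpa only [inv_smul_smul] using hR g⁻¹ _ _ h, hR g x y⟩

lemma IsInvariantRel.symmGen (hR : IsInvariantRel G R) :
    IsInvariantRel G (Relation.SymmGen R) :=
  fun g x y h ↦ h.imp (hR g x y) (hR g y x)

lemma IsInvariantRel.reflTransGen (hR : IsInvariantRel G R) :
    IsInvariantRel G (Relation.ReflTransGen R) :=
  fun g _ _ h ↦ Relation.ReflTransGen.lift (g • ·) (hR g) _ _ h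

/-- D. G. Higman's criterion: every symmetric nontrivial orbital graph of a primitive group is
connected, since its connected components are blocks. -/
lemma IsInvariantRel.reflTransGen_of_isPreprimitive [MulAction.IsPreprimitive G α] [Std.Symm R]
    (hR : IsInvariantRel G R) (hab : a ≠ b) (hRab : R a b) (x y : α) :
    Relation.ReflTransGen R x y := by
  let B : Set α := {y | Relation.ReflTransGen R a y}
  have hsmul (g : G) {x y : α} (hx : x ∈ B) (hgx : g • x ∈ B) (hy : y ∈ B) : g • y ∈ B :=
    Relation.ReflTransGen.trans hgx
      (hR.reflTransGen g _ _ ((symm (r := Relation.ReflTransGen R) hx).trans hy))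
  have hB : MulAction.IsBlock G B := by
    refine MulAction.isBlock_iff_smul_eq_of_mem.2 fun g x hx hgx ↦ Set.ext fun y ↦ ?_
    rw [Set.mem_smul_set_iff_inv_smul_mem]
    refine ⟨fun hy ↦ ?_, fun hy ↦ hsmul g⁻¹ hgx (by rwa [inv_smul_smul]) hy⟩
    simpa only [smul_inv_smul] using hsmul g hx hgx hy
  rcases MulAction.IsPreprimitive.isTrivialBlock_of_isBlock hB with h | h
  · exact absurd (h Relation.ReflTransGen.refl (Relation.ReflTransGen.single hRab)) hab
  · have hmem (x : α) : x ∈ B := h ▸ Set.mem_univ x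
    exact (symm (r := Relation.ReflTransGen R) (hmem x)).trans (hmem y)

lemma exists_rel_of_reflTransGen {u v : α} (h : Relation.ReflTransGen R u v) {s : Set α}
    (hu : u ∈ s) (hv : v ∉ s) : ∃ x ∈ s, ∃ y ∉ s, R x y := by
  induction h with
  | refl => exact absurd hu hv
  | @tail w v _ hwv ih =>
    by_cases hw : w ∈ s
    · exact ⟨w, hw, v, hv, hwv⟩
    · exact ih hw

variable [Fintype α]

lemma IsInvariantRel.card_eq [MulAction.IsPretransitive G α] [DecidableRel R]
    (hR : IsInvariantRel G R) (x y : α) : #{z | R x z} = #{z | R y z} := by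
  obtain ⟨g, rfl⟩ := MulAction.exists_smul_eq G x y
  refine card_bijective (g • ·) (MulAction.bijective g) fun z ↦ ?_
  simp only [mem_filter, mem_univ, true_and, hR.smul_iff g]

lemma IsInvariantRel.card_flip_eq [MulAction.IsPretransitive G α] [DecidableRel R]
    (hR : IsInvariantRel G R) (x : α) : #{z | R z x} = #{z | R x z} := by
  have hflip : IsInvariantRel G fun y z ↦ R z y := fun g y z ↦ hR g z y
  refine Nat.eq_of_mul_eq_mul_left (Fintype.card_pos_iff.2 ⟨x⟩) ?_
  have hcount := sum_card_bipartiteAbove_eq_sum_card_bipartiteBelow (s := univ) (t := univ) R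
  simp only [bipartiteAbove, bipartiteBelow] at hcount
  rw [sum_const_nat fun y _ ↦ hR.card_eq y x, sum_const_nat fun y _ ↦ hflip.card_eq y x] at hcount
  exact hcount.symm

lemma IsInvariantRel.sum_card_common [MulAction.IsPretransitive G α] [DecidableRel R]
    (hR : IsInvariantRel G R) (z : α) : ∑ x, #{u | R z u ∧ R x u} = #{u | R z u} ^ 2 := by
  have hcount := sum_card_bipartiteAbove_eq_sum_card_bipartiteBelow
    (s := univ) (t := ({u | R z u} : Finset α)) R
  simp only [bipartiteAbove, bipartiteBelow, filter_filter] at hcount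
  rwa [sum_const_nat fun u _ ↦ (hR.card_flip_eq u).trans (hR.card_eq u z), ← sq] at hcount

open Classical in
/-- The points whose stabilizer does not carry `x` to `y`. -/
noncomputable def separators (G : Type*) {α : Type*} [Group G] [MulAction G α] [Fintype α]
    (x y : α) : Finset α :=
  {z | ¬ ∃ g : G, g • z = z ∧ g • x = y}

lemma mem_separators : z ∈ separators G x y ↔ ¬ ∃ g : G, g • z = z ∧ g • x = y := by
  simp only [separators, mem_filter, mem_univ, true_and]

lemma separators_self (x : α) : separators G x x = ∅ :=
  eq_empty_of_forall_notMem fun _ hz ↦ mem_separators.1 hz ⟨(1 : G), one_smul G _, one_smul G x⟩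

lemma separators_comm (x y : α) : separators G x y = separators G y x := by
  ext z
  rw [mem_separators, mem_separators, not_iff_not]
  constructor <;>
  · rintro ⟨g, hz, rfl⟩
    exact ⟨g⁻¹, by rw [inv_smul_eq_iff, hz], inv_smul_smul g _⟩

lemma card_separators_le_add (x y z : α) :
    #(separators G x z) ≤ #(separators G x y) + #(separators G y z) := by
  classical
  refine (card_le_card fun w hw ↦ ?_).trans (card_union_le _ _)
  rw [mem_union, mem_separators, mem_separators]
  by_contra! h
  obtain ⟨⟨g, hgw, hgx⟩, k, hkw, hky⟩ := h
  exact mem_separators.1 hw ⟨k * g, by rw [mul_smul, hgw, hkw], by rw [mul_smul, hgx, hky]⟩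

lemma card_separators_smul (g : G) (x y : α) :
    #(separators G (g • x) (g • y)) = #(separators G x y) := by
  refine (card_bijective (g • ·) (MulAction.bijective g) fun z ↦ ?_).symm
  rw [mem_separators, mem_separators, not_iff_not]
  constructor
  · rintro ⟨k, hz, rfl⟩
    exact ⟨g * k * g⁻¹, by simp only [mul_smul, inv_smul_smul, hz],
      by simp only [mul_smul, inv_smul_smul]⟩
  · rintro ⟨k, hz, hx⟩
    exact ⟨g⁻¹ * k * g, by rw [mul_smul, mul_smul, hz, inv_smul_smul],
      by rw [mul_smul, mul_smul, hx, inv_smul_smul]⟩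

lemma IsInvariantRel.mem_separators (hR : IsInvariantRel G R) (hx : R x z) (hy : ¬ R y z) :
    z ∈ separators G x y :=
  InvariableGeneration.mem_separators.2 fun ⟨g, hz, hxy⟩ ↦ hy (hxy ▸ hz ▸ hR g x z hx)

/-- For each point `z`, the orbit of `x` under the stabilizer of `z` is not everything, so an edge
of the connected graph `R` leaves it; hence `z` separates `x` from one of its neighbours. -/
lemma IsInvariantRel.card_le_mul [MulAction.IsPreprimitive G α] [DecidableRel R] [Std.Symm R]
    (hR : IsInvariantRel G R) (hab : a ≠ b) (hRab : R a b) {d : ℕ}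
    (hd : ∀ x y, R x y → #(separators G x y) ≤ d) (x : α) :
    Fintype.card α ≤ #{y | R x y} * d := by
  classical
  have hcover : (univ : Finset α) ⊆ ({y | R x y} : Finset α).biUnion (separators G x) := by
    intro z _
    let s : Set α := {w | ∃ g : G, g • z = z ∧ g • x = w}
    have hs : ∃ v, v ∉ s := by
      by_contra! hs
      obtain ⟨g, hgz, hgx⟩ := hs z
      obtain rfl : x = z := MulAction.injective g (hgx.trans hgz.symm)
      obtain ⟨k, hkx, hka⟩ := hs a
      obtain ⟨l, hlx, hlb⟩ := hs b
      exact hab ((hka.symm.trans hkx).trans (hlx.symm.trans hlb))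
    obtain ⟨v, hv⟩ := hs
    obtain ⟨p, ⟨g, hgz, rfl⟩, q, hq, hpq⟩ := exists_rel_of_reflTransGen
      (hR.reflTransGen_of_isPreprimitive hab hRab x v)
      (show x ∈ s from ⟨1, one_smul G z, one_smul G x⟩) hv
    refine mem_biUnion.2 ⟨g⁻¹ • q, ?_, InvariableGeneration.mem_separators.2 ?_⟩
    · rw [mem_filter, ← hR.smul_iff g, smul_inv_smul]
      exact ⟨mem_univ _, hpq⟩
    · rintro ⟨k, hkz, hkx⟩
      exact hq ⟨g * k, by rw [mul_smul, hkz, hgz], by rw [mul_smul, hkx, smul_inv_smul]⟩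
  exact (card_le_card hcover).trans
    (card_biUnion_le_card_mul _ _ _ fun y hy ↦ hd x y (mem_filter.1 hy).2)

end InvariantRelations

section Orbitals

variable {G α : Type*} [Group G] [MulAction G α] {R : α → α → Prop} {a b z p q : α} {d M : ℕ}

/-- The orbital of the pair `(a, b)`: its orbit under the diagonal action of `G`. -/
def orbital (G : Type*) {α : Type*} [Group G] [MulAction G α] (a b x y : α) : Prop :=
  ∃ g : G, g • a = x ∧ g • b = y

lemma orbital_self : orbital G a b a b := ⟨1, one_smul G a, one_smul G b⟩

lemma isInvariantRel_orbital : IsInvariantRel G (orbital G a b) := by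
  rintro g _ _ ⟨k, rfl, rfl⟩
  exact ⟨g * k, mul_smul g k a, mul_smul g k b⟩

variable [Fintype α]

lemma card_separators_of_orbital {x y : α} (h : orbital G a b x y) :
    #(separators G x y) = #(separators G a b) := by
  obtain ⟨g, rfl, rfl⟩ := h
  exact card_separators_smul g a b

open Classical in
lemma exists_two_mul_card_orbital_le (hp : p ≠ z) (hq : q ≠ z) (hz : z ∈ separators G p q) :
    ∃ w ≠ z, 2 * #{u | orbital G z w z u} ≤ Fintype.card α := by
  have hdisj : Disjoint ({u | orbital G z p z u} : Finset α)
      ({u | orbital G z q z u} : Finset α) := by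
    refine disjoint_filter.2 fun u _ ⟨g, hgz, hgp⟩ ⟨k, hkz, hkq⟩ ↦ mem_separators.1 hz ?_
    exact ⟨k⁻¹ * g, by rw [mul_smul, hgz, inv_smul_eq_iff, hkz],
      by rw [mul_smul, hgp, inv_smul_eq_iff, hkq]⟩
  have hle := (card_union_of_disjoint hdisj).symm.trans_le (card_le_univ _)
  by_contra! hlarge
  have := hlarge p hp
  have := hlarge q hq
  lia

/-- Averaging `κ ≤ #(common neighbours of z and x) + M` over `x`, where `κ` is the valency, gives
`κ n ≤ κ ^ 2 + n M`. -/
lemma IsInvariantRel.card_le_two_mul [MulAction.IsPretransitive G α] [DecidableRel R]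
    (hR : IsInvariantRel G R) (hM : ∀ x y : α, #(separators G x y) ≤ M)
    (hz : 2 * #{u | R z u} ≤ Fintype.card α) : #{u | R z u} ≤ 2 * M := by
  classical
  have hcommon (x : α) : #{u | R z u} ≤ #{u | R z u ∧ R x u} + M := by
    rw [← card_filter_add_card_filter_not (s := {u | R z u}) (R x ·), filter_filter, filter_filter]
    refine Nat.add_le_add_left ((card_le_card fun u hu ↦ ?_).trans (hM z x)) _
    simp only [mem_filter, mem_univ, true_and] at hu
    exact hR.mem_separators hu.1 hu.2
  have haverage : Fintype.card α * #{u | R z u} ≤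
      #{u | R z u} ^ 2 + Fintype.card α * M := by
    have h := sum_le_sum fun x (_ : x ∈ univ) ↦ hcommon x
    rwa [sum_add_distrib, hR.sum_card_common, sum_const, sum_const, card_univ, smul_eq_mul,
      smul_eq_mul] at h
  refine Nat.le_of_mul_le_mul_left ?_ (Fintype.card_pos_iff.2 ⟨z⟩)
  nlinarith

lemma card_le_four_mul_sq [MulAction.IsPreprimitive G α]
    (hM : ∀ x y : α, #(separators G x y) ≤ M) (hp : p ≠ z) (hq : q ≠ z)
    (hz : z ∈ separators G p q) : Fintype.card α ≤ 4 * M ^ 2 := by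
  classical
  obtain ⟨w, hwz, hw⟩ := exists_two_mul_card_orbital_le hp hq hz
  have hR : IsInvariantRel G (orbital G z w) := isInvariantRel_orbital
  have hvalency : #{u | Relation.SymmGen (orbital G z w) z u} ≤ 2 * (2 * M) := by
    calc _ ≤ #{u | orbital G z w z u} + #{u | orbital G z w u z} := by
          rw [show ({u | Relation.SymmGen (orbital G z w) z u} : Finset α) =
            ({u | orbital G z w z u ∨ orbital G z w u z} : Finset α) from rfl, filter_or]
          exact card_union_le _ _
      _ = 2 * #{u | orbital G z w z u} := by rw [hR.card_flip_eq z, two_mul]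
      _ ≤ 2 * (2 * M) := Nat.mul_le_mul_left 2 (hR.card_le_two_mul hM hw)
  calc Fintype.card α ≤ #{u | Relation.SymmGen (orbital G z w) z u} * M :=
        hR.symmGen.card_le_mul hwz.symm (.of_rel orbital_self) (fun x y _ ↦ hM x y) z
    _ ≤ 2 * (2 * M) * M := Nat.mul_le_mul_right M hvalency
    _ = 4 * M ^ 2 := by ring

/-- If the valency exceeds `3 d`, then walking along an edge from a point at separator distance at
most `2 d` from `x` leads to a point that still has a common neighbour with `x`. -/
lemma IsInvariantRel.card_separators_le [MulAction.IsPreprimitive G α] [DecidableRel R]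
    [Std.Symm R] (hR : IsInvariantRel G R) (hab : a ≠ b) (hRab : R a b)
    (hd : ∀ x y, R x y → #(separators G x y) ≤ d) {x : α} (hx : 3 * d < #{y | R x y}) (y : α) :
    #(separators G x y) ≤ 2 * d := by
  induction hR.reflTransGen_of_isPreprimitive hab hRab x y with
  | refl => simp only [separators_self, card_empty, Nat.zero_le]
  | @tail y v _ hyv ih =>
    obtain ⟨u, hxu, hvu⟩ : ∃ u, R x u ∧ R v u := by
      by_contra! hcommon
      have hsub : ({u | R x u} : Finset α) ⊆ separators G x v := fun u hu ↦
        hR.mem_separators (mem_filter.1 hu).2 (hcommon u (mem_filter.1 hu).2)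
      have := card_le_card hsub
      have := card_separators_le_add (G := G) x y v
      have := hd y v hyv
      lia
    have := card_separators_le_add (G := G) x u v
    have := hd x u hxu
    have := hd u v (symm hvu)
    lia

/-- Babai's bound for primitive groups that are not doubly transitive. -/
lemma card_le_sixteen_mul_sq [MulAction.IsPreprimitive G α] (hab : a ≠ b)
    (hd : #(separators G a b) ≤ d) (hp : p ≠ z) (hq : q ≠ z) (hz : z ∈ separators G p q) :
    Fintype.card α ≤ 16 * d ^ 2 := by
  classical
  have hR : IsInvariantRel G (Relation.SymmGen (orbital G a b)) := isInvariantRel_orbital.symmGen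
  have hRab : Relation.SymmGen (orbital G a b) a b := .of_rel orbital_self
  have hRd (x y : α) : Relation.SymmGen (orbital G a b) x y → #(separators G x y) ≤ d := by
    rintro (h | h)
    · exact (card_separators_of_orbital h).trans_le hd
    · rw [separators_comm]
      exact (card_separators_of_orbital h).trans_le hd
  rcases le_or_gt #{u | Relation.SymmGen (orbital G a b) z u} (3 * d) with hle | hlt
  · have := (hR.card_le_mul hab hRab hRd z).trans (Nat.mul_le_mul_right d hle)
    nlinarith
  · have hM (x y : α) : #(separators G x y) ≤ 2 * d :=
      hR.card_separators_le hab hRab hRd (by rwa [hR.card_eq x z]) y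
    exact (card_le_four_mul_sq hM hp hq hz).trans_eq (by ring)

end Orbitals

section Transitivity

variable {K α : Type*} [Group K] [MulAction K α] {Ω S : Finset α}

lemma card_mul_card_filter_smul_eq_le [Fintype K] [DecidableEq α]
    (hΩ : ∀ b ∈ Ω, ∀ c ∈ Ω, ∃ k : K, k • b = c) {b c : α} (hc : c ∈ Ω) :
    #Ω * #{k : K | k • b = c} ≤ Fintype.card K := by
  have hconst (c') (hc' : c' ∈ Ω) : #{k : K | k • b = c'} = #{k : K | k • b = c} := by
    obtain ⟨k, rfl⟩ := hΩ c hc c' hc'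
    refine (card_bijective (k * ·) (Group.mulLeft_bijective k) fun l ↦ ?_).symm
    simp only [mem_filter, mem_univ, true_and, mul_smul, smul_left_cancel_iff]
  calc #Ω * #{k : K | k • b = c} = ∑ c' ∈ Ω, #{k : K | k • b = c'} := (sum_const_nat hconst).symm
    _ = #{k : K | k • b ∈ Ω} := sum_card_fiberwise_eq_card_filter univ Ω (· • b)
    _ ≤ Fintype.card K := card_le_univ _

lemma exists_forall_smul_notMem [Finite K] (hΩ : ∀ b ∈ Ω, ∀ c ∈ Ω, ∃ k : K, k • b = c)
    (hSΩ : S ⊆ Ω) (hS : #S ^ 2 < #Ω) : ∃ k : K, ∀ b ∈ S, k • b ∉ S := by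
  by_contra! hcon
  classical
  have := Fintype.ofFinite K
  have hcover : (univ : Finset K) ⊆ (S ×ˢ S).biUnion
      fun bc ↦ ({k | k • bc.1 = bc.2} : Finset K) := by
    intro k _
    obtain ⟨b, hb, hkb⟩ := hcon k
    exact mem_biUnion.2 ⟨(b, k • b), mem_product.2 ⟨hb, hkb⟩, mem_filter.2 ⟨mem_univ k, rfl⟩⟩
  have hle : #Ω * Fintype.card K ≤ #S ^ 2 * Fintype.card K := by
    calc #Ω * Fintype.card K ≤ #Ω * ∑ bc ∈ S ×ˢ S, #{k : K | k • bc.1 = bc.2} :=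
          Nat.mul_le_mul_left _ ((card_le_card hcover).trans card_biUnion_le)
      _ = ∑ bc ∈ S ×ˢ S, #Ω * #{k : K | k • bc.1 = bc.2} := mul_sum _ _ _
      _ ≤ ∑ _bc ∈ S ×ˢ S, Fintype.card K := sum_le_sum fun _ hbc ↦
          card_mul_card_filter_smul_eq_le hΩ (hSΩ (mem_product.1 hbc).2)
      _ = #S ^ 2 * Fintype.card K := by rw [sum_const, card_product, smul_eq_mul, sq]
  exact hS.not_ge (Nat.le_of_mul_le_mul_right hle Fintype.card_pos)

end Transitivity

section ThreeCycles

open scoped commutatorElement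

variable {α : Type*} [DecidableEq α]

lemma commutatorElement_eq_swap_mul_swap {g k : Perm α} {a : α} (hga : g a ≠ a)
    (h : ∀ x, g x ≠ x → k x ≠ x → x = a) :
    ⁅g, k⁆ = swap (g a) a * swap (g a) (k a) := by
  have hkg : k (g a) = g a := by
    by_contra hk
    exact hga (h (g a) (fun hg ↦ hga (g.injective hg)) hk)
  have hdisj : (swap (g a) a * g).Disjoint k := by
    intro x
    by_contra! ⟨hgx, hkx⟩
    rcases eq_or_ne x a with rfl | hxa
    · simp only [Perm.mul_apply, swap_apply_left, ne_eq, not_true_eq_false] at hgx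
    · refine hgx ?_
      have hx : g x = x := by_contra fun hx ↦ hxa (h x hx hkx)
      rw [Perm.mul_apply, hx, swap_apply_of_ne_of_ne (fun hx ↦ hkx (by rw [hx, hkg])) hxa]
  have hk : k * g⁻¹ * k⁻¹ = g⁻¹ * swap (g a) a * swap (g a) (k a) := by
    have hcomm : k * (swap (g a) a * g)⁻¹ = (swap (g a) a * g)⁻¹ * k :=
      hdisj.commute.symm.inv_right
    rw [mul_inv_rev, swap_inv] at hcomm
    calc k * g⁻¹ * k⁻¹ = k * (g⁻¹ * swap (g a) a) * swap (g a) a * k⁻¹ := by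
          rw [← mul_assoc k, mul_assoc (k * g⁻¹), swap_mul_self, mul_one]
      _ = g⁻¹ * swap (g a) a * swap (g a) (k a) := by
          rw [hcomm, mul_assoc, mul_assoc, ← mul_assoc k, ← swap_apply_apply, hkg]
  rw [commutatorElement_def, mul_assoc, mul_assoc, ← mul_assoc k, hk, mul_assoc,
    mul_inv_cancel_left]

lemma isThreeCycle_commutatorElement [Fintype α] {g k : Perm α} {a : α} (hga : g a ≠ a)
    (hka : k a ≠ a) (h : ∀ x, g x ≠ x → k x ≠ x → x = a) : ⁅g, k⁆.IsThreeCycle := by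
  rw [commutatorElement_eq_swap_mul_swap hga h]
  refine Perm.isThreeCycle_swap_mul_swap_same hga (fun hgk ↦ hga ?_) hka.symm
  exact h (g a) (fun hg ↦ hga (g.injective hg)) fun hk ↦ hka (k.injective (hgk ▸ hk))

variable [Fintype α] {G : Subgroup (Perm α)}

/-- Bochert's argument: some conjugate of `g` by an element of a point stabilizer meets the support
of `g` in that point only. -/
lemma exists_isThreeCycle_mem {g : Perm α} (hg : g ∈ G) (hg1 : g ≠ 1)
    (h2 : ∀ z p q : α, p ≠ z → q ≠ z → ∃ k : G, k • z = z ∧ k • p = q)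
    (hcard : #g.support ^ 2 < Fintype.card α) : ∃ t ∈ G, t.IsThreeCycle := by
  obtain ⟨a, ha⟩ := nonempty_iff_ne_empty.2 (mt Perm.support_eq_empty_iff.1 hg1)
  obtain ⟨⟨⟨k, hkG⟩, hka⟩, hk⟩ : ∃ k : MulAction.stabilizer G a,
      ∀ b ∈ g.support.erase a, k • b ∉ g.support.erase a := by
    refine exists_forall_smul_notMem (Ω := univ.erase a) (fun b hb c hc ↦ ?_)
      (erase_subset_erase a (subset_univ _)) ?_
    · obtain ⟨k, hka, hkb⟩ := h2 a b c (ne_of_mem_erase hb) (ne_of_mem_erase hc)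
      exact ⟨⟨k, hka⟩, hkb⟩
    · rw [card_erase_of_mem ha, card_erase_of_mem (mem_univ a), card_univ]
      obtain ⟨m, hm⟩ := Nat.exists_eq_succ_of_ne_zero (card_pos.2 ⟨a, ha⟩).ne'
      rw [hm, Nat.succ_eq_add_one] at hcard ⊢
      have : m ^ 2 + 1 ≤ (m + 1) ^ 2 := by nlinarith
      rw [Nat.add_sub_cancel]
      lia
  replace hka : k a = a := hka
  have hka' : k⁻¹ a = a := by rw [Perm.inv_eq_iff_eq, hka]
  have hconj : k * g * k⁻¹ ∈ G := G.mul_mem (G.mul_mem hkG hg) (G.inv_mem hkG)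
  refine ⟨⁅g, k * g * k⁻¹⁆, ?_, isThreeCycle_commutatorElement (a := a) ?_ ?_ ?_⟩
  · rw [commutatorElement_def]
    exact G.mul_mem (G.mul_mem (G.mul_mem hg hconj) (G.inv_mem hg)) (G.inv_mem hconj)
  · exact Perm.mem_support.1 ha
  · intro hfix
    rw [Perm.mul_apply, Perm.mul_apply, hka', ← Perm.eq_inv_iff_eq, hka'] at hfix
    exact Perm.mem_support.1 ha hfix
  · intro x hgx hcx
    by_contra hxa
    have hx : k⁻¹ x ∈ g.support.erase a := by
      refine mem_erase.2 ⟨fun h ↦ hxa ?_, Perm.mem_support.2 fun h ↦ hcx ?_⟩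
      · rw [← hka, ← h, Perm.inv_def, apply_symm_apply]
      · rw [Perm.mul_apply, Perm.mul_apply, h, Perm.inv_def, apply_symm_apply]
    exact hk _ hx (mem_erase.2 ⟨fun h ↦ hxa ((k.apply_symm_apply x).symm.trans h),
      Perm.mem_support.2 fun h ↦ hgx (k.apply_symm_apply x ▸ h)⟩)

theorem alternatingGroup_le_of_sixteen_mul_card_support_sq_lt [MulAction.IsPreprimitive G α]
    {g : Perm α} (hg : g ∈ G) (hg1 : g ≠ 1) (hcard : 16 * #g.support ^ 2 < Fintype.card α) :
    alternatingGroup α ≤ G := by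
  by_cases h2 : ∀ z p q : α, p ≠ z → q ≠ z → ∃ k : G, k • z = z ∧ k • p = q
  · obtain ⟨t, ht, ht3⟩ := exists_isThreeCycle_mem hg hg1 h2 (by lia)
    exact Perm.alternatingGroup_le_of_isPreprimitive_of_isThreeCycle_mem ‹_› ht3 ht
  · push Not at h2
    obtain ⟨z, p, q, hp, hq, hpq⟩ := h2
    obtain ⟨a, ha⟩ := nonempty_iff_ne_empty.2 (mt Perm.support_eq_empty_iff.1 hg1)
    have hd : separators G a (g a) ⊆ g.support := fun x hx ↦
      Perm.mem_support.2 fun hgx ↦ mem_separators.1 hx ⟨⟨g, hg⟩, hgx, rfl⟩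
    refine absurd hcard (card_le_sixteen_mul_sq (Perm.mem_support.1 ha).symm (card_le_card hd)
      hp hq (mem_separators.2 ?_)).not_gt
    push Not
    exact hpq

end ThreeCycles

section Blocks

lemma exists_dvd_of_isPrimePow_dvd_lcm {ι : Type*} {q : ℕ} (hq : IsPrimePow q) {s : Finset ι}
    {f : ι → ℕ} (h : q ∣ s.lcm f) : ∃ i ∈ s, q ∣ f i := by
  classical
  by_contra! hf
  induction s using Finset.induction_on with
  | empty => exact hq.ne_one (Nat.dvd_one.1 h)
  | insert i s _ ih =>
    rw [forall_mem_insert] at hf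
    have hi0 : f i ≠ 0 := fun h0 ↦ hf.1 (h0 ▸ dvd_zero q)
    have hs0 : s.lcm f ≠ 0 := by
      simp only [ne_eq, Finset.lcm_eq_zero_iff, not_exists, not_and]
      exact fun j hj h0 ↦ hf.2 j hj (h0 ▸ dvd_zero q)
    obtain ⟨p, k, hp, -, rfl⟩ := (isPrimePow_nat_iff q).1 hq
    rw [Finset.lcm_insert] at h
    replace h : p ^ k ∣ Nat.lcm (f i) (s.lcm f) := h
    rw [hp.pow_dvd_iff_le_factorization (Nat.lcm_ne_zero hi0 hs0), Nat.factorization_lcm hi0 hs0,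
      Finsupp.sup_apply, le_sup_iff, ← hp.pow_dvd_iff_le_factorization hi0,
      ← hp.pow_dvd_iff_le_factorization hs0] at h
    exact h.elim hf.1 fun h ↦ ih h hf.2

lemma card_preimage_eq_mul {α β : Type*} [Fintype α] [DecidableEq β] {F : α → β} {s : ℕ}
    (hs : ∀ b, #{a | F a = b} = s) (T : Finset β) : #{a | F a ∈ T} = #T * s := by
  rw [← sum_card_fiberwise_eq_card_filter, sum_const_nat fun b _ ↦ hs b]

lemma IsInvariant.preimage {α β : Type*} [Fintype α] [DecidableEq β] {F : α → β} {σ : Perm α}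
    {τ : Perm β} (hF : Function.Semiconj F σ τ) {T : Finset β} (hT : IsInvariant τ T) :
    IsInvariant σ {a | F a ∈ T} := by
  intro a
  simp only [mem_filter, mem_univ, true_and, hF.eq, hT (F a)]

variable {α β : Type*} [Fintype α] [DecidableEq α] [Fintype β] [DecidableEq β] {F : α → β}
  {σ : Perm α} {τ : Perm β}

lemma card_cycleAt_eq_mul (hF : Function.Semiconj F σ τ) (a : α) :
    #(cycleAt σ a) = #(cycleAt τ (F a)) * #{b ∈ cycleAt σ a | F b = F a} := by
  rw [card_eq_sum_card_fiberwise (f := F) (t := cycleAt τ (F a)) fun b hb ↦ map_mem_cycleAt hF hb]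
  refine sum_const_nat fun b hb ↦ ?_
  obtain ⟨i, rfl⟩ := (mem_cycleAt.1 hb).exists_nat_pow_eq
  refine (card_bijective (σ ^ i) (σ ^ i).bijective fun c ↦ ?_).symm
  rw [mem_filter, mem_filter, mem_cycleAt, mem_cycleAt, Perm.sameCycle_pow_right,
    map_pow_of_semiconj hF, (τ ^ i).injective.eq_iff]

lemma card_cycleAt_dvd (hF : Function.Semiconj F σ τ) (a : α) :
    #(cycleAt τ (F a)) ∣ #(cycleAt σ a) :=
  ⟨_, card_cycleAt_eq_mul hF a⟩

lemma card_cycles_le_of_semiconj (hF : Function.Semiconj F σ τ) (hsurj : F.Surjective) :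
    #(cycles τ) ≤ #(cycles σ) := by
  refine card_le_card_of_surjOn (fun X ↦ if h : X.Nonempty then cycleAt τ (F h.choose) else ∅) ?_
  intro T hT
  obtain ⟨b, rfl⟩ := mem_cycles.1 hT
  obtain ⟨a, rfl⟩ := hsurj b
  have hne : (cycleAt σ a).Nonempty := ⟨a, mem_cycleAt_self σ a⟩
  refine ⟨cycleAt σ a, cycleAt_mem_cycles σ a, (dif_pos hne).trans ?_⟩
  exact cycleAt_eq_of_mem (cycleAt_mem_cycles τ (F a)) (map_mem_cycleAt hF hne.choose_spec)

end Blocks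

section TypicalPermutations

variable {α : Type*} [Fintype α] [DecidableEq α] {σ : Perm α} {c R Q S : ℕ}

/-- The properties of a random permutation, depending on thresholds `c`, `R`, `Q`, `S`, which
prevent it from generating, together with an element having few invariant sets, a proper subgroup
of the alternating group. They rule out, in turn, block systems with at most `R` blocks
(`card_ne`), with blocks of size at most `S` (`exists_not_dvd` and `not_dvd`) and all others
(`exists_not_dvd_card`); `exists_isPrimePow_dvd` provides a power of small support. -/
structure IsTypical (σ : Perm α) (c R Q S : ℕ) : Prop where
  card_cycles_le : #(cycles σ) ≤ c
  card_ne : ∀ r ≤ R, r ∣ Fintype.card α → ∀ l, 1 ≤ l → l < r → ∀ X : Finset α,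
    IsInvariant σ X → #X ≠ l * (Fintype.card α / r)
  exists_not_dvd : ∀ p : ℕ, p.Prime → p ∣ Fintype.card α →
    ∃ X ∈ cycles σ, Q * S ≤ #X ∧ ¬ p ∣ #X
  not_dvd : ∀ X ∈ cycles σ, ∀ Y ∈ cycles σ, X ≠ Y → ∀ q, Q ≤ q → q ∣ #X → ¬ q ∣ #Y
  exists_not_dvd_card : ∀ s, s ∣ Fintype.card α → S < s → R < Fintype.card α / s →
    ∀ l ≤ Fintype.card α / s, Fintype.card α / s ≤ l * c → ∀ X : Finset α, IsInvariant σ X →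
      #X = l * s → ∃ Y ∈ cycles σ, Y ⊆ X ∧ ¬ l ∣ #Y
  exists_isPrimePow_dvd : ∃ X ∈ cycles σ, 16 * #X ^ 2 < Fintype.card α ∧
    ∃ q, IsPrimePow q ∧ Q ≤ q ∧ q ∣ #X

namespace IsTypical

variable {β : Type*} [Fintype β] [DecidableEq β] {F : α → β} {τ : Perm β} {s : ℕ}

lemma false_of_few_blocks (h : IsTypical σ c R Q S) (hF : Function.Semiconj F σ τ)
    (hs : ∀ b, #{a | F a = b} = s) (hcard : Fintype.card α = Fintype.card β * s)
    (hβ : 1 < Fintype.card β) (hR : Fintype.card β ≤ R) : False := by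
  obtain ⟨p, hp, hpβ⟩ := Nat.exists_prime_and_dvd hβ.ne'
  obtain ⟨X, hX, -, hXp⟩ := h.exists_not_dvd p hp (hcard ▸ hpβ.mul_right s)
  obtain ⟨a, rfl⟩ := mem_cycles.1 hX
  have hne : #(cycleAt τ (F a)) ≠ Fintype.card β :=
    fun heq ↦ hXp (hpβ.trans (heq ▸ card_cycleAt_dvd hF a))
  refine h.card_ne _ hR (hcard ▸ dvd_mul_right _ s) _ (card_pos.2 ⟨_, mem_cycleAt_self τ (F a)⟩)
    ((card_le_univ _).lt_of_ne hne) _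
    ((isInvariant_of_mem_cycles (cycleAt_mem_cycles τ (F a))).preimage hF) ?_
  rw [card_preimage_eq_mul hs, hcard, Nat.mul_div_cancel_left _ (Nat.zero_lt_of_lt hβ)]

/-- A cycle `X` of length at least `Q * S` and not divisible by a prime factor of `s` permutes at
least `Q` blocks without filling them. Hence another cycle permutes the same blocks, and their
number divides both lengths. -/
lemma false_of_small_blocks (h : IsTypical σ c R Q S) (hF : Function.Semiconj F σ τ)
    (hs : ∀ b, #{a | F a = b} = s) (hcard : Fintype.card α = Fintype.card β * s) (hs1 : 1 < s)
    (hS : s ≤ S) : False := by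
  obtain ⟨p, hp, hps⟩ := Nat.exists_prime_and_dvd hs1.ne'
  obtain ⟨X, hX, hXQS, hXp⟩ := h.exists_not_dvd p hp (hcard ▸ hps.mul_left _)
  obtain ⟨a, rfl⟩ := mem_cycles.1 hX
  have hmul := card_cycleAt_eq_mul hF a
  have hsub : ({b ∈ cycleAt σ a | F b = F a} : Finset α) ⊆ ({b | F b = F a} : Finset α) :=
    filter_subset_filter _ (subset_univ _)
  obtain ⟨b, hba, hb⟩ : ∃ b, F b = F a ∧ b ∉ cycleAt σ a := by
    by_contra! hfill
    have heq : ({b ∈ cycleAt σ a | F b = F a} : Finset α) = ({b | F b = F a} : Finset α) :=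
      hsub.antisymm fun b hb ↦
        mem_filter.2 ⟨hfill b (mem_filter.1 hb).2, (mem_filter.1 hb).2⟩
    rw [heq, hs] at hmul
    exact hXp (hmul ▸ hps.mul_left _)
  have hQ : Q ≤ #(cycleAt τ (F a)) := by
    refine Nat.le_of_mul_le_mul_right ?_ (show 0 < S by lia)
    calc Q * S ≤ _ := hXQS.trans_eq hmul
      _ ≤ #(cycleAt τ (F a)) * S :=
        Nat.mul_le_mul_left _ ((card_le_card hsub).trans ((hs (F a)).trans_le hS))
  exact h.not_dvd _ hX _ (cycleAt_mem_cycles σ b) (fun heq ↦ hb (heq ▸ mem_cycleAt_self σ b)) _ hQ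
    (card_cycleAt_dvd hF a) (hba ▸ card_cycleAt_dvd hF b)

lemma false_of_large_blocks (h : IsTypical σ c R Q S) (hF : Function.Semiconj F σ τ)
    (hs : ∀ b, #{a | F a = b} = s) (hcard : Fintype.card α = Fintype.card β * s)
    (hS : S < s) (hR : R < Fintype.card β) : False := by
  have hdiv : Fintype.card α / s = Fintype.card β := by
    rw [hcard, Nat.mul_div_cancel _ (Nat.zero_lt_of_lt hS)]
  have hsurj : F.Surjective := fun b ↦ by
    obtain ⟨a, ha⟩ := card_pos.1 ((Nat.zero_lt_of_lt hS).trans_eq (hs b).symm)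
    exact ⟨a, (mem_filter.1 ha).2⟩
  obtain ⟨T, hT, hTc⟩ : ∃ T ∈ cycles τ, Fintype.card β ≤ #T * c := by
    by_contra! hsmall
    obtain ⟨b⟩ := Fintype.card_pos_iff.1 (Nat.zero_lt_of_lt hR)
    have hlt := sum_lt_sum_of_nonempty ⟨_, cycleAt_mem_cycles τ b⟩ hsmall
    rw [← sum_mul, sum_card_cycles, sum_const, smul_eq_mul, mul_comm] at hlt
    exact hlt.not_ge (Nat.mul_le_mul_right _
      ((card_cycles_le_of_semiconj hF hsurj).trans h.card_cycles_le))
  obtain ⟨Y, hY, hYT, hTY⟩ := h.exists_not_dvd_card s (hcard ▸ dvd_mul_left s _) hS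
    (hdiv.symm ▸ hR) #T (hdiv.symm ▸ card_le_univ T) (hdiv.symm ▸ hTc) _
    ((isInvariant_of_mem_cycles hT).preimage hF) (card_preimage_eq_mul hs T)
  obtain ⟨a, rfl⟩ := mem_cycles.1 hY
  have ha : F a ∈ T := (mem_filter.1 (hYT (mem_cycleAt_self σ a))).2
  exact hTY (cycleAt_eq_of_mem hT ha ▸ card_cycleAt_dvd hF a)

lemma false_of_semiconj (h : IsTypical σ c R Q S) (hF : Function.Semiconj F σ τ)
    (hs : ∀ b, #{a | F a = b} = s) (hs1 : 1 < s) (hβ : 1 < Fintype.card β) : False := by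
  have hcard : Fintype.card α = Fintype.card β * s := by
    simpa only [mem_univ, filter_true, card_univ] using card_preimage_eq_mul hs univ
  rcases le_or_gt s S with hS | hS
  · exact h.false_of_small_blocks hF hs hcard hs1 hS
  rcases le_or_gt (Fintype.card β) R with hR | hR
  · exact h.false_of_few_blocks hF hs hcard hβ hR
  · exact h.false_of_large_blocks hF hs hcard hS hR

/-- The power of `σ` is the one killing all cycles but the short one `X`, which survives because a
large prime power divides `#X` but the length of no other cycle. -/
lemma exists_pow_card_support_lt (h : IsTypical σ c R Q S) :
    ∃ k : ℕ, σ ^ k ≠ 1 ∧ 16 * #(σ ^ k).support ^ 2 < Fintype.card α := by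
  obtain ⟨X, hX, hXcard, q, hq, hQq, hqX⟩ := h.exists_isPrimePow_dvd
  obtain ⟨a, rfl⟩ := mem_cycles.1 hX
  let k := ((cycles σ).erase (cycleAt σ a)).lcm card
  have hsupp : (σ ^ k).support ⊆ cycleAt σ a := by
    intro b hb
    rw [Perm.mem_support, ne_eq, pow_apply_eq_self_iff_card_cycleAt_dvd] at hb
    by_contra hba
    exact hb (dvd_lcm (mem_erase.2
      ⟨fun heq ↦ hba (heq ▸ mem_cycleAt_self σ b), cycleAt_mem_cycles σ b⟩))
  refine ⟨k, fun hk ↦ ?_, hXcard.trans_le' (by gcongr)⟩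
  have hak : (σ ^ k) a = a := by rw [hk, Perm.one_apply]
  rw [pow_apply_eq_self_iff_card_cycleAt_dvd] at hak
  obtain ⟨Y, hY, hqY⟩ := exists_dvd_of_isPrimePow_dvd_lcm hq (hqX.trans hak)
  rw [mem_erase] at hY
  exact h.not_dvd _ hX Y hY.2 hY.1.symm q hQq hqX hqY

end IsTypical

end TypicalPermutations

section TypicalGeneration

open scoped Pointwise

variable {α : Type*}

lemma exists_equivariant_of_isBlock {G : Type*} [Group G] [MulAction G α]
    [MulAction.IsPretransitive G α] {B : Set α} (hB : MulAction.IsBlock G B) (hne : B.Nonempty) :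
    ∃ F : α → MulAction.orbit G B, (∀ (g : G) a, F (g • a) = g • F a) ∧
      ∀ a b, F a = b ↔ a ∈ (b : Set α) := by
  have hpart := (hB.isBlockSystem hne).1
  choose F hF using fun a ↦ hpart.2 a
  have hF_unique (a : α) (b : MulAction.orbit G B) (hab : a ∈ (b : Set α)) : F a = b :=
    ((hF a).2 b ⟨b.2, hab⟩).symm
  refine ⟨fun a ↦ ⟨F a, (hF a).1.1⟩, fun g a ↦ ?_, fun a b ↦ ⟨?_, fun hab ↦ ?_⟩⟩
  · refine Subtype.ext (hF_unique (g • a) (g • ⟨F a, (hF a).1.1⟩) ?_)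
    exact Set.smul_mem_smul_set (hF a).1.2
  · rintro rfl
    exact (hF a).1.2
  · exact Subtype.ext (hF_unique a b hab)

lemma isInvariant_orbit {H : Subgroup (Perm α)} {σ : Perm α} {X : Finset α} {a : α}
    (hX : ∀ b, b ∈ X ↔ b ∈ MulAction.orbit H a) (hσ : σ ∈ H) : IsInvariant σ X := by
  intro b
  rw [hX, hX, ← MulAction.orbit_eq_iff, ← MulAction.orbit_eq_iff]
  exact Eq.congr_left (MulAction.orbit_smul (⟨σ, hσ⟩ : H) b)

variable [Fintype α] [DecidableEq α] {H : Subgroup (Perm α)} {σ : Perm α} {c R Q S : ℕ}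

lemma IsTypical.isPreprimitive (h : IsTypical σ c R Q S) (hσ : σ ∈ H)
    [MulAction.IsPretransitive H α] : MulAction.IsPreprimitive H α where
  isTrivialBlock_of_isBlock {B} hB := by
    classical
    by_contra! hnontriv
    rw [MulAction.IsTrivialBlock, not_or, Set.not_subsingleton_iff] at hnontriv
    obtain ⟨hnt, huniv⟩ := hnontriv
    obtain ⟨F, hFsmul, hF⟩ := exists_equivariant_of_isBlock hB hnt.nonempty
    have := Fintype.ofFinite (MulAction.orbit H B)
    have hfiber (b : MulAction.orbit H B) : #{a | F a = b} = B.ncard := by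
      obtain ⟨g, hg⟩ := b.2
      have hcoe : (({a | F a = b} : Finset α) : Set α) = g • B := by
        ext a
        rw [mem_coe, mem_filter_univ, hF, ← hg]
      rw [← Set.ncard_coe_finset, hcoe, Set.ncard_smul_set]
    have hβ : 1 < Fintype.card (MulAction.orbit H B) := by
      obtain ⟨a, ha⟩ := (Set.ne_univ_iff_exists_notMem B).1 huniv
      exact Fintype.one_lt_card_iff.2
        ⟨F a, ⟨B, MulAction.mem_orbit_self B⟩, fun heq ↦ ha ((hF a _).1 heq)⟩
    exact h.false_of_semiconj (τ := MulAction.toPerm (⟨σ, hσ⟩ : H)) (fun a ↦ hFsmul ⟨σ, hσ⟩ a)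
      hfiber (Set.one_lt_ncard_iff_nontrivial.2 hnt) hβ

lemma IsTypical.isPretransitive (h : IsTypical σ c R Q S) (hσ : σ ∈ H) (hR : 2 ≤ R) {ρ : Perm α}
    (hρ : ρ ∈ H) (hinv : ∀ X : Finset α, IsInvariant ρ X →
      X = ∅ ∨ 2 * #X = Fintype.card α ∨ X = univ) : MulAction.IsPretransitive H α := by
  classical
  refine ⟨fun a b ↦ ?_⟩
  let X : Finset α := {b | b ∈ MulAction.orbit H a}
  have hX (b) : b ∈ X ↔ b ∈ MulAction.orbit H a := by simp only [X, mem_filter, mem_univ, true_and]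
  rcases hinv X (isInvariant_orbit hX hρ) with hempty | hhalf | huniv
  · exact absurd (hempty ▸ (hX a).2 (MulAction.mem_orbit_self a)) (notMem_empty a)
  · refine absurd ?_ (h.card_ne 2 hR (hhalf ▸ dvd_mul_right 2 _) 1 le_rfl one_lt_two X
      (isInvariant_orbit hX hσ))
    lia
  · exact (hX b).1 (huniv ▸ mem_univ b)

theorem IsTypical.alternatingGroup_le (h : IsTypical σ c R Q S) (hσ : σ ∈ H) (hR : 2 ≤ R)
    {ρ : Perm α} (hρ : ρ ∈ H) (hinv : ∀ X : Finset α, IsInvariant ρ X →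
      X = ∅ ∨ 2 * #X = Fintype.card α ∨ X = univ) : alternatingGroup α ≤ H := by
  have := h.isPretransitive hσ hR hρ hinv
  have := h.isPreprimitive hσ
  obtain ⟨k, hk1, hkcard⟩ := h.exists_pow_card_support_lt
  exact alternatingGroup_le_of_sixteen_mul_card_support_sq_lt (H.pow_mem hσ k) hk1 hkcard

end TypicalGeneration

section InvariantSetsOfRegularPermutations

variable {α : Type*} [Fintype α] [DecidableEq α] {σ : Perm α} {k l m : ℕ}

lemma card_cycleAt_mem_cycleType {a : α} (ha : a ∈ σ.support) : #(cycleAt σ a) ∈ σ.cycleType := by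
  have hcycle : cycleAt σ a = (σ.cycleOf a).support := by
    ext b
    rw [mem_cycleAt, Perm.mem_support_cycleOf_iff, and_iff_left ha]
  rw [hcycle, Perm.cycleType_def]
  exact Multiset.mem_map_of_mem _ (Perm.cycleOf_mem_cycleFactorsFinset_iff.2 ha)

lemma support_eq_univ_of_sum_cycleType_eq (hσ : σ.cycleType.sum = Fintype.card α) :
    σ.support = univ := by
  rw [← card_eq_iff_eq_univ, ← Perm.sum_cycleType, hσ]

lemma IsInvariant.dvd_card {X : Finset α} (hX : IsInvariant σ X)
    (hm : ∀ a, #(cycleAt σ a) = m) : m ∣ #X := by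
  rw [card_eq_sum_card_image (cycleAt σ) X]
  refine dvd_sum fun Y hY ↦ ?_
  obtain ⟨a, ha, rfl⟩ := mem_image.1 hY
  rw [← hm a]
  refine dvd_of_eq (congrArg card ?_)
  ext b
  rw [mem_filter]
  exact ⟨fun hb ↦ ⟨hX.cycleAt_subset ha hb, cycleAt_eq_of_mem (cycleAt_mem_cycles σ a) hb⟩,
    fun hb ↦ hb.2 ▸ mem_cycleAt_self σ b⟩

lemma IsInvariant.eq_empty_or_half_or_univ {X : Finset α} (hX : IsInvariant σ X) (hk : k ≤ 2)
    (hcard : k * m = Fintype.card α) (hσ : σ.cycleType = Multiset.replicate k m) :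
    X = ∅ ∨ 2 * #X = Fintype.card α ∨ X = univ := by
  have hsupp : σ.support = univ := support_eq_univ_of_sum_cycleType_eq (by
    rw [hσ, Multiset.sum_replicate, smul_eq_mul, hcard])
  have hlength (a : α) : #(cycleAt σ a) = m :=
    Multiset.eq_of_mem_replicate (hσ ▸ card_cycleAt_mem_cycleType (hsupp ▸ mem_univ a))
  obtain ⟨j, hj⟩ := hX.dvd_card hlength
  have hle := card_le_univ X
  rw [← card_eq_zero, ← card_eq_iff_eq_univ]
  rcases m.eq_zero_or_pos with rfl | hm
  · exact .inl (hj.trans (zero_mul j))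
  have hjk : j ≤ k := Nat.le_of_mul_le_mul_right (by lia) hm
  interval_cases k <;> interval_cases j <;> lia

lemma exists_mul_of_cycleType_eq_pair (hσ : σ.cycleType = {k, l}) :
    ∃ c d : Perm α, c.IsCycle ∧ d.IsCycle ∧ #c.support = k ∧ #d.support = l ∧ c.Disjoint d ∧
      σ = c * d := by
  obtain ⟨c, d, rfl, hcd, hc, hck⟩ := Perm.mem_cycleType_iff.1
    (hσ ▸ Multiset.mem_cons_self k {l} : k ∈ σ.cycleType)
  have hd : d.cycleType = {l} := by
    rw [hcd.cycleType_mul, hc.cycleType, hck, Multiset.insert_eq_cons, Multiset.singleton_add] at hσ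
    exact (Multiset.cons_inj_right k).1 hσ
  refine ⟨c, d, hc, ?_, hck, ?_, hcd, rfl⟩
  · rw [← Perm.card_cycleType_eq_one, hd, Multiset.card_singleton]
  · rw [← Perm.sum_cycleType, hd, Multiset.sum_singleton]

lemma exists_mem_alternatingGroup_cycleType_eq_replicate (hm : 2 ≤ m)
    (hcard : k * m ≤ Fintype.card α) (heven : Even (k * m + k)) :
    ∃ x ∈ alternatingGroup α, x.cycleType = Multiset.replicate k m := by
  obtain ⟨x, hx⟩ := (Perm.exists_with_cycleType_iff α (m := Multiset.replicate k m)).2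
    ⟨by rwa [Multiset.sum_replicate, smul_eq_mul],
      fun a ha ↦ hm.trans_eq (Multiset.eq_of_mem_replicate ha).symm⟩
  refine ⟨x, ?_, hx⟩
  rw [Perm.mem_alternatingGroup, Perm.sign_of_cycleType, hx, Multiset.sum_replicate,
    Multiset.card_replicate, smul_eq_mul, heven.neg_one_pow]

lemma exists_isCycle_or_mul_isCycle {n : ℕ} (hn : 3 ≤ n) : ∃ x : alternatingGroup (Fin n),
    (Odd n → (x : Perm (Fin n)).IsCycle ∧ #(x : Perm (Fin n)).support = n) ∧
    (Even n → ∃ c d : Perm (Fin n), c.IsCycle ∧ d.IsCycle ∧ #c.support = n / 2 ∧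
      #d.support = n / 2 ∧ c.Disjoint d ∧ (x : Perm (Fin n)) = c * d) ∧
    ∃ k m, k ≤ 2 ∧ k * m = n ∧ (x : Perm (Fin n)).cycleType = Multiset.replicate k m := by
  rcases Nat.even_or_odd n with heven | hodd
  · have hn2 : 2 * (n / 2) = n := Nat.two_mul_div_two_of_even heven
    obtain ⟨x, hxmem, hx⟩ := exists_mem_alternatingGroup_cycleType_eq_replicate (α := Fin n)
      (k := 2) (m := n / 2) (by lia) (hn2.trans (Fintype.card_fin n).symm).le
      (hn2.symm ▸ heven.add even_two)
    exact ⟨⟨x, hxmem⟩, fun hodd ↦ absurd heven (Nat.not_even_iff_odd.2 hodd),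
      fun _ ↦ exists_mul_of_cycleType_eq_pair hx, 2, n / 2, le_rfl, hn2, hx⟩
  · obtain ⟨x, hxmem, hx⟩ := exists_mem_alternatingGroup_cycleType_eq_replicate (α := Fin n)
      (k := 1) (m := n) (by lia) (by rw [one_mul, Fintype.card_fin])
      (by rw [one_mul]; exact hodd.add_one)
    have hxcycle : x.IsCycle := by
      rw [← Perm.card_cycleType_eq_one, hx, Multiset.card_replicate]
    have hxsupp : #x.support = n := by
      rw [← Perm.sum_cycleType, hx, Multiset.sum_replicate, one_smul]
    exact ⟨⟨x, hxmem⟩, fun _ ↦ ⟨hxcycle, hxsupp⟩,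
      fun heven ↦ absurd heven (Nat.not_even_iff_odd.2 hodd), 1, n, one_le_two, one_mul n, hx⟩

end InvariantSetsOfRegularPermutations

section InvariableGenerationOfAlternatingGroup

lemma invGen_of_forall_closure_eq_top {G : Type*} [Group G] {x y : G}
    (hxy : ∀ g : G, Subgroup.closure {g * x * g⁻¹, y} = ⊤) : InvGen x y := by
  intro g h
  have himage : {g * x * g⁻¹, h * y * h⁻¹} =
      (MulAut.conj h).toMonoidHom '' {h⁻¹ * g * x * (h⁻¹ * g)⁻¹, y} := by
    rw [Set.image_pair, MulEquiv.coe_toMonoidHom, MulAut.conj_apply, MulAut.conj_apply]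
    group
  rw [himage, ← MonoidHom.map_closure, hxy]
  exact Subgroup.map_top_of_surjective _ (MulAut.conj h).surjective

variable {α : Type*} [Fintype α] [DecidableEq α]

lemma IsTypical.invGen {x y : alternatingGroup α} {c R Q S k m : ℕ}
    (hy : IsTypical (y : Perm α) c R Q S) (hR : 2 ≤ R) (hk : k ≤ 2)
    (hcard : k * m = Fintype.card α)
    (hx : (x : Perm α).cycleType = Multiset.replicate k m) : InvGen x y := by
  refine invGen_of_forall_closure_eq_top fun g ↦ ?_
  set K := Subgroup.closure {g * x * g⁻¹, y}
  have hxK : (g * x * g⁻¹ : Perm α) ∈ K.map (alternatingGroup α).subtype :=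
    ⟨_, Subgroup.subset_closure (Set.mem_insert _ _), rfl⟩
  have hyK : (y : Perm α) ∈ K.map (alternatingGroup α).subtype :=
    ⟨_, Subgroup.subset_closure (Set.mem_insert_of_mem _ rfl), rfl⟩
  rw [eq_top_iff, ← Subgroup.map_subtype_le_map_subtype, ← MonoidHom.range_eq_map,
    Subgroup.range_subtype]
  exact hy.alternatingGroup_le hyK hR hxK fun X hX ↦
    hX.eq_empty_or_half_or_univ hk hcard (Perm.cycleType_conj.trans hx)

/-- The factor `2` is the index of the alternating group. -/
lemma one_sub_two_mul_permProb_mul_card_le [Nontrivial α] {T : Perm α → Prop}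
    {P : alternatingGroup α → Prop} (hP : ∀ y : alternatingGroup α, T y → P y) :
    (1 - 2 * permProb (fun σ : Perm α ↦ ¬ T σ)) * Nat.card (alternatingGroup α) ≤
      Nat.card {y // P y} := by
  classical
  have hsum : (Nat.card {y // P y} : ℝ) + Nat.card {y // ¬ P y} =
      Nat.card (alternatingGroup α) := by
    rw [← Nat.cast_add, ← Nat.card_sum, Nat.card_congr (Equiv.sumCompl P)]
  have hbad : Nat.card {y // ¬ P y} ≤ Nat.card {σ : Perm α // ¬ T σ} :=
    Nat.card_le_card_of_injective (fun y ↦ ⟨y, fun hy ↦ y.2 (hP y hy)⟩) fun y z hyz ↦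
      Subtype.ext (Subtype.ext (Subtype.mk.inj hyz))
  have hcard : (2 * Nat.card (alternatingGroup α) : ℝ) = (Fintype.card α).factorial := by
    rw [← Fintype.card_perm, ← Nat.card_eq_fintype_card]
    exact mod_cast two_mul_nat_card_alternatingGroup
  have hprob := (Nat.cast_le (α := ℝ).2 hbad).trans_eq (natCard_subtype_eq_mul_permProb _)
  rw [← hcard] at hprob
  linarith

end InvariableGenerationOfAlternatingGroup

section HarmonicSumsOverSets

open ArithmeticFunction in
lemma sum_vonMangoldt_div_le {N : ℕ} (hN : 1 ≤ N) :
    ∑ d ∈ Ioc 0 N, vonMangoldt d / d ≤ Real.log N + (Real.log 4 + 4) := by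
  have hN0 : (0 : ℝ) < N := by positivity
  have hfactorial : ∑ d ∈ Ioc 0 N, vonMangoldt d * (N / d : ℕ) ≤ N * Real.log N := by
    rw [← sum_Ioc_mul_zeta_eq_sum, vonMangoldt_mul_zeta]
    calc ∑ d ∈ Ioc 0 N, ArithmeticFunction.log d ≤ ∑ _d ∈ Ioc 0 N, Real.log N := by
          refine sum_le_sum fun d hd ↦ ?_
          rw [mem_Ioc] at hd
          exact Real.log_le_log (mod_cast hd.1) (mod_cast hd.2)
      _ = N * Real.log N := by rw [sum_const, Nat.card_Ioc, tsub_zero, nsmul_eq_mul]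
  have hpsi : ∑ d ∈ Ioc 0 N, vonMangoldt d ≤ (Real.log 4 + 4) * N := by
    simpa only [Chebyshev.psi, Nat.floor_natCast] using Chebyshev.psi_le_const_mul_self hN0.le
  refine le_of_mul_le_mul_left ?_ hN0
  calc N * ∑ d ∈ Ioc 0 N, vonMangoldt d / d
      ≤ ∑ d ∈ Ioc 0 N, (vonMangoldt d * (N / d : ℕ) + vonMangoldt d) := by
        rw [mul_sum]
        refine sum_le_sum fun d _ ↦ ?_
        have hfloor := (Nat.lt_floor_add_one ((N : ℝ) / d)).le
        rw [Nat.floor_div_eq_div] at hfloor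
        calc N * (vonMangoldt d / d) = vonMangoldt d * (N / d) := by ring
          _ ≤ vonMangoldt d * ((N / d : ℕ) + 1) :=
            mul_le_mul_of_nonneg_left hfloor vonMangoldt_nonneg
          _ = _ := by ring
    _ ≤ N * Real.log N + (Real.log 4 + 4) * N := by
        rw [sum_add_distrib]
        exact add_le_add hfactorial hpsi
    _ = _ := by ring

/-- In `log c = ∑ d ∣ c, Λ d` only the `d ≤ Q` contribute. -/
lemma log_le_sum_vonMangoldt_of_forall_isPrimePow {Q c : ℕ}
    (hc : ∀ q, IsPrimePow q → Q ≤ q → ¬ q ∣ c) :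
    Real.log c ≤ ∑ d ∈ Ioc 0 Q with d ∣ c, ArithmeticFunction.vonMangoldt d := by
  rw [← ArithmeticFunction.vonMangoldt_sum, ← sum_filter_ne_zero]
  refine sum_le_sum_of_subset_of_nonneg (fun d hd ↦ ?_)
    fun _ _ _ ↦ ArithmeticFunction.vonMangoldt_nonneg
  obtain ⟨hdc, hne⟩ := mem_filter.1 hd
  have hpow := ArithmeticFunction.vonMangoldt_ne_zero_iff.1 hne
  have hdvd := Nat.dvd_of_mem_divisors hdc
  exact mem_filter.2
    ⟨mem_Ioc.2 ⟨hpow.pos, (not_le.1 fun hQ ↦ hc d hpow hQ hdvd).le⟩, hdvd⟩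

open scoped Classical in
lemma sum_log_div_le {Q : ℕ} (hQ : 1 ≤ Q) (m : ℕ) :
    ∑ c ∈ Icc 1 m with ¬ ∃ q, IsPrimePow q ∧ Q ≤ q ∧ q ∣ c, Real.log c / c ≤
      (Real.log Q + (Real.log 4 + 4)) * (1 + Real.log m) := by
  calc _ ≤ ∑ c ∈ Icc 1 m with ¬ ∃ q, IsPrimePow q ∧ Q ≤ q ∧ q ∣ c,
          (∑ d ∈ Ioc 0 Q with d ∣ c, ArithmeticFunction.vonMangoldt d) / c := by
        refine sum_le_sum fun c hc ↦ ?_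
        gcongr
        exact log_le_sum_vonMangoldt_of_forall_isPrimePow fun q hq hQq hqc ↦
          (mem_filter.1 hc).2 ⟨q, hq, hQq, hqc⟩
    _ ≤ ∑ c ∈ Icc 1 m, (∑ d ∈ Ioc 0 Q with d ∣ c, ArithmeticFunction.vonMangoldt d) / c :=
        sum_le_sum_of_subset_of_nonneg (filter_subset _ _) fun c _ _ ↦
          div_nonneg (sum_nonneg fun _ _ ↦ ArithmeticFunction.vonMangoldt_nonneg) c.cast_nonneg
    _ = ∑ d ∈ Ioc 0 Q, ArithmeticFunction.vonMangoldt d *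
          ∑ c ∈ Icc 1 m with d ∣ c, (1 : ℝ) / c := by
        simp only [sum_filter, sum_div, mul_sum, ite_div, zero_div, mul_ite, mul_zero, mul_one_div]
        exact sum_comm
    _ ≤ ∑ d ∈ Ioc 0 Q, ArithmeticFunction.vonMangoldt d * ((1 + Real.log m) / d) :=
        sum_le_sum fun d hd ↦ mul_le_mul_of_nonneg_left
          (sum_one_div_filter_dvd_le (mem_Ioc.1 hd).1 m) ArithmeticFunction.vonMangoldt_nonneg
    _ = (∑ d ∈ Ioc 0 Q, ArithmeticFunction.vonMangoldt d / d) * (1 + Real.log m) := by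
        rw [sum_mul]
        exact sum_congr rfl fun d _ ↦ by ring
    _ ≤ _ := mul_le_mul_of_nonneg_right (sum_vonMangoldt_div_le hQ) (by positivity)

open scoped Classical in
lemma le_sum_one_div_exists_isPrimePow_dvd {D : ℝ} (hD : 1 < D) {Q : ℕ} (hQ : 1 ≤ Q) (m : ℕ) :
    Real.log (m + 1) - (1 + Real.log D) -
        (Real.log Q + (Real.log 4 + 4)) * (1 + Real.log m) / Real.log D ≤
      ∑ c ∈ Icc 1 m with ∃ q, IsPrimePow q ∧ Q ≤ q ∧ q ∣ c, (1 : ℝ) / c := by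
  have hlogD : 0 < Real.log D := Real.log_pos hD
  have hfloor : Real.log ⌊D⌋₊ ≤ Real.log D :=
    Real.log_le_log (mod_cast Nat.floor_pos.2 hD.le) (Nat.floor_le (by linarith))
  have hpointwise (c : ℕ) (hc : c ∈ Icc 1 m) : (1 : ℝ) / c ≤
      Real.log c / c / Real.log D + if c ≤ ⌊D⌋₊ then 1 / (c : ℝ) else 0 := by
    have hc0 : (0 : ℝ) < c := mod_cast (mem_Icc.1 hc).1
    split_ifs with hcD
    · exact le_add_of_nonneg_left
        (div_nonneg (div_nonneg (Real.log_natCast_nonneg c) hc0.le) hlogD.le)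
    · rw [add_zero, div_right_comm]
      gcongr
      rw [one_le_div hlogD]
      exact Real.log_le_log (by linarith) (Nat.lt_of_floor_lt (not_le.1 hcD)).le
  have hsmooth : ∑ c ∈ Icc 1 m with ¬ ∃ q, IsPrimePow q ∧ Q ≤ q ∧ q ∣ c, (1 : ℝ) / c ≤
      (Real.log Q + (Real.log 4 + 4)) * (1 + Real.log m) / Real.log D + (1 + Real.log D) := by
    refine (sum_le_sum fun c hc ↦ hpointwise c (mem_filter.1 hc).1).trans ?_
    rw [sum_add_distrib, ← sum_div, ← sum_filter]
    gcongr
    · exact sum_log_div_le hQ m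
    · refine (sum_le_sum_of_subset_of_nonneg (t := Icc 1 ⌊D⌋₊) (fun c hc ↦ ?_)
        fun _ _ _ ↦ by positivity).trans ((sum_one_div_le _).trans (by gcongr))
      simp only [mem_filter, mem_Icc] at hc ⊢
      exact ⟨hc.1.1.1, hc.2⟩
  have hsum := log_add_one_le_sum_one_div m
  rw [← sum_filter_add_sum_filter_not _ fun c ↦ ∃ q, IsPrimePow q ∧ Q ≤ q ∧ q ∣ c] at hsum
  linarith

lemma sum_one_div_dvd_le_sum_one_div_not_dvd {p : ℕ} (hp : 2 ≤ p) (M n : ℕ) :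
    ∑ l ∈ Icc 1 n with M < l ∧ p ∣ l, (1 : ℝ) / l ≤
      ∑ l ∈ Icc 1 n with M ≤ l ∧ ¬ p ∣ l, (1 : ℝ) / l := by
  have htwo (l : ℕ) (hl : l ∈ (Icc 1 n).filter fun l ↦ M < l ∧ p ∣ l) : 2 ≤ l :=
    hp.trans (Nat.le_of_dvd (mem_Icc.1 (mem_filter.1 hl).1).1 (mem_filter.1 hl).2.2)
  calc _ ≤ ∑ l ∈ Icc 1 n with M < l ∧ p ∣ l, (1 : ℝ) / ((l - 1 : ℕ) : ℝ) := by
        refine sum_le_sum fun l hl ↦ one_div_le_one_div_of_le ?_ (mod_cast l.sub_le 1)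
        exact mod_cast Nat.sub_pos_of_lt (htwo l hl)
    _ = ∑ l ∈ ((Icc 1 n).filter fun l ↦ M < l ∧ p ∣ l).image (· - 1 : ℕ → ℕ), (1 : ℝ) / l := by
        rw [sum_image]
        intro a ha b hb hab
        have ha2 := htwo a ha
        have hb2 := htwo b hb
        simp only at hab
        lia
    _ ≤ _ := by
        refine sum_le_sum_of_subset_of_nonneg (fun l hl ↦ ?_) fun _ _ _ ↦ by positivity
        obtain ⟨k, hk, rfl⟩ := mem_image.1 hl
        have hk2 := htwo k hk
        rw [mem_filter, mem_Icc] at hk ⊢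
        refine ⟨by lia, by lia, fun hdvd ↦ ?_⟩
        have hone := Nat.dvd_sub hk.2.2 hdvd
        rw [Nat.sub_sub_self hk.1.1, Nat.dvd_one] at hone
        lia

lemma le_sum_one_div_not_dvd {p : ℕ} (hp : 2 ≤ p) (M n : ℕ) :
    (Real.log (n + 1) - (1 + Real.log M)) / 2 ≤
      ∑ l ∈ Icc 1 n with M ≤ l ∧ ¬ p ∣ l, (1 : ℝ) / l := by
  have hsum : ∑ l ∈ Icc 1 n, (1 : ℝ) / l ≤ ∑ l ∈ Icc 1 M, (1 : ℝ) / l +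
      (∑ l ∈ Icc 1 n with M < l ∧ p ∣ l, (1 : ℝ) / l +
        ∑ l ∈ Icc 1 n with M ≤ l ∧ ¬ p ∣ l, (1 : ℝ) / l) := by
    calc _ ≤ ∑ l ∈ Icc 1 n, ((if l ≤ M then (1 : ℝ) / l else 0) +
          ((if M < l ∧ p ∣ l then (1 : ℝ) / l else 0) +
            if M ≤ l ∧ ¬ p ∣ l then (1 : ℝ) / l else 0)) := by
          refine sum_le_sum fun l _ ↦ ?_
          have hl : (0 : ℝ) ≤ 1 / l := by positivity
          split_ifs <;> first | linarith | lia
      _ ≤ _ := by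
          rw [sum_add_distrib, sum_add_distrib, ← sum_filter, ← sum_filter, ← sum_filter]
          gcongr ?_ + _
          refine sum_le_sum_of_subset_of_nonneg (fun l hl ↦ ?_) fun _ _ _ ↦ by positivity
          simp only [mem_filter, mem_Icc] at hl ⊢
          exact ⟨hl.1.1, hl.2⟩
  have hdvd := sum_one_div_dvd_le_sum_one_div_not_dvd hp M n
  have hlower := log_add_one_le_sum_one_div n
  have hupper := sum_one_div_le M
  linarith

end HarmonicSumsOverSets

section Estimates

lemma card_primeFactors_le {n : ℕ} (hn : n ≠ 0) : (#n.primeFactors : ℝ) ≤ 2 * Real.log n := by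
  have hpow : 2 ^ #n.primeFactors ≤ n :=
    (pow_card_le_prod _ _ _ fun p hp ↦ (Nat.prime_of_mem_primeFactors hp).two_le).trans
      (Nat.le_of_dvd (Nat.pos_of_ne_zero hn) (Nat.prod_primeFactors_dvd n))
  have hlog : Real.log ((2 : ℝ) ^ #n.primeFactors) ≤ Real.log n :=
    Real.log_le_log (by positivity) (mod_cast hpow)
  rw [Real.log_pow] at hlog
  nlinarith [Real.log_two_gt_d9, (Nat.cast_nonneg #n.primeFactors : (0 : ℝ) ≤ _)]

open Filter in
lemma eventually_mul_one_add_log_pow_le_rpow {ε : ℝ} (hε : 0 < ε) (K : ℝ) (k : ℕ) :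
    ∀ᶠ n : ℕ in atTop, K * (1 + Real.log n) ^ k ≤ (n : ℝ) ^ ε := by
  have hlog : (fun x : ℝ ↦ 1 + Real.log x) =O[atTop] Real.log :=
    Real.isLittleO_const_log_atTop.isBigO.add (Asymptotics.isBigO_refl _ _)
  have hlittle : (fun x : ℝ ↦ K * (1 + Real.log x) ^ k) =o[atTop] fun x ↦ x ^ ε := by
    refine ((hlog.pow k).const_mul_left K).trans_isLittleO ?_
    simpa only [Real.rpow_natCast] using isLittleO_log_rpow_rpow_atTop k hε
  filter_upwards [tendsto_natCast_atTop_atTop.eventually (hlittle.def one_pos)] with n hn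
  rw [one_mul, Real.norm_of_nonneg (Real.rpow_nonneg n.cast_nonneg ε)] at hn
  exact (le_abs_self _).trans hn

lemma le_log_one_point_four_four : (0.364 : ℝ) ≤ Real.log 1.44 := by
  rw [Real.le_log_iff_exp_le (by norm_num)]
  refine (Real.exp_bound' (by norm_num) (by norm_num) (n := 6) (by norm_num)).trans ?_
  norm_num [sum_range_succ, Nat.factorial]

lemma le_log_zero_point_seven_two : (-0.3287 : ℝ) ≤ Real.log 0.72 := by
  have h : Real.log (25 / 18) ≤ 0.3287 := by
    rw [Real.log_le_iff_le_exp (by norm_num)]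
    refine le_trans ?_ (Real.sum_le_exp_of_nonneg (by norm_num) 6)
    norm_num [sum_range_succ, Nat.factorial]
  have hinv : Real.log (25 / 18) = -Real.log 0.72 := by
    rw [← Real.log_inv]
    norm_num
  linarith

lemma log_sqrt_div_le (n : ℕ) : Real.log (n / 25).sqrt ≤ Real.log n / 2 := by
  rcases Nat.eq_zero_or_pos (n / 25).sqrt with hm | hm
  · rw [hm, Nat.cast_zero, Real.log_zero]
    exact div_nonneg (Real.log_natCast_nonneg n) zero_le_two
  · have hsq : (n / 25).sqrt ^ 2 ≤ n := (Nat.sqrt_le' _).trans (n.div_le_self 25)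
    have hlog : Real.log (((n / 25).sqrt : ℝ) ^ 2) ≤ Real.log n :=
      Real.log_le_log (by positivity) (mod_cast hsq)
    rw [Real.log_pow] at hlog
    push_cast at hlog
    linarith

lemma le_log_sqrt_div_add_one {n : ℕ} (hn : 1 ≤ n) :
    Real.log n / 2 - 2 ≤ Real.log ((n / 25).sqrt + 1) := by
  have hsq : n ≤ 25 * ((n / 25).sqrt + 1) ^ 2 := by
    have hlt : n / 25 < ((n / 25).sqrt + 1) ^ 2 := Nat.lt_succ_sqrt' _
    lia
  have hlog : Real.log n ≤ Real.log (25 * (((n / 25).sqrt : ℝ) + 1) ^ 2) :=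
    Real.log_le_log (by positivity) (mod_cast hsq)
  rw [Real.log_mul (by norm_num) (by positivity), Real.log_pow] at hlog
  have hlog25 : Real.log 25 ≤ 4 := by
    rw [Real.log_le_iff_le_exp (by norm_num)]
    refine le_trans ?_ (Real.sum_le_exp_of_nonneg (by norm_num) 5)
    norm_num [sum_range_succ, Nat.factorial]
  push_cast at hlog
  linarith

open scoped Classical in
lemma le_sum_one_div_sq_lt_and_exists_isPrimePow_dvd {n Q : ℕ} (hn : 25 ≤ n) (hQ : 1 ≤ Q)
    (hQn : (Q : ℝ) ≤ 2 * (n : ℝ) ^ (0.081 : ℝ)) :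
    0.0975 * Real.log n - 56 ≤ ∑ c ∈ Icc 1 n with
      16 * c ^ 2 < n ∧ ∃ q, IsPrimePow q ∧ Q ≤ q ∧ q ∣ c, (1 : ℝ) / c := by
  have hn0 : (0 : ℝ) < n := by positivity
  have hlog : 1 ≤ Real.log n := by
    rw [Real.le_log_iff_exp_le hn0]
    have hn25 : (25 : ℝ) ≤ n := mod_cast hn
    linarith [Real.exp_one_lt_d9]
  have hlog4 : Real.log 4 = 2 * Real.log 2 := by
    rw [← Real.log_rpow two_pos]
    norm_num
  have hlogQ : Real.log Q ≤ Real.log 2 + 0.081 * Real.log n := by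
    rw [← Real.log_rpow hn0, ← Real.log_mul two_ne_zero (by positivity)]
    exact Real.log_le_log (by positivity) hQn
  have hmain := le_sum_one_div_exists_isPrimePow_dvd (D := (n : ℝ) ^ (0.2 : ℝ))
    (Real.one_lt_rpow (mod_cast by lia) (by norm_num)) hQ (n / 25).sqrt
  rw [Real.log_rpow hn0] at hmain
  have herror : (Real.log Q + (Real.log 4 + 4)) * (1 + Real.log (n / 25).sqrt) /
      (0.2 * Real.log n) ≤ 0.2025 * Real.log n + 53 := by
    rw [div_le_iff₀ (by positivity)]
    calc _ ≤ (0.081 * Real.log n + 7) * (1 + Real.log n / 2) :=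
          mul_le_mul (by linarith [Real.log_two_lt_d9])
            (add_le_add_right (log_sqrt_div_le n) 1)
            (add_nonneg zero_le_one (Real.log_natCast_nonneg _)) (by positivity)
      _ ≤ _ := by nlinarith
  have hsub : ∑ c ∈ Icc 1 (n / 25).sqrt with ∃ q, IsPrimePow q ∧ Q ≤ q ∧ q ∣ c, (1 : ℝ) / c ≤
      ∑ c ∈ Icc 1 n with 16 * c ^ 2 < n ∧ ∃ q, IsPrimePow q ∧ Q ≤ q ∧ q ∣ c, (1 : ℝ) / c := by
    refine sum_le_sum_of_subset_of_nonneg (fun c hc ↦ ?_) fun _ _ _ ↦ by positivity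
    rw [mem_filter, mem_Icc] at hc ⊢
    have hsq : c ^ 2 ≤ n / 25 := Nat.le_sqrt'.1 hc.1.2
    exact ⟨⟨hc.1.1, by nlinarith [Nat.div_mul_le_self n 25]⟩, by lia, hc.2⟩
  linarith [le_log_sqrt_div_add_one (n := n) (by lia)]

end Estimates

section AtypicalPermutations

variable {n : ℕ} {c R Q S : ℕ}

lemma card_filter_Icc_product_le (N : ℕ) (P : ℕ × ℕ → Prop) [DecidablePred P] :
    #{i ∈ Icc 1 N ×ˢ Icc 1 N | P i} ≤ N ^ 2 := by
  simpa only [card_product, Nat.card_Icc, Nat.add_sub_cancel, sq] using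
    card_filter_le (Icc 1 N ×ˢ Icc 1 N) P

lemma permProb_card_cycles_le_and_isInvariant_mul_le {u : ℝ} (hu : 0 < u) (hu1 : u ≤ 1)
    {r l m : ℕ} (hm : 1 ≤ m) (hl : 1 ≤ l) (hlr : l < r) (hrR : r ≤ R) :
    permProb (fun σ : Perm (Fin (r * m)) ↦ (#(cycles σ) : ℝ) ≤ c ∧
      ∃ X, #X = l * m ∧ IsInvariant σ X) ≤
      (u * Real.exp u * (((r * m : ℕ) : ℝ) / R) ^ (u - 1)) ^ 2 * u ^ (-(c : ℝ)) := by
  have hR0 : (0 : ℝ) < R := mod_cast (by lia : 0 < R)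
  have hpos : 0 < r * m := Nat.mul_pos (by lia) hm
  have hlarge (j : ℕ) (hj : m ≤ j) :
      u * Real.exp u * (j : ℝ) ^ (u - 1) ≤
        u * Real.exp u * (((r * m : ℕ) : ℝ) / R) ^ (u - 1) := by
    refine mul_le_mul_of_nonneg_left ?_ (by positivity)
    refine Real.rpow_le_rpow_of_nonpos (by positivity) ?_ (by linarith)
    rw [div_le_iff₀' hR0]
    exact mod_cast Nat.mul_le_mul hrR hj
  have hcompl : m ≤ r * m - l * m := by
    rw [← Nat.sub_mul]
    exact Nat.le_mul_of_pos_left m (by lia)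
  refine (permProb_card_cycles_le_and_isInvariant_le c hu hu1 (Nat.mul_pos hl hm)
    (Nat.mul_lt_mul_of_pos_right hlr hm)).trans ?_
  rw [sq]
  gcongr ?_ * ?_ * _
  · exact hlarge _ (Nat.le_mul_of_pos_left m hl)
  · exact hlarge _ hcompl

lemma permProb_few_blocks_le {u : ℝ} (hu : 0 < u) (hu1 : u ≤ 1) (hn : 1 ≤ n) :
    permProb (fun σ : Perm (Fin n) ↦ #(cycles σ) ≤ c ∧ ∃ r ≤ R, r ∣ n ∧ ∃ l, 1 ≤ l ∧ l < r ∧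
      ∃ X, #X = l * (n / r) ∧ IsInvariant σ X) ≤
      (R : ℝ) ^ 2 * ((u * Real.exp u * ((n : ℝ) / R) ^ (u - 1)) ^ 2 * u ^ (-(c : ℝ))) := by
  let s := {i ∈ Icc 1 R ×ˢ Icc 1 R | i.1 ∣ n ∧ i.2 < i.1}
  suffices hpair : ∀ i ∈ s, permProb (fun σ : Perm (Fin n) ↦ (#(cycles σ) : ℝ) ≤ c ∧
      ∃ X, #X = i.2 * (n / i.1) ∧ IsInvariant σ X) ≤
      (u * Real.exp u * ((n : ℝ) / R) ^ (u - 1)) ^ 2 * u ^ (-(c : ℝ)) by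
    refine (permProb_mono ?_).trans ((permProb_exists_le_card_mul hpair).trans ?_)
    · rintro σ ⟨hc, r, hrR, hrn, l, hl, hlr, hX⟩
      refine ⟨(r, l), ?_, mod_cast hc, hX⟩
      simp only [s, mem_filter, mem_product, mem_Icc]
      exact ⟨⟨⟨by lia, hrR⟩, hl, by lia⟩, hrn, hlr⟩
    · gcongr
      exact mod_cast card_filter_Icc_product_le R _
  · rintro ⟨r, l⟩ hi
    simp only [s, mem_filter, mem_product, mem_Icc] at hi ⊢
    obtain ⟨⟨⟨hr, hrR⟩, hl, -⟩, ⟨m, rfl⟩, hlr⟩ := hi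
    rw [Nat.mul_div_cancel_left m hr]
    exact permProb_card_cycles_le_and_isInvariant_mul_le hu hu1
      (Nat.pos_of_ne_zero (by rintro rfl; lia)) hl hlr hrR

lemma permProb_forall_le_card_dvd_le {p : ℕ} (hp : 2 ≤ p) (hn : 1 ≤ n) (M : ℕ) :
    permProb (fun σ : Perm (Fin n) ↦ ∀ X ∈ cycles σ, M ≤ #X → p ∣ #X) ≤
      Real.exp (1 - (Real.log n - (1 + Real.log M)) / 2) := by
  have h := permProb_card_notMem_le {l | M ≤ l ∧ ¬ p ∣ l} hn
  have hsum := le_sum_one_div_not_dvd hp M n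
  have hlog : Real.log n ≤ Real.log (n + 1) := Real.log_le_log (by positivity) (by linarith)
  simp only [Set.mem_ofPred_eq, not_and, not_not] at h
  exact h.trans (Real.exp_le_exp.2 (by linarith))

lemma permProb_exists_prime_le (hn : 1 ≤ n) (M : ℕ) :
    permProb (fun σ : Perm (Fin n) ↦ ∃ p ∈ n.primeFactors, ∀ X ∈ cycles σ, M ≤ #X → p ∣ #X) ≤
      2 * Real.log n * Real.exp (1 - (Real.log n - (1 + Real.log M)) / 2) := by
  refine (permProb_exists_le_card_mul fun p hp ↦ permProb_forall_le_card_dvd_le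
    (Nat.prime_of_mem_primeFactors hp).two_le hn M).trans ?_
  gcongr
  exact card_primeFactors_le (by lia)

lemma permProb_isInvariant_mul_and_dvd_le {r l s : ℕ} (hs : 1 ≤ s) (hl : 1 ≤ l) (hlr : l ≤ r)
    (hR : R < r) (hrc : r ≤ l * c) :
    permProb (fun σ : Perm (Fin (r * s)) ↦
      ∃ X, #X = l * s ∧ IsInvariant σ X ∧ ∀ Y ∈ cycles σ, Y ⊆ X → l ∣ #Y) ≤
      c / (r * s : ℕ) * Real.exp ((1 + Real.log (r * s : ℕ)) * c / (R + 1)) := by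
  have hpos : 0 < r * s := Nat.mul_pos (by lia) hs
  have hln : l * s ≤ r * s := Nat.mul_le_mul_right s hlr
  have hR' : (R : ℝ) + 1 ≤ l * c := mod_cast (Nat.succ_le_of_lt hR).trans hrc
  have hrsc : ((r * s : ℕ) : ℝ) ≤ c * (l * s : ℕ) := by
    have h := Nat.mul_le_mul_right s hrc
    exact mod_cast h.trans_eq (by ring)
  refine (permProb_isInvariant_and_dvd_le hl (Nat.mul_pos hl hs) hln).trans
    (mul_le_mul ?_ (Real.exp_le_exp.2 ?_) (Real.exp_pos _).le (by positivity))
  · rwa [div_le_div_iff₀ (by positivity) (by positivity), one_mul]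
  · rw [div_le_div_iff₀ (by positivity) (by positivity), mul_assoc, mul_comm (c : ℝ)]
    have hlog : Real.log (l * s : ℕ) ≤ Real.log (r * s : ℕ) :=
      Real.log_le_log (by positivity) (mod_cast hln)
    exact mul_le_mul (by linarith) hR' (by positivity) (by positivity)

lemma permProb_large_blocks_le (hn : 1 ≤ n) :
    permProb (fun σ : Perm (Fin n) ↦ ∃ s, s ∣ n ∧ S < s ∧ R < n / s ∧ ∃ l ≤ n / s, n / s ≤ l * c ∧
      ∃ X, #X = l * s ∧ IsInvariant σ X ∧ ∀ Y ∈ cycles σ, Y ⊆ X → l ∣ #Y) ≤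
      ((n : ℝ) / (S + 1)) ^ 2 * (c / n * Real.exp ((1 + Real.log n) * c / (R + 1))) := by
  let T := {i ∈ Icc 1 (n / (S + 1)) ×ˢ Icc 1 (n / (S + 1)) |
    i.1 ∣ n ∧ R < i.1 ∧ i.2 ≤ i.1 ∧ i.1 ≤ i.2 * c}
  suffices hpair : ∀ i ∈ T, permProb (fun σ : Perm (Fin n) ↦
      ∃ X, #X = i.2 * (n / i.1) ∧ IsInvariant σ X ∧ ∀ Y ∈ cycles σ, Y ⊆ X → i.2 ∣ #Y) ≤
      c / n * Real.exp ((1 + Real.log n) * c / (R + 1)) by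
    refine (permProb_mono ?_).trans ((permProb_exists_le_card_mul hpair).trans ?_)
    · rintro σ ⟨s, hsn, hS, hR, l, hl, hlc, hX⟩
      have hr : n / s ≤ n / (S + 1) := Nat.div_le_div_left hS S.succ_pos
      have hl0 : l ≠ 0 := by rintro rfl; lia
      refine ⟨(n / s, l), ?_, by rwa [Nat.div_div_self hsn (by lia)]⟩
      simp only [T, mem_filter, mem_product, mem_Icc]
      exact ⟨⟨⟨by lia, hr⟩, by lia, hl.trans hr⟩, Nat.div_dvd_of_dvd hsn, hR, hl, hlc⟩
    · have hT : (#T : ℝ) ≤ (n / (S + 1) : ℕ) ^ 2 := mod_cast card_filter_Icc_product_le _ _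
      have hdiv : ((n / (S + 1) : ℕ) : ℝ) ≤ n / (S + 1) := mod_cast Nat.cast_div_le
      gcongr
      exact hT.trans (by gcongr)
  · rintro ⟨r, l⟩ hi
    simp only [T, mem_filter, mem_product, mem_Icc] at hi ⊢
    obtain ⟨⟨⟨hr, -⟩, hl, -⟩, ⟨s, rfl⟩, hR, hlr, hrc⟩ := hi
    rw [Nat.mul_div_cancel_left s hr]
    exact permProb_isInvariant_mul_and_dvd_le (Nat.pos_of_ne_zero (by rintro rfl; lia)) hl hlr hR
      hrc

open scoped Classical in
lemma permProb_forall_not_isPrimePow_dvd_le (hn : 1 ≤ n) :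
    permProb (fun σ : Perm (Fin n) ↦ ∀ X ∈ cycles σ,
      ¬ (16 * #X ^ 2 < n ∧ ∃ q, IsPrimePow q ∧ Q ≤ q ∧ q ∣ #X)) ≤
      Real.exp (1 - ∑ l ∈ Icc 1 n with
        16 * l ^ 2 < n ∧ ∃ q, IsPrimePow q ∧ Q ≤ q ∧ q ∣ l, (1 : ℝ) / l) :=
  permProb_card_notMem_le {l | 16 * l ^ 2 < n ∧ ∃ q, IsPrimePow q ∧ Q ≤ q ∧ q ∣ l} hn

open scoped Classical in
lemma permProb_not_isTypical_le {t u : ℝ} (ht : 1 ≤ t) (hu : 0 < u) (hu1 : u ≤ 1) (hn : 1 ≤ n)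
    (hQ : 1 ≤ Q) :
    permProb (fun σ : Perm (Fin n) ↦ ¬ IsTypical σ c R Q S) ≤
      t * Real.exp t * (n : ℝ) ^ (t - 1) * t ^ (-((c + 1 : ℕ) : ℝ)) +
      ((R : ℝ) ^ 2 * ((u * Real.exp u * ((n : ℝ) / R) ^ (u - 1)) ^ 2 * u ^ (-(c : ℝ))) +
      (2 * Real.log n * Real.exp (1 - (Real.log n - (1 + Real.log (Q * S : ℕ))) / 2) +
      (2 / Q * (1 + Real.log n) ^ 2 +
      (((n : ℝ) / (S + 1)) ^ 2 * (c / n * Real.exp ((1 + Real.log n) * c / (R + 1))) +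
      Real.exp (1 - ∑ l ∈ Icc 1 n with
        16 * l ^ 2 < n ∧ ∃ q, IsPrimePow q ∧ Q ≤ q ∧ q ∣ l, (1 : ℝ) / l))))) := by
  refine (permProb_mono fun σ hσ ↦ ?_).trans
    (permProb_or_le (permProb_le_card_cycles_le (c + 1 : ℕ) ht hn)
    (permProb_or_le (permProb_few_blocks_le hu hu1 hn)
    (permProb_or_le (permProb_exists_prime_le hn (Q * S))
    (permProb_or_le (permProb_common_divisor_le hQ n)
    (permProb_or_le (permProb_large_blocks_le hn)
      (permProb_forall_not_isPrimePow_dvd_le hn))))))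
  by_contra! ⟨hcycles, hfew, hprime, hdvd, hlarge, hpow⟩
  have hc : #(cycles σ) ≤ c := Nat.lt_succ_iff.1 (mod_cast hcycles)
  have hcard := Fintype.card_fin n
  refine hσ ⟨hc, ?_, ?_, ?_, ?_, ?_⟩
  · intro r hrR hrn l hl hlr X hinv hX
    rw [hcard] at hrn hX
    exact hfew hc r hrR hrn l hl hlr X hX hinv
  · intro p hp hpn
    rw [hcard] at hpn
    exact hprime p (Nat.mem_primeFactors.2 ⟨hp, hpn, by lia⟩)
  · exact fun X hX Y hY hne q hq hqX hqY ↦ hdvd X hX Y hY hne q hq hqX hqY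
  · simp only [hcard]
    exact fun s hsn hS hR l hl hlc X hinv hX ↦ hlarge s hsn hS hR l hl hlc X hX hinv
  · obtain ⟨X, hX, hXpow⟩ := hpow
    exact ⟨X, hX, hcard.symm ▸ hXpow⟩

end AtypicalPermutations

section Parameters

/-- The parameter `c` of `IsTypical`: a bound on the number of cycles. It exceeds the mean
number `log n` of cycles by a factor for which the large-deviation bound beats `n ^ (-2 / 25)`. -/
noncomputable def cycleBound (n : ℕ) : ℕ := ⌊1.44 * Real.log n⌋₊

/-- The parameter `R` of `IsTypical`: a block system counts as having few blocks when it has at most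
this many. -/
noncomputable def blockCountBound (n : ℕ) : ℕ := ⌊(n : ℝ) ^ (0.002 : ℝ)⌋₊

/-- The parameter `Q` of `IsTypical`: common divisors of cycle lengths stay below it, while a
prime power dividing some short cycle length reaches it. -/
noncomputable def divisorBound (n : ℕ) : ℕ := ⌈(n : ℝ) ^ (0.081 : ℝ)⌉₊

/-- The parameter `S` of `IsTypical`: blocks larger than this are excluded by counting invariant
unions of blocks. -/
noncomputable def blockSizeBound (n : ℕ) : ℕ := ⌊(n : ℝ) ^ (0.6 : ℝ)⌋₊

variable {n : ℕ}

lemma cycleBound_le (n : ℕ) : (cycleBound n : ℝ) ≤ 1.44 * Real.log n :=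
  Nat.floor_le (mul_nonneg (by norm_num) (Real.log_natCast_nonneg n))

lemma le_cycleBound_add_one (n : ℕ) : 1.44 * Real.log n ≤ (cycleBound n + 1 : ℕ) :=
  mod_cast (Nat.lt_floor_add_one _).le

lemma blockCountBound_le (n : ℕ) : (blockCountBound n : ℝ) ≤ (n : ℝ) ^ (0.002 : ℝ) :=
  Nat.floor_le (by positivity)

lemma le_blockCountBound_add_one (n : ℕ) : (n : ℝ) ^ (0.002 : ℝ) ≤ blockCountBound n + 1 :=
  (Nat.lt_floor_add_one _).le

lemma le_divisorBound (n : ℕ) : (n : ℝ) ^ (0.081 : ℝ) ≤ divisorBound n :=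
  Nat.le_ceil _

lemma one_le_divisorBound (hn : 1 ≤ n) : 1 ≤ divisorBound n :=
  Nat.ceil_pos.2 (by positivity)

lemma divisorBound_le (hn : 1 ≤ n) : (divisorBound n : ℝ) ≤ 2 * (n : ℝ) ^ (0.081 : ℝ) := by
  have hone : (1 : ℝ) ≤ (n : ℝ) ^ (0.081 : ℝ) := Real.one_le_rpow (mod_cast hn) (by norm_num)
  have hceil : (divisorBound n : ℝ) < (n : ℝ) ^ (0.081 : ℝ) + 1 :=
    Nat.ceil_lt_add_one (by positivity)
  linarith

lemma blockSizeBound_le (n : ℕ) : (blockSizeBound n : ℝ) ≤ (n : ℝ) ^ (0.6 : ℝ) :=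
  Nat.floor_le (by positivity)

lemma le_blockSizeBound_add_one (n : ℕ) : (n : ℝ) ^ (0.6 : ℝ) ≤ blockSizeBound n + 1 :=
  (Nat.lt_floor_add_one _).le

lemma rpow_mul_log {a x : ℝ} (ha : 0 < a) (hx : 0 < x) (b : ℝ) :
    a ^ (b * Real.log x) = x ^ (b * Real.log a) := by
  rw [Real.rpow_def_of_pos ha, Real.rpow_def_of_pos hx]
  ring_nf

lemma mul_rpow_le_rpow {x K a b d : ℝ} (hx : 1 ≤ x) (hK : K ≤ x ^ a) (h : a + b ≤ d) :
    K * x ^ b ≤ x ^ d :=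
  calc K * x ^ b ≤ x ^ a * x ^ b := by gcongr
    _ = x ^ (a + b) := (Real.rpow_add (by positivity) a b).symm
    _ ≤ x ^ d := Real.rpow_le_rpow_of_exponent_le hx h

lemma rpow_neg_cycleBound_add_one_le (hn : 1 ≤ n) :
    (1.44 : ℝ) ^ (-((cycleBound n + 1 : ℕ) : ℝ)) ≤ (n : ℝ) ^ (-0.52416 : ℝ) :=
  calc (1.44 : ℝ) ^ (-((cycleBound n + 1 : ℕ) : ℝ)) ≤ 1.44 ^ (-1.44 * Real.log n) :=
        Real.rpow_le_rpow_of_exponent_le (by norm_num) (by linarith [le_cycleBound_add_one n])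
    _ = (n : ℝ) ^ (-1.44 * Real.log 1.44) := rpow_mul_log (by norm_num) (by positivity) _
    _ ≤ (n : ℝ) ^ (-0.52416 : ℝ) := Real.rpow_le_rpow_of_exponent_le (mod_cast hn)
        (by linarith [le_log_one_point_four_four])

lemma rpow_neg_cycleBound_le (hn : 1 ≤ n) :
    (0.72 : ℝ) ^ (-(cycleBound n : ℝ)) ≤ (n : ℝ) ^ (0.473328 : ℝ) :=
  calc (0.72 : ℝ) ^ (-(cycleBound n : ℝ)) ≤ 0.72 ^ (-1.44 * Real.log n) :=
        Real.rpow_le_rpow_of_exponent_ge (by norm_num) (by norm_num) (by linarith [cycleBound_le n])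
    _ = (n : ℝ) ^ (-1.44 * Real.log 0.72) := rpow_mul_log (by norm_num) (by positivity) _
    _ ≤ (n : ℝ) ^ (0.473328 : ℝ) := Real.rpow_le_rpow_of_exponent_le (mod_cast hn)
        (by linarith [le_log_zero_point_seven_two])

lemma div_blockCountBound_rpow_le (hn : 1 ≤ n) (hR : 1 ≤ blockCountBound n) :
    ((n : ℝ) / blockCountBound n) ^ (0.72 - 1 : ℝ) ≤ (n : ℝ) ^ (-0.27944 : ℝ) := by
  have hn0 : (0 : ℝ) < n := mod_cast hn
  have hR0 : (0 : ℝ) < blockCountBound n := by positivity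
  have hdiv : (n : ℝ) ^ (0.998 : ℝ) ≤ n / blockCountBound n := by
    rw [le_div_iff₀ hR0]
    calc _ ≤ (n : ℝ) ^ (0.998 : ℝ) * (n : ℝ) ^ (0.002 : ℝ) := by
          gcongr
          exact blockCountBound_le n
      _ = n := by
          rw [← Real.rpow_add hn0]
          norm_num
  calc _ ≤ ((n : ℝ) ^ (0.998 : ℝ)) ^ (0.72 - 1 : ℝ) :=
        Real.rpow_le_rpow_of_nonpos (by positivity) hdiv (by norm_num)
    _ = _ := by
        rw [← Real.rpow_mul hn0.le]
        norm_num

lemma log_divisorBound_mul_blockSizeBound_le (hn : 1 ≤ n) :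
    Real.log (divisorBound n * blockSizeBound n : ℕ) ≤ 1 + 0.681 * Real.log n := by
  have hn0 : (0 : ℝ) < n := mod_cast hn
  have hS : 1 ≤ blockSizeBound n :=
    (Nat.one_le_floor_iff _).2 (Real.one_le_rpow (mod_cast hn) (by norm_num))
  have hQS : ((divisorBound n * blockSizeBound n : ℕ) : ℝ) ≤ 2 * (n : ℝ) ^ (0.681 : ℝ) :=
    calc ((divisorBound n * blockSizeBound n : ℕ) : ℝ)
        ≤ 2 * (n : ℝ) ^ (0.081 : ℝ) * (n : ℝ) ^ (0.6 : ℝ) := by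
          push_cast
          gcongr
          · exact divisorBound_le hn
          · exact blockSizeBound_le n
      _ = 2 * (n : ℝ) ^ (0.681 : ℝ) := by
          rw [mul_assoc, ← Real.rpow_add hn0]
          norm_num
  have hpos : 0 < divisorBound n * blockSizeBound n := Nat.mul_pos (one_le_divisorBound hn) hS
  calc Real.log (divisorBound n * blockSizeBound n : ℕ)
      ≤ Real.log (2 * (n : ℝ) ^ (0.681 : ℝ)) := Real.log_le_log (mod_cast hpos) hQS
    _ = Real.log 2 + 0.681 * Real.log n := by
        rw [Real.log_mul two_ne_zero (by positivity), Real.log_rpow hn0]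
    _ ≤ 1 + 0.681 * Real.log n := by linarith [Real.log_two_lt_d9]

end Parameters

section Asymptotics

open Filter

lemma eventually_const_le_rpow {ε : ℝ} (hε : 0 < ε) (K : ℝ) :
    ∀ᶠ n : ℕ in atTop, K ≤ (n : ℝ) ^ ε := by
  simpa only [pow_zero, mul_one] using eventually_mul_one_add_log_pow_le_rpow hε K 0

lemma eventually_two_le_blockCountBound : ∀ᶠ n : ℕ in atTop, 2 ≤ blockCountBound n := by
  filter_upwards [eventually_const_le_rpow (ε := 0.002) (by norm_num) 2] with n hn
  exact Nat.le_floor (mod_cast hn)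

lemma eventually_cycleBound_lt_card_cycles_bound_le :
    ∀ᶠ n : ℕ in atTop,
      1.44 * Real.exp 1.44 * (n : ℝ) ^ (1.44 - 1 : ℝ) *
        1.44 ^ (-((cycleBound n + 1 : ℕ) : ℝ)) ≤ (n : ℝ) ^ (-(2 : ℝ) / 25) := by
  filter_upwards [eventually_const_le_rpow (ε := 0.004) (by norm_num) (1.44 * Real.exp 1.44),
    eventually_ge_atTop 1] with n hconst hn
  have hn1 : (1 : ℝ) ≤ n := mod_cast hn
  have hpow : 1.44 * Real.exp 1.44 * (n : ℝ) ^ (1.44 - 1 : ℝ) ≤ (n : ℝ) ^ (0.444 : ℝ) :=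
    mul_rpow_le_rpow hn1 hconst (by norm_num)
  calc _ ≤ 1.44 * Real.exp 1.44 * (n : ℝ) ^ (1.44 - 1 : ℝ) * (n : ℝ) ^ (-0.52416 : ℝ) := by
        gcongr
        exact rpow_neg_cycleBound_add_one_le hn
    _ ≤ _ := mul_rpow_le_rpow hn1 hpow (by norm_num)

lemma eventually_few_blocks_bound_le :
    ∀ᶠ n : ℕ in atTop,
      (blockCountBound n : ℝ) ^ 2 *
        ((0.72 * Real.exp 0.72 * ((n : ℝ) / blockCountBound n) ^ (0.72 - 1 : ℝ)) ^ 2 *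
          0.72 ^ (-(cycleBound n : ℝ))) ≤ (n : ℝ) ^ (-(2 : ℝ) / 25) := by
  filter_upwards [eventually_const_le_rpow (ε := 0.001) (by norm_num) ((0.72 * Real.exp 0.72) ^ 2),
    eventually_two_le_blockCountBound, eventually_ge_atTop 1] with n hconst hR hn
  have hn1 : (1 : ℝ) ≤ n := mod_cast hn
  have hn0 : (0 : ℝ) < n := by positivity
  have hsq (a : ℝ) : ((n : ℝ) ^ a) ^ 2 = (n : ℝ) ^ (a * 2) :=
    mod_cast (Real.rpow_mul_natCast hn0.le a 2).symm
  calc _ ≤ ((n : ℝ) ^ (0.002 : ℝ)) ^ 2 * ((0.72 * Real.exp 0.72 * (n : ℝ) ^ (-0.27944 : ℝ)) ^ 2 *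
        (n : ℝ) ^ (0.473328 : ℝ)) := by
        gcongr
        · exact blockCountBound_le n
        · exact div_blockCountBound_rpow_le hn (by lia)
        · exact rpow_neg_cycleBound_le hn
    _ = (0.72 * Real.exp 0.72) ^ 2 * (n : ℝ) ^ (-0.081552 : ℝ) := by
        rw [mul_pow _ (_ ^ _), hsq, hsq, mul_assoc, mul_left_comm, ← Real.rpow_add hn0,
          ← Real.rpow_add hn0]
        norm_num
    _ ≤ _ := mul_rpow_le_rpow hn1 hconst (by norm_num)

lemma eventually_common_prime_bound_le :
    ∀ᶠ n : ℕ in atTop,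
      2 * Real.log n *
        Real.exp (1 - (Real.log n - (1 + Real.log (divisorBound n * blockSizeBound n : ℕ))) / 2) ≤
      (n : ℝ) ^ (-(2 : ℝ) / 25) := by
  filter_upwards [eventually_mul_one_add_log_pow_le_rpow (ε := 0.01) (by norm_num)
    (2 * Real.exp 2) 1, eventually_ge_atTop 1] with n hlog hn
  have hn1 : (1 : ℝ) ≤ n := mod_cast hn
  rw [pow_one] at hlog
  calc _ ≤ 2 * (1 + Real.log n) * Real.exp (2 + Real.log n * (-0.1595)) := by
        gcongr
        · linarith
        · linarith [log_divisorBound_mul_blockSizeBound_le hn]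
    _ = 2 * Real.exp 2 * (1 + Real.log n) * (n : ℝ) ^ (-0.1595 : ℝ) := by
        rw [Real.exp_add, Real.rpow_def_of_pos (by positivity)]
        ring
    _ ≤ _ := mul_rpow_le_rpow hn1 hlog (by norm_num)

lemma eventually_common_divisor_bound_le :
    ∀ᶠ n : ℕ in atTop,
      2 / divisorBound n * (1 + Real.log n) ^ 2 ≤ (n : ℝ) ^ (-(2 : ℝ) / 25) := by
  filter_upwards [eventually_mul_one_add_log_pow_le_rpow (ε := 0.001) (by norm_num) 2 2,
    eventually_ge_atTop 1] with n hlog hn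
  have hn1 : (1 : ℝ) ≤ n := mod_cast hn
  calc _ ≤ 2 / (n : ℝ) ^ (0.081 : ℝ) * (1 + Real.log n) ^ 2 := by
        gcongr
        exact le_divisorBound n
    _ = 2 * (1 + Real.log n) ^ 2 * (n : ℝ) ^ (-0.081 : ℝ) := by
        rw [Real.rpow_neg (by positivity)]
        ring
    _ ≤ _ := mul_rpow_le_rpow hn1 hlog (by norm_num)

lemma eventually_large_blocks_bound_le :
    ∀ᶠ n : ℕ in atTop,
      ((n : ℝ) / (blockSizeBound n + 1)) ^ 2 * (cycleBound n / n *
        Real.exp ((1 + Real.log n) * cycleBound n / (blockCountBound n + 1))) ≤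
      (n : ℝ) ^ (-(2 : ℝ) / 25) := by
  filter_upwards [eventually_mul_one_add_log_pow_le_rpow (ε := 0.1) (by norm_num)
    (1.44 * Real.exp 1) 1, eventually_mul_one_add_log_pow_le_rpow (ε := 0.002) (by norm_num) 1.44 2,
    eventually_ge_atTop 1] with n hlog hlog2 hn
  have hn1 : (1 : ℝ) ≤ n := mod_cast hn
  have hn0 : (0 : ℝ) < n := by positivity
  have hc : (cycleBound n : ℝ) ≤ 1.44 * (1 + Real.log n) := by linarith [cycleBound_le n]
  have hexp : (1 + Real.log n) * cycleBound n / (blockCountBound n + 1) ≤ 1 := by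
    rw [div_le_one (by positivity)]
    calc _ ≤ (1 + Real.log n) * (1.44 * (1 + Real.log n)) := by gcongr
      _ = 1.44 * (1 + Real.log n) ^ 2 := by ring
      _ ≤ _ := hlog2.trans (le_blockCountBound_add_one n)
  have hsq : ((n : ℝ) ^ (-0.6 : ℝ)) ^ 2 = (n : ℝ) ^ (-1.2 : ℝ) := by
    rw [← Real.rpow_mul_natCast hn0.le]
    norm_num
  rw [pow_one] at hlog
  calc _ ≤ ((n : ℝ) / (n : ℝ) ^ (0.6 : ℝ)) ^ 2 * (1.44 * (1 + Real.log n) / n * Real.exp 1) := by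
        gcongr
        exact le_blockSizeBound_add_one n
    _ = 1.44 * Real.exp 1 * (1 + Real.log n) * ((n : ℝ) ^ (-0.6 : ℝ)) ^ 2 * (n : ℝ) ^ (1 : ℝ) := by
        rw [Real.rpow_neg hn0.le, Real.rpow_one]
        field_simp
    _ ≤ _ := mul_rpow_le_rpow (a := -1.1) hn1 (hsq ▸ mul_rpow_le_rpow hn1 hlog (by norm_num))
        (by norm_num)

open scoped Classical in
lemma eventually_short_cycle_bound_le :
    ∀ᶠ n : ℕ in atTop,
      Real.exp (1 - ∑ l ∈ Icc 1 n with
        16 * l ^ 2 < n ∧ ∃ q, IsPrimePow q ∧ divisorBound n ≤ q ∧ q ∣ l, (1 : ℝ) / l) ≤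
      (n : ℝ) ^ (-(2 : ℝ) / 25) := by
  filter_upwards [eventually_const_le_rpow (ε := 0.01) (by norm_num) (Real.exp 57),
    eventually_ge_atTop 25] with n hconst hn
  have hn1 : 1 ≤ n := by lia
  have hsum := le_sum_one_div_sq_lt_and_exists_isPrimePow_dvd hn (one_le_divisorBound hn1)
    (divisorBound_le hn1)
  calc _ ≤ Real.exp (57 + Real.log n * (-0.0975)) := Real.exp_le_exp.2 (by linarith)
    _ = Real.exp 57 * (n : ℝ) ^ (-0.0975 : ℝ) := by
        rw [Real.exp_add, Real.rpow_def_of_pos (by positivity)]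
    _ ≤ _ := mul_rpow_le_rpow (mod_cast hn1) hconst (by norm_num)

lemma eventually_permProb_not_isTypical_le :
    ∀ᶠ n : ℕ in atTop,
      permProb (fun σ : Perm (Fin n) ↦ ¬ IsTypical σ (cycleBound n) (blockCountBound n)
        (divisorBound n) (blockSizeBound n)) ≤ 6 * (n : ℝ) ^ (-(2 : ℝ) / 25) := by
  filter_upwards [eventually_cycleBound_lt_card_cycles_bound_le, eventually_few_blocks_bound_le,
    eventually_common_prime_bound_le, eventually_common_divisor_bound_le,
    eventually_large_blocks_bound_le, eventually_short_cycle_bound_le, eventually_ge_atTop 1]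
    with n hcycles hfew hprime hdvd hlarge hshort hn
  have h := permProb_not_isTypical_le (c := cycleBound n) (R := blockCountBound n)
    (S := blockSizeBound n) (t := 1.44) (u := 0.72) (by norm_num) (by norm_num) (by norm_num) hn
    (one_le_divisorBound hn)
  linarith

end Asymptotics

lemma one_le_mul_rpow {n : ℕ} {C : ℝ} (hn : 1 ≤ n) (hC : (n : ℝ) ≤ C) :
    1 ≤ C * (n : ℝ) ^ (-(2 : ℝ) / 25) :=
  calc (1 : ℝ) ≤ (n : ℝ) ^ ((1 : ℝ) + -2 / 25) :=
        Real.one_le_rpow (mod_cast hn) (by norm_num)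
    _ = n * (n : ℝ) ^ (-(2 : ℝ) / 25) := by
        rw [Real.rpow_add (mod_cast hn), Real.rpow_one]
    _ ≤ C * (n : ℝ) ^ (-(2 : ℝ) / 25) := by gcongr

end InvariableGeneration

open InvariableGeneration

theorem stmt_1 :
    ∃ C : ℝ, 0 < C ∧
      ∀ n : ℕ, 5 ≤ n →
        ∃ x : alternatingGroup (Fin n),
          (Odd n → (x : Equiv.Perm (Fin n)).IsCycle ∧
            (x : Equiv.Perm (Fin n)).support.card = n) ∧
          (Even n → ∃ c d : Equiv.Perm (Fin n), c.IsCycle ∧ d.IsCycle ∧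
            c.support.card = n / 2 ∧ d.support.card = n / 2 ∧ c.Disjoint d ∧
            (x : Equiv.Perm (Fin n)) = c * d) ∧
          (Nat.card {y : alternatingGroup (Fin n) // InvGen x y} : ℝ) ≥
            (1 - C * (n : ℝ) ^ (-(2 : ℝ) / 25)) *
              Nat.card (alternatingGroup (Fin n)) := by
  obtain ⟨N, hN⟩ := Filter.eventually_atTop.1
    (eventually_permProb_not_isTypical_le.and eventually_two_le_blockCountBound)
  refine ⟨12 + N, by positivity, fun n hn ↦ ?_⟩
  obtain ⟨x, hodd, heven, k, m, hk, hkm, hx⟩ := exists_isCycle_or_mul_isCycle (n := n) (by lia)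
  refine ⟨x, hodd, heven, ?_⟩
  rcases le_total N n with hNn | hnN
  · obtain ⟨hatypical, hR⟩ := hN n hNn
    have : Nontrivial (Fin n) := Fin.nontrivial_iff_two_le.2 (by lia)
    refine ge_trans (one_sub_two_mul_permProb_mul_card_le (P := InvGen x)
      (T := fun σ ↦ IsTypical σ (cycleBound n) (blockCountBound n) (divisorBound n)
        (blockSizeBound n))
      fun y hy ↦ hy.invGen hR hk (hkm.trans (Fintype.card_fin n).symm) hx) ?_
    have hpow : 0 ≤ N * (n : ℝ) ^ (-(2 : ℝ) / 25) := by positivity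
    gcongr ?_ * _
    linarith
  · have hC : (n : ℝ) ≤ 12 + N := mod_cast (by lia : n ≤ 12 + N)
    have htrivial := one_le_mul_rpow (by lia) hC
    exact (mul_nonpos_of_nonpos_of_nonneg (by linarith) (Nat.cast_nonneg _)).trans
      (Nat.cast_nonneg _)
end

section
/- There exists a constant C > 0 such that for every finite field F, writing q = |F|, d = gcd(2, q−1) and G = PSL₂(F), there exist elements x₁, x₂ ∈ G with x₁ of order (q−1)/d and x₂ of order (q+1)/d such that the number of y ∈ G for which {x₁, y} invariably generates G or {x₂, y} invariably generates G is at least (1 − C/q) · |G|. -/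
/-- The projective special linear group `PSL₂(F) = SL₂(F) / Z(SL₂(F))`. -/
abbrev PSL2 (F : Type*) [Field F] :=
  Matrix.SpecialLinearGroup (Fin 2) F ⧸
    Subgroup.center (Matrix.SpecialLinearGroup (Fin 2) F)

/-!
Fix `t : SL(2, F)`. The function `g ↦ ⁅g, t⁆.det`, where `⁅g, t⁆ = g * t - t * g`, is constant on
the double cosets of the subgroup `T` generated by `t`, and `⁅g * t * g⁻¹, t⁆.det` is a quadratic
polynomial in `⁅g, t⁆.det`. When `⁅g * t * g⁻¹, t⁆.det ≠ 0`, `T` and its conjugate by `g` meet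
inside the centre, so the double coset of `g` has at least `|T| ^ 2 / 2` elements. If a subgroup
`H` contains `t` and an element `y` for which `⁅y, t⁆.det ≠ 0`, then, outside a few traces of `y`,
the conjugates of the elements of `T` by `y` or by `y ^ 2` take at least `|T| / 4` values of the
invariant, all but two of which contribute such a double coset. Hence `|H|` is at least about
`|T| ^ 3 / 8`, and for `|T|` close to `q` the index of `H` is at most `8`; since `PSL₂(F)` is simple
and large, the image of `H` is everything.

By Fricke's identity, `⁅y, t⁆.det = 0` is impossible when exactly one of `t` and `y` is
diagonalizable over `F` and neither has trace `± 2`. Taking `x₁` to be the image of a generator of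
the split torus and `x₂` that of the nonsplit one, every `y` is therefore good for one of them,
apart from those of trace `0`, `± 1` or `± 2`. Each trace is attained at most `2 * q ^ 2` times.
-/

open scoped MatrixGroups

section Groups

variable {G : Type*} [Group G]

lemma card_mul_card_eq_ncard_doubleCoset_mul (H K : Subgroup G) (g : G) :
    Nat.card H * Nat.card K =
      (DoubleCoset.doubleCoset g (H : Set G) K).ncard *
        Nat.card (H ⊓ K.map (MulAut.conj g).toMonoidHom : Subgroup G) := by
  let x : G ⧸ K := QuotientGroup.mk g
  have stabilizer_eq :
      MulAction.stabilizer H x = (K.map (MulAut.conj g).toMonoidHom).subgroupOf H := by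
    have := MulAction.stabilizer_smul_eq_stabilizer_map_conj g ((1 : G) : G ⧸ K)
    rw [MulAction.stabilizer_quotient, MulAction.Quotient.smul_coe, smul_eq_mul, mul_one] at this
    rw [← this]
    rfl
  have preimage_orbit : QuotientGroup.mk ⁻¹' MulAction.orbit H x =
      DoubleCoset.doubleCoset g (H : Set G) K := by
    ext a
    simp only [Set.mem_preimage, MulAction.mem_orbit_iff, DoubleCoset.mem_doubleCoset]
    constructor
    · rintro ⟨h, hh⟩
      exact ⟨h, h.2, (h * g)⁻¹ * a, QuotientGroup.eq.mp hh, by group⟩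
    · rintro ⟨h, hh, k, hk, rfl⟩
      exact ⟨⟨h, hh⟩, QuotientGroup.eq.mpr (by simpa [mul_assoc] using hk)⟩
  have card_stabilizer : Nat.card (MulAction.stabilizer H x) =
      Nat.card (H ⊓ K.map (MulAut.conj g).toMonoidHom : Subgroup G) := by
    rw [stabilizer_eq, ← Subgroup.inf_subgroupOf_left]
    exact Nat.card_congr (Subgroup.subgroupOfEquivOfLe inf_le_left).toEquiv
  have card_orbit := Nat.card_congr (MulAction.orbitProdStabilizerEquivGroup H x)
  have card_preimage := Nat.card_congr
    (QuotientGroup.preimageMkEquivSubgroupProdSet K (MulAction.orbit H x))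
  rw [preimage_orbit, Nat.card_prod, Nat.card_coe_set_eq] at card_preimage
  rw [← card_orbit, Nat.card_prod, card_stabilizer, card_preimage]
  ring

lemma eq_top_of_factorial_index_lt_card [Finite G] [IsSimpleGroup G] {H : Subgroup G}
    (h : H.index.factorial < Nat.card G) : H = ⊤ := by
  classical
  rcases H.normalCore_normal.eq_bot_or_eq_top with hbot | htop
  · rw [H.normalCore_eq_ker, MonoidHom.ker_eq_bot_iff] at hbot
    have hle := Nat.card_le_card_of_injective _ hbot
    rw [Nat.card_perm] at hle
    exact absurd hle h.not_ge
  · exact top_le_iff.mp (htop ▸ H.normalCore_le)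

end Groups

section DetLie

section CommRing

variable {n R : Type*} [Fintype n] [DecidableEq n] [CommRing R]

lemma det_lie_smul_one_add_smul (x z : R) (A B : Matrix n n R) :
    ⁅x • 1 + z • A, B⁆.det = z ^ Fintype.card n * ⁅A, B⁆.det := by
  have : ⁅x • 1 + z • A, B⁆ = z • ⁅A, B⁆ := by
    simp [Ring.lie_def, add_mul, mul_add, smul_sub]
  rw [this, Matrix.det_smul]

lemma det_lie_mul_mul {A B S U : Matrix n n R} (hS : Commute S B) (hU : Commute U B) :
    ⁅S * A * U, B⁆.det = S.det * ⁅A, B⁆.det * U.det := by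
  have : ⁅S * A * U, B⁆ = S * ⁅A, B⁆ * U := by
    simp only [Ring.lie_def, mul_sub, sub_mul, mul_assoc, hU.eq]
    rw [← mul_assoc B S, ← hS.eq, mul_assoc]
  rw [this, Matrix.det_mul, Matrix.det_mul]

lemma not_commute_of_det_lie_ne_zero [Nonempty n] {A B : Matrix n n R}
    (h : ⁅A, B⁆.det ≠ 0) : ¬Commute A B := by
  intro hAB
  rw [hAB.lie_eq] at h
  simp at h

lemma det_lie_fin_two_symm (A B : Matrix (Fin 2) (Fin 2) R) : ⁅A, B⁆.det = ⁅B, A⁆.det := by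
  rw [Ring.lie_def, Ring.lie_def, ← neg_sub, Matrix.det_neg, Fintype.card_fin, neg_one_sq, one_mul]

/-- For `A` and `B` of determinant one `⁅A, B⁆.det = 2 - (A * B * A⁻¹ * B⁻¹).trace`, so this is
Fricke's trace identity. -/
lemma det_lie_fin_two (A B : Matrix (Fin 2) (Fin 2) R) :
    ⁅A, B⁆.det = 4 * A.det * B.det - A.trace ^ 2 * B.det - B.trace ^ 2 * A.det
      - (A * B).trace ^ 2 + A.trace * B.trace * (A * B).trace := by
  simp only [Ring.lie_def, Matrix.det_fin_two, Matrix.trace_fin_two, Matrix.sub_apply,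
    Matrix.mul_apply, Fin.sum_univ_two]
  ring

lemma det_lie_mul_mul_adjugate (A B : Matrix (Fin 2) (Fin 2) R) :
    ⁅A * B * A.adjugate, B⁆.det =
      ⁅A, B⁆.det * ((4 * B.det - B.trace ^ 2) * A.det - ⁅A, B⁆.det) := by
  simp only [Ring.lie_def, Matrix.det_fin_two, Matrix.trace_fin_two, Matrix.adjugate_fin_two,
    Matrix.sub_apply, Matrix.mul_apply, Fin.sum_univ_two, Matrix.of_apply, Matrix.cons_val',
    Matrix.cons_val_zero, Matrix.cons_val_one, Matrix.cons_val_fin_one]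
  ring

lemma det_lie_conj (g t : SL(2, R)) :
    ⁅(g * t * g⁻¹).1, t.1⁆.det =
      ⁅g.1, t.1⁆.det * (4 - t.1.trace ^ 2 - ⁅g.1, t.1⁆.det) := by
  simp [det_lie_mul_mul_adjugate]

lemma sq_eq_neg_one_add_trace_smul (g : SL(2, R)) :
    (g ^ 2).1 = (-1 : R) • 1 + g.1.trace • g.1 := by
  cases subsingleton_or_nontrivial R
  · exact Subsingleton.elim _ _
  have cayley_hamilton := g.1.aeval_self_charpoly
  rw [Matrix.charpoly_fin_two, g.det_coe] at cayley_hamilton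
  simp only [map_add, map_sub, map_mul, map_pow, Polynomial.aeval_X, Polynomial.aeval_C,
    map_one, Algebra.algebraMap_eq_smul_one, smul_mul_assoc, one_mul] at cayley_hamilton
  rw [Matrix.SpecialLinearGroup.coe_pow, neg_one_smul, ← sub_eq_zero, ← cayley_hamilton]
  abel

lemma inv_eq_trace_smul_one_sub (g : SL(2, R)) : (g⁻¹).1 = g.1.trace • 1 - g.1 := by
  rw [Matrix.SpecialLinearGroup.coe_inv, Matrix.adjugate_fin_two]
  ext i j
  fin_cases i <;> fin_cases j <;> simp [Matrix.trace_fin_two]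

lemma eq_or_eq_neg_inv_of_eq_smul_one_add [NoZeroDivisors R] {g h : SL(2, R)} {c : R}
    (hgh : g.1 = c • 1 + h.1) : g = h ∨ g = -h⁻¹ := by
  have det_eq : c * (c + h.1.trace) = 0 := by
    have hg := g.det_coe
    have hh := h.det_coe
    rw [hgh] at hg
    simp only [Matrix.det_fin_two, Matrix.trace_fin_two, Matrix.add_apply, Matrix.smul_apply,
      Matrix.one_apply_eq, Matrix.one_apply_ne zero_ne_one, Matrix.one_apply_ne one_ne_zero,
      smul_eq_mul] at hg hh ⊢
    linear_combination hg - hh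
  rcases mul_eq_zero.mp det_eq with hc | hc
  · exact .inl (Subtype.ext (by simpa [hc] using hgh))
  · refine .inr (Subtype.ext ?_)
    rw [hgh, eq_neg_of_add_eq_zero_left hc, Matrix.SpecialLinearGroup.coe_neg,
      inv_eq_trace_smul_one_sub, neg_smul]
    abel

lemma eq_neg_or_inv_of_eq_smul_one_add_smul [NoZeroDivisors R] {g h : SL(2, R)}
    {A : Matrix (Fin 2) (Fin 2) R} {x x' z z' : R} (hg : g.1 = x • 1 + z • A)
    (hh : h.1 = x' • 1 + z' • A) (hz : z ^ 2 = z' ^ 2) :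
    g = h ∨ g = -h⁻¹ ∨ g = -h ∨ g = h⁻¹ := by
  rcases sq_eq_sq_iff_eq_or_eq_neg.mp hz with rfl | rfl
  · have : g.1 = (x - x') • 1 + h.1 := by rw [hg, hh]; module
    rcases eq_or_eq_neg_inv_of_eq_smul_one_add this with h | h <;> simp [h]
  · have : g.1 = (x + x') • 1 + (-h).1 := by
      rw [hg, Matrix.SpecialLinearGroup.coe_neg, hh]; module
    rcases eq_or_eq_neg_inv_of_eq_smul_one_add this with rfl | rfl
    · simp
    · simp

end CommRing

section Field

variable {F : Type*} [Field F]

lemma det_lie_conj_ne_zero_or_sq {g t : SL(2, F)} (h : ⁅g.1, t.1⁆.det ≠ 0)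
    (h₀ : g.1.trace ≠ 0) (h₁ : g.1.trace ^ 2 ≠ 1) :
    ⁅(g * t * g⁻¹).1, t.1⁆.det ≠ 0 ∨ ⁅(g ^ 2 * t * (g ^ 2)⁻¹).1, t.1⁆.det ≠ 0 := by
  have hsq : ⁅(g ^ 2).1, t.1⁆.det = g.1.trace ^ 2 * ⁅g.1, t.1⁆.det := by
    rw [sq_eq_neg_one_add_trace_smul, det_lie_smul_one_add_smul, Fintype.card_fin]
  simp only [det_lie_conj, hsq]
  generalize ⁅g.1, t.1⁆.det = c at *
  generalize 4 - t.1.trace ^ 2 = e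
  generalize g.1.trace = τ at *
  by_cases hc : e = c
  · right
    subst hc
    have : 1 - τ ^ 2 ≠ 0 := sub_ne_zero.mpr h₁.symm
    rw [show e - τ ^ 2 * e = (1 - τ ^ 2) * e by ring]
    positivity
  · left
    exact mul_ne_zero h (sub_ne_zero.mpr hc)

end Field

end DetLie

section Centralizer

variable {F : Type*} [Field F]

lemma exists_eq_smul_one_add_smul_of_commute {A M : Matrix (Fin 2) (Fin 2) F}
    (hA : ∀ a : F, A ≠ a • 1) (hM : Commute M A) : ∃ x z : F, M = x • 1 + z • A := by
  have entry (i j) : (M * A) i j = (A * M) i j := by rw [hM.eq]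
  simp only [Matrix.mul_apply, Fin.sum_univ_two] at entry
  have h₀₀ := entry 0 0
  have h₀₁ := entry 0 1
  have h₁₀ := entry 1 0
  suffices ∃ z, M 0 1 = z * A 0 1 ∧ M 1 0 = z * A 1 0 ∧
      M 0 0 - M 1 1 = z * (A 0 0 - A 1 1) by
    obtain ⟨z, hz₀₁, hz₁₀, hz⟩ := this
    refine ⟨M 0 0 - z * A 0 0, z, ?_⟩
    ext i j
    fin_cases i <;> fin_cases j <;> simp [hz₀₁, hz₁₀]
    linear_combination -hz
  by_cases hb : A 0 1 = 0
  · by_cases hc : A 1 0 = 0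
    · have hd : A 0 0 - A 1 1 ≠ 0 := fun hd ↦ hA (A 0 0) <| by
        ext i j
        fin_cases i <;> fin_cases j <;> simp [hb, hc, sub_eq_zero.mp hd]
      refine ⟨(M 0 0 - M 1 1) / (A 0 0 - A 1 1), ?_, ?_, ?_⟩ <;> field_simp <;> grind
    · refine ⟨M 1 0 / A 1 0, ?_, ?_, ?_⟩ <;> field_simp <;> grind
  · refine ⟨M 0 1 / A 0 1, ?_, ?_, ?_⟩ <;> field_simp <;> grind

lemma ne_smul_one_of_not_commute {A B : Matrix (Fin 2) (Fin 2) F} (h : ¬Commute A B) (b : F) :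
    B ≠ b • 1 := by
  rintro rfl
  exact h ((Commute.one_right A).smul_right b)

lemma mem_center_of_eq_smul_one {n R : Type*} [Fintype n] [DecidableEq n] [CommRing R]
    {g : Matrix.SpecialLinearGroup n R} {c : R} (hg : g.1 = c • 1) :
    g ∈ Subgroup.center (Matrix.SpecialLinearGroup n R) :=
  Subgroup.mem_center_iff.mpr fun h ↦ Subtype.ext (by simp [hg])

lemma mem_center_of_commute_of_commute {A B : Matrix (Fin 2) (Fin 2) F} {g : SL(2, F)}
    (hAB : ¬Commute A B) (hA : Commute g.1 A) (hB : Commute g.1 B) :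
    g ∈ Subgroup.center SL(2, F) := by
  obtain ⟨a, ha⟩ : ∃ a : F, g.1 = a • 1 := by
    by_contra! hg
    obtain ⟨x, z, rfl⟩ := exists_eq_smul_one_add_smul_of_commute hg hA.symm
    obtain ⟨x', z', rfl⟩ := exists_eq_smul_one_add_smul_of_commute hg hB.symm
    exact hAB (by simp [commute_iff_eq, add_mul, mul_add, smul_smul, mul_comm, add_add_add_comm])
  exact mem_center_of_eq_smul_one ha

lemma card_center_specialLinearGroup_le (n R : Type*) [Fintype n] [DecidableEq n] [Nonempty n]
    [CommRing R] [IsDomain R] :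
    Nat.card (Subgroup.center (Matrix.SpecialLinearGroup n R)) ≤ Fintype.card n := by
  have : NeZero (Fintype.card n) := ⟨Fintype.card_ne_zero⟩
  rw [Nat.card_congr (Matrix.SpecialLinearGroup.center_equiv_rootsOfUnity'
    (Classical.arbitrary n)).toEquiv]
  exact card_rootsOfUnity R _

end Centralizer

section Counting

variable {F : Type*} [Field F] {t : SL(2, F)}

lemma commute_coe_of_mem_zpowers {s : SL(2, F)} (hs : s ∈ Subgroup.zpowers t) :
    Commute s.1 t.1 := by
  obtain ⟨k, rfl⟩ := hs
  exact congrArg Subtype.val ((Commute.refl t).zpow_left k).eq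

lemma det_lie_eq_of_mem_doubleCoset {g h : SL(2, F)}
    (hh : h ∈ DoubleCoset.doubleCoset g (Subgroup.zpowers t : Set SL(2, F))
      (Subgroup.zpowers t)) :
    ⁅h.1, t.1⁆.det = ⁅g.1, t.1⁆.det := by
  obtain ⟨s, hs, u, hu, rfl⟩ := DoubleCoset.mem_doubleCoset.mp hh
  have := det_lie_mul_mul (A := g.1) (commute_coe_of_mem_zpowers hs)
    (commute_coe_of_mem_zpowers hu)
  simpa using this

lemma eq_neg_or_inv_of_det_lie_conj_eq {y s u : SL(2, F)}
    (h : ⁅(y * t * y⁻¹).1, t.1⁆.det ≠ 0) (hs : s ∈ Subgroup.zpowers t)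
    (hu : u ∈ Subgroup.zpowers t)
    (hsu : ⁅(y * s * y⁻¹).1, t.1⁆.det = ⁅(y * u * y⁻¹).1, t.1⁆.det) :
    s = u ∨ s = -u⁻¹ ∨ s = -u ∨ s = u⁻¹ := by
  have ne_smul_one := ne_smul_one_of_not_commute (not_commute_of_det_lie_ne_zero h)
  obtain ⟨x, z, hx⟩ := exists_eq_smul_one_add_smul_of_commute ne_smul_one
    (commute_coe_of_mem_zpowers hs)
  obtain ⟨x', z', hx'⟩ := exists_eq_smul_one_add_smul_of_commute ne_smul_one
    (commute_coe_of_mem_zpowers hu)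
  have det_lie_conj_eq {s : SL(2, F)} {x z : F} (hs : s.1 = x • 1 + z • t.1) :
      ⁅(y * s * y⁻¹).1, t.1⁆.det = z ^ 2 * ⁅(y * t * y⁻¹).1, t.1⁆.det := by
    have : (y * s * y⁻¹).1 = x • 1 + z • (y * t * y⁻¹).1 := by
      have hy := congrArg Subtype.val (mul_inv_cancel y)
      simp only [Matrix.SpecialLinearGroup.coe_mul, Matrix.SpecialLinearGroup.coe_one] at hy ⊢
      rw [hs, mul_add, add_mul, mul_smul_comm, smul_mul_assoc, mul_one, hy, mul_smul_comm,
        smul_mul_assoc]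
    rw [this, det_lie_smul_one_add_smul, Fintype.card_fin]
  rw [det_lie_conj_eq hx, det_lie_conj_eq hx'] at hsu
  exact eq_neg_or_inv_of_eq_smul_one_add_smul hx hx' (mul_right_cancel₀ h hsu)

variable [Finite F]

lemma orderOf_sq_le_ncard_doubleCoset {g : SL(2, F)}
    (h : ⁅(g * t * g⁻¹).1, t.1⁆.det ≠ 0) :
    orderOf t ^ 2 ≤ 2 * (DoubleCoset.doubleCoset g (Subgroup.zpowers t : Set SL(2, F))
      (Subgroup.zpowers t)).ncard := by
  have inf_le : Subgroup.zpowers t ⊓ (Subgroup.zpowers t).map (MulAut.conj g).toMonoidHom ≤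
      Subgroup.center SL(2, F) := by
    rw [MonoidHom.map_zpowers]
    rintro s ⟨hs, hs'⟩
    exact mem_center_of_commute_of_commute (not_commute_of_det_lie_ne_zero h)
      (commute_coe_of_mem_zpowers hs') (commute_coe_of_mem_zpowers hs)
  calc orderOf t ^ 2 = Nat.card (Subgroup.zpowers t) * Nat.card (Subgroup.zpowers t) := by
        rw [Nat.card_zpowers, sq]
    _ = _ := card_mul_card_eq_ncard_doubleCoset_mul _ _ g
    _ ≤ _ := by
        rw [mul_comm]
        exact Nat.mul_le_mul_right _
          ((Subgroup.card_le_of_le inf_le).trans (card_center_specialLinearGroup_le _ _))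

lemma orderOf_sq_le_ncard_det_lie_eq {H : Subgroup SL(2, F)} {g : SL(2, F)} (hg : g ∈ H)
    (ht : t ∈ H) (h₀ : ⁅g.1, t.1⁆.det ≠ 0) (h₁ : ⁅g.1, t.1⁆.det ≠ 4 - t.1.trace ^ 2) :
    orderOf t ^ 2 ≤ 2 * {s : H | ⁅s.1.1, t.1⁆.det = ⁅g.1, t.1⁆.det}.ncard := by
  have zpowers_le : Subgroup.zpowers t ≤ H := (Subgroup.zpowers_le).mpr ht
  have conj_ne_zero : ⁅(g * t * g⁻¹).1, t.1⁆.det ≠ 0 := by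
    rw [det_lie_conj]
    exact mul_ne_zero h₀ (sub_ne_zero.mpr h₁.symm)
  refine (orderOf_sq_le_ncard_doubleCoset conj_ne_zero).trans (Nat.mul_le_mul_left 2 ?_)
  rw [← Set.ncard_image_of_injective _ Subtype.val_injective]
  refine Set.ncard_le_ncard fun s hs ↦ ?_
  refine ⟨⟨s, ?_⟩, det_lie_eq_of_mem_doubleCoset hs, rfl⟩
  obtain ⟨u, hu, v, hv, rfl⟩ := DoubleCoset.mem_doubleCoset.mp hs
  exact H.mul_mem (H.mul_mem (zpowers_le hu) hg) (zpowers_le hv)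

lemma orderOf_le_ncard_det_lie_conj {y : SL(2, F)} (h : ⁅(y * t * y⁻¹).1, t.1⁆.det ≠ 0) :
    orderOf t ≤
      4 * (Set.range fun s : Subgroup.zpowers t ↦ ⁅(y * s * y⁻¹).1, t.1⁆.det).ncard := by
  classical
  have := Fintype.ofFinite (Subgroup.zpowers t)
  rw [← Set.image_univ, ← Finset.coe_univ, ← Finset.coe_image, Set.ncard_coe_finset,
    ← Nat.card_zpowers, Nat.card_eq_fintype_card]
  refine Finset.card_le_mul_card_image _ 4 fun c hc ↦ ?_
  obtain ⟨u, -, rfl⟩ := Finset.mem_image.mp hc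
  rw [← Finset.card_map (Function.Embedding.subtype _)]
  refine (Finset.card_le_card (t := {u.1, -u.1⁻¹, -u.1, u.1⁻¹}) ?_).trans Finset.card_le_four
  intro _ hmem
  obtain ⟨s, hs, rfl⟩ := Finset.mem_map.mp hmem
  have hsu := (Finset.mem_filter.mp hs).2
  simpa using eq_neg_or_inv_of_det_lie_conj_eq h s.2 u.2 hsu

lemma orderOf_pow_three_le {H : Subgroup SL(2, F)} {y : SL(2, F)} (ht : t ∈ H) (hy : y ∈ H)
    (h : ⁅(y * t * y⁻¹).1, t.1⁆.det ≠ 0) :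
    orderOf t ^ 3 ≤ 8 * (Nat.card H + orderOf t ^ 2) := by
  classical
  have := Fintype.ofFinite H
  set values := Set.range fun s : Subgroup.zpowers t ↦ ⁅(y * s * y⁻¹).1, t.1⁆.det with hvalues
  let good : Finset F := values.toFinite.toFinset \ {0, 4 - t.1.trace ^ 2}
  have values_le : orderOf t ≤ 4 * (good.card + 2) :=
    (orderOf_le_ncard_det_lie_conj h).trans <| Nat.mul_le_mul_left 4 <| by
      rw [← hvalues, Set.ncard_eq_toFinset_card values]
      have := Finset.le_card_sdiff {0, 4 - t.1.trace ^ 2} values.toFinite.toFinset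
      have := Finset.card_le_two (a := 0) (b := 4 - t.1.trace ^ 2)
      lia
  have level_le : ∀ c ∈ good, orderOf t ^ 2 ≤
      2 * (Finset.univ.filter fun s : H ↦ ⁅s.1.1, t.1⁆.det = c).card := by
    intro c hc
    obtain ⟨⟨s, rfl⟩, hs⟩ : c ∈ values ∧ c ∉ ({0, 4 - t.1.trace ^ 2} : Finset F) := by
      simpa [good] using hc
    rw [Finset.mem_insert, Finset.mem_singleton, not_or] at hs
    have mem : y * s * y⁻¹ ∈ H :=
      H.mul_mem (H.mul_mem hy ((Subgroup.zpowers_le).mpr ht s.2)) (H.inv_mem hy)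
    rw [← Set.ncard_coe_finset, Finset.coe_filter_univ]
    exact orderOf_sq_le_ncard_det_lie_eq mem ht hs.1 hs.2
  have card_le : good.card * orderOf t ^ 2 ≤ 2 * Nat.card H := by
    calc good.card * orderOf t ^ 2 ≤ ∑ c ∈ good, 2 *
          (Finset.univ.filter fun s : H ↦ ⁅s.1.1, t.1⁆.det = c).card := by
          simpa using Finset.card_nsmul_le_sum good _ _ level_le
      _ ≤ 2 * Nat.card H := by
          rw [← Finset.mul_sum, Nat.card_eq_fintype_card]
          exact Nat.mul_le_mul_left 2 <|
            (Finset.sum_card_fiberwise_eq_card_filter _ _ _).trans_le (Finset.card_le_univ _)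
  nlinarith [Nat.mul_le_mul_right (orderOf t ^ 2) values_le]

end Counting

section SplitTrace

variable {F : Type*} [Field F]

/-- `τ` is a split trace if the polynomial `X ^ 2 - τ * X + 1` splits over `F`, that is, if `τ` is
the trace of a diagonal matrix of `SL₂(F)`. It separates the traces of the two families of maximal
tori. -/
def IsSplitTrace (τ : F) : Prop := ∃ a : Fˣ, (a + a⁻¹ : F) = τ

lemma det_lie_ne_zero_of_isSplitTrace {g t : SL(2, F)} (hg : IsSplitTrace g.1.trace)
    (hg₄ : g.1.trace ^ 2 ≠ 4) (ht : ¬IsSplitTrace t.1.trace) : ⁅g.1, t.1⁆.det ≠ 0 := by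
  obtain ⟨a, ha⟩ := hg
  intro h
  rw [det_lie_fin_two, g.det_coe, t.det_coe, ← ha] at h
  rw [← ha] at hg₄
  set z := (g.1 * t.1).trace
  set y := t.1.trace
  have mul_inv : (a : F) * (a⁻¹ : Fˣ) = 1 := a.mul_inv
  generalize ((a⁻¹ : Fˣ) : F) = b at *
  have sub_ne_zero : (a - b : F) ≠ 0 := fun h₀ ↦ hg₄ <| by
    linear_combination (a - b : F) * h₀ + 4 * mul_inv
  have product : (z - y * b) * (z - y * a) = -(a - b : F) ^ 2 := by
    linear_combination -h + (y ^ 2 - 4) * mul_inv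
  have left_ne_zero : z - y * b ≠ 0 := by
    rintro h₀
    rw [h₀, zero_mul, zero_eq_neg, sq_eq_zero_iff] at product
    exact sub_ne_zero product
  refine ht ⟨Units.mk0 _ (div_ne_zero left_ne_zero sub_ne_zero), ?_⟩
  rw [Units.val_inv_eq_inv_val, Units.val_mk0, inv_div, div_add_div _ _ sub_ne_zero left_ne_zero,
    div_eq_iff (mul_ne_zero sub_ne_zero left_ne_zero)]
  linear_combination product

lemma trace_conj {n R : Type*} [Fintype n] [DecidableEq n] [CommRing R]
    (g t : Matrix.SpecialLinearGroup n R) : (g * t * g⁻¹).1.trace = t.1.trace := by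
  have hg := congrArg Subtype.val (inv_mul_cancel g)
  simp only [Matrix.SpecialLinearGroup.coe_mul, Matrix.SpecialLinearGroup.coe_one] at hg ⊢
  rw [Matrix.trace_mul_cycle, hg, one_mul]

end SplitTrace

section Card

lemma card_specialLinearGroup_mul_card_units (n R : Type*) [Fintype n] [DecidableEq n] [Nonempty n]
    [CommRing R] :
    Nat.card (Matrix.SpecialLinearGroup n R) * Nat.card Rˣ = Nat.card (GL n R) := by
  have ker_eq : (Matrix.GeneralLinearGroup.det (n := n) (R := R)).ker =
      (Matrix.SpecialLinearGroup.toGL (n := n) (R := R)).range := by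
    ext g
    refine ⟨fun hg ↦ ⟨⟨g, congrArg Units.val hg⟩, Units.ext rfl⟩, ?_⟩
    rintro ⟨s, rfl⟩
    exact Units.ext s.det_coe
  rw [← Subgroup.card_mul_index (Matrix.GeneralLinearGroup.det (n := n) (R := R)).ker,
    Subgroup.index_ker, MonoidHom.range_eq_top.mpr Matrix.GeneralLinearGroup.det_surjective,
    Subgroup.card_top, ker_eq,
    ← Nat.card_congr (MonoidHom.ofInjective Matrix.SpecialLinearGroup.toGL_injective).toEquiv]

variable (F : Type*) [Field F]

lemma card_SL_two [Fintype F] : Nat.card SL(2, F) = Fintype.card F * (Fintype.card F ^ 2 - 1) := by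
  have hGL := card_specialLinearGroup_mul_card_units (Fin 2) F
  rw [Matrix.card_GL_field, Nat.card_units, Nat.card_eq_fintype_card (α := F), Fin.prod_univ_two]
    at hGL
  have card_gt := Fintype.one_lt_card (α := F)
  refine Nat.eq_of_mul_eq_mul_right (m := Fintype.card F - 1) (by lia) (hGL.trans ?_)
  simp only [Fin.val_zero, Fin.val_one, pow_zero, pow_one]
  rw [sq, ← Nat.mul_sub_one]
  ring

lemma card_SL_two_le_two_mul_card_PSL2 : Nat.card SL(2, F) ≤ 2 * Nat.card (PSL2 F) := by
  rw [Subgroup.card_eq_card_quotient_mul_card_subgroup (Subgroup.center SL(2, F)), mul_comm]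
  exact Nat.mul_le_mul_right _ (card_center_specialLinearGroup_le _ _)

end Card

section Generation

variable {F : Type*} [Field F] [Fintype F] {t y : SL(2, F)}

lemma index_le_eight_of_det_lie_ne_zero {H : Subgroup SL(2, F)} (hF : 100 < Fintype.card F)
    (ht : Fintype.card F ≤ orderOf t + 1) (htH : t ∈ H) (hyH : y ∈ H)
    (h : ⁅y.1, t.1⁆.det ≠ 0) (h₀ : y.1.trace ≠ 0) (h₁ : y.1.trace ^ 2 ≠ 1) : H.index ≤ 8 := by
  have order_le : orderOf t ^ 3 ≤ 8 * (Nat.card H + orderOf t ^ 2) := by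
    rcases det_lie_conj_ne_zero_or_sq h h₀ h₁ with h | h
    · exact orderOf_pow_three_le htH hyH h
    · exact orderOf_pow_three_le htH (H.pow_mem hyH 2) h
  have card_eq := H.card_mul_index
  rw [card_SL_two] at card_eq
  by_contra! index_gt
  have card_sq_sub_one_le : Fintype.card F ^ 2 - 1 ≤ orderOf t * (orderOf t + 2) :=
    Nat.sub_le_of_le_add <| by nlinarith
  have card_le : Nat.card H * 9 ≤ (orderOf t + 1) * (orderOf t * (orderOf t + 2)) :=
    calc Nat.card H * 9 ≤ Nat.card H * H.index := Nat.mul_le_mul_left _ index_gt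
      _ ≤ _ := card_eq.trans_le (Nat.mul_le_mul ht card_sq_sub_one_le)
  have : 100 * orderOf t ^ 2 ≤ orderOf t ^ 3 := by
    rw [pow_succ _ 2, mul_comm]
    exact Nat.mul_le_mul_left _ (by lia)
  nlinarith

lemma invGen_mk_of_det_lie_conj_ne_zero (hF : 100 < Fintype.card F)
    (ht : Fintype.card F ≤ orderOf t + 1) (h₀ : y.1.trace ≠ 0) (h₁ : y.1.trace ^ 2 ≠ 1)
    (h : ∀ g h : SL(2, F), ⁅(h * y * h⁻¹).1, (g * t * g⁻¹).1⁆.det ≠ 0) :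
    InvGen (QuotientGroup.mk t : PSL2 F) (QuotientGroup.mk y : PSL2 F) := by
  intro a b
  obtain ⟨a, rfl⟩ := QuotientGroup.mk_surjective a
  obtain ⟨b, rfl⟩ := QuotientGroup.mk_surjective b
  have := Matrix.ProjectiveSpecialLinearGroup.rank_two_simple (F := F)
    (by rw [Nat.card_eq_fintype_card]; lia)
  set L := Subgroup.closure
    {(a : PSL2 F) * (t : PSL2 F) * (a : PSL2 F)⁻¹, (b : PSL2 F) * (y : PSL2 F) * (b : PSL2 F)⁻¹}
  have index_le : L.index ≤ 8 := by
    rw [← Subgroup.index_comap_of_surjective L (QuotientGroup.mk'_surjective _)]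
    refine index_le_eight_of_det_lie_ne_zero (t := a * t * a⁻¹) (y := b * y * b⁻¹) hF ?_ ?_ ?_
      (h a b) ?_ ?_
    · rwa [← MulAut.conj_apply, MulEquiv.orderOf_eq]
    · exact Subgroup.subset_closure (.inl rfl)
    · exact Subgroup.subset_closure (.inr rfl)
    all_goals rwa [trace_conj]
  refine eq_top_of_factorial_index_lt_card ?_
  have card_le := card_SL_two_le_two_mul_card_PSL2 F
  rw [card_SL_two] at card_le
  calc L.index.factorial ≤ Nat.factorial 8 := Nat.factorial_le index_le
    _ < Nat.card (PSL2 F) := by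
      have : 100 ^ 2 ≤ Fintype.card F ^ 2 - 1 :=
        Nat.le_sub_one_of_lt (Nat.pow_lt_pow_left hF two_ne_zero)
      have : Nat.factorial 8 = 40320 := rfl
      nlinarith

lemma invGen_mk_of_isSplitTrace_ne (hF : 100 < Fintype.card F)
    (ht : Fintype.card F ≤ orderOf t + 1) (h₀ : y.1.trace ≠ 0) (h₁ : y.1.trace ^ 2 ≠ 1)
    (ht₄ : t.1.trace ^ 2 ≠ 4) (hy₄ : y.1.trace ^ 2 ≠ 4)
    (hty : ¬(IsSplitTrace t.1.trace ↔ IsSplitTrace y.1.trace)) :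
    InvGen (QuotientGroup.mk t : PSL2 F) (QuotientGroup.mk y : PSL2 F) := by
  refine invGen_mk_of_det_lie_conj_ne_zero hF ht h₀ h₁ fun g h ↦ ?_
  rw [← trace_conj g t] at ht₄ hty
  rw [← trace_conj h y] at hy₄ hty
  by_cases hy : IsSplitTrace (h * y * h⁻¹).1.trace
  · exact det_lie_ne_zero_of_isSplitTrace hy hy₄ (by tauto)
  · rw [det_lie_fin_two_symm]
    exact det_lie_ne_zero_of_isSplitTrace (by tauto) ht₄ hy

end Generation

section Torus

variable {F : Type*} [Field F]

lemma isSplitTrace_of_sq_eq_four {τ : F} (hτ : τ ^ 2 = 4) : IsSplitTrace τ := by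
  have : (τ - 2) * (τ + 2) = 0 := by linear_combination hτ
  rcases mul_eq_zero.mp this with h | h
  · exact ⟨1, by rw [inv_one, Units.val_one]; linear_combination -h⟩
  · exact ⟨-1, by rw [inv_neg, inv_one, Units.val_neg, Units.val_one]; linear_combination -h⟩

lemma exists_orderOf_eq_and_trace_eq (a : Fˣ) :
    ∃ t : SL(2, F), orderOf t = orderOf a ∧ t.1.trace = a + (a⁻¹ : Fˣ) := by
  let diag : Fˣ →* SL(2, F) :=
    { toFun a := Matrix.SpecialLinearGroup.diag2 a a.ne_zero
      map_one' := Subtype.ext <| by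
        rw [Matrix.SpecialLinearGroup.diag2_coe']; simp [Matrix.one_fin_two]
      map_mul' a b := Subtype.ext <| by
        simp [Matrix.SpecialLinearGroup.diag2_coe', mul_comm] }
  have diag_coe (a : Fˣ) : (diag a).1 = !![(a : F), 0; 0, (a : F)⁻¹] :=
    Matrix.SpecialLinearGroup.diag2_coe' a.ne_zero
  refine ⟨diag a, orderOf_injective diag (fun a b hab ↦ Units.ext ?_) a, ?_⟩
  · simpa [diag_coe] using congrFun₂ (congrArg Subtype.val hab) 0 0
  · rw [diag_coe, Matrix.trace_fin_two_of, Units.val_inv_eq_inv_val]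

lemma exists_orderOf_eq_of_norm_eq_one {K : Type*} [Field K] [Algebra F K]
    (hK : Module.finrank F K = 2) {w : K} (hw : Algebra.norm F w = 1) :
    ∃ t : SL(2, F), orderOf t = orderOf w ∧ w ^ 2 = -1 + t.1.trace • w := by
  have : Module.Finite F K := Module.finite_of_finrank_eq_succ hK
  let b := Module.finBasisOfFinrankEq F K hK
  have leftMul_injective := Algebra.leftMulMatrix_injective b
  let t : SL(2, F) := ⟨Algebra.leftMulMatrix b w, by rw [← Algebra.norm_eq_matrix_det, hw]⟩
  refine ⟨t, ?_, leftMul_injective ?_⟩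
  · refine orderOf_eq_orderOf_iff.mpr fun n ↦ ?_
    rw [← leftMul_injective.eq_iff, map_pow, map_one]
    change _ ↔ (t ^ n).1 = (1 : SL(2, F)).1
    exact Subtype.ext_iff
  · have cayley_hamilton := sq_eq_neg_one_add_trace_smul t
    rw [neg_one_smul, Matrix.SpecialLinearGroup.coe_pow] at cayley_hamilton
    simpa using cayley_hamilton

lemma exists_units_algebraMap_eq_of_isSplitTrace {K : Type*} [Field K] [Algebra F K] {τ : F}
    (hτ : IsSplitTrace τ) {w : K} (hw : w ^ 2 = -1 + τ • w) : ∃ c : Fˣ, algebraMap F K c = w := by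
  obtain ⟨a, ha⟩ := hτ
  have mul_inv : algebraMap F K a * algebraMap F K (a⁻¹ : Fˣ) = 1 := by
    rw [← map_mul, a.mul_inv, map_one]
  have : (w - algebraMap F K a) * (w - algebraMap F K (a⁻¹ : Fˣ)) = 0 := by
    rw [← ha, Algebra.smul_def, map_add] at hw
    linear_combination hw + mul_inv
  rcases mul_eq_zero.mp this with h | h
  · exact ⟨a, (sub_eq_zero.mp h).symm⟩
  · exact ⟨a⁻¹, (sub_eq_zero.mp h).symm⟩

variable (F) [Fintype F]

lemma exists_orderOf_eq_card_add_one_and_norm_eq_one {K : Type*} [Field K] [Algebra F K]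
    (hK : Module.finrank F K = 2) :
    ∃ w : K, orderOf w = Fintype.card F + 1 ∧ Algebra.norm F w = 1 := by
  have card_gt := Fintype.one_lt_card (α := F)
  have : Module.Finite F K := Module.finite_of_finrank_eq_succ hK
  have : Finite K := Module.finite_of_finite F
  obtain ⟨g, hg⟩ := IsCyclic.exists_ofOrder_eq_natCard (α := Kˣ)
  rw [Nat.card_units, Module.natCard_eq_pow_finrank (K := F), hK, Nat.card_eq_fintype_card,
    ← one_pow 2, Nat.sq_sub_sq] at hg
  refine ⟨(g : K) ^ (Fintype.card F - 1), ?_, ?_⟩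
  · rw [← Units.val_pow_eq_pow_val, orderOf_units,
      orderOf_pow_of_dvd (by lia) (Dvd.intro_left _ hg.symm), hg, Nat.mul_div_cancel _ (by lia)]
  · rw [map_pow, FiniteField.pow_card_sub_one_eq_one]
    exact Algebra.norm_ne_zero_iff.mpr g.ne_zero

lemma exists_orderOf_eq_card_sub_one_and_isSplitTrace :
    ∃ t : SL(2, F), orderOf t = Fintype.card F - 1 ∧ IsSplitTrace t.1.trace ∧
      (3 < Fintype.card F → t.1.trace ^ 2 ≠ 4) := by
  obtain ⟨a, ha⟩ := IsCyclic.exists_ofOrder_eq_natCard (α := Fˣ)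
  obtain ⟨t, ht, trace_eq⟩ := exists_orderOf_eq_and_trace_eq a
  rw [Nat.card_units, Nat.card_eq_fintype_card] at ha
  refine ⟨t, ht.trans ha, ⟨a, trace_eq.symm⟩, fun hF h ↦ ?_⟩
  have sub_sq : (a - (a⁻¹ : Fˣ) : F) ^ 2 = 0 := by
    linear_combination h - 4 * a.mul_inv - (t.1.trace + (a + (a⁻¹ : Fˣ))) * trace_eq
  have a_sq : a ^ 2 = 1 := by
    rw [sq, mul_eq_one_iff_eq_inv]
    exact Units.ext (sub_eq_zero.mp (sq_eq_zero_iff.mp sub_sq))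
  have := orderOf_le_of_pow_eq_one zero_lt_two a_sq
  lia

lemma exists_orderOf_eq_card_add_one_and_not_isSplitTrace :
    ∃ t : SL(2, F), orderOf t = Fintype.card F + 1 ∧ ¬IsSplitTrace t.1.trace := by
  have card_gt := Fintype.one_lt_card (α := F)
  obtain ⟨p, hp⟩ := CharP.exists F
  have : Fact p.Prime := ⟨CharP.char_is_prime F p⟩
  have finrank_eq := FiniteField.finrank_extension F p 2
  obtain ⟨w, orderOf_w, norm_w⟩ := exists_orderOf_eq_card_add_one_and_norm_eq_one F finrank_eq
  obtain ⟨t, ht, w_sq⟩ := exists_orderOf_eq_of_norm_eq_one finrank_eq norm_w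
  refine ⟨t, ht.trans orderOf_w, fun hsplit ↦ ?_⟩
  obtain ⟨c, rfl⟩ := exists_units_algebraMap_eq_of_isSplitTrace hsplit w_sq
  have pow_eq_one : algebraMap F (FiniteField.Extension F p 2) c ^ (Fintype.card F - 1) = 1 := by
    rw [← map_pow, FiniteField.pow_card_sub_one_eq_one _ c.ne_zero, map_one]
  have := orderOf_le_of_pow_eq_one (by lia) pow_eq_one
  lia

end Torus

section Order

lemma two_ne_zero_or_even_card (F : Type*) [Field F] [Fintype F] :
    (2 : F) ≠ 0 ∨ Even (Fintype.card F) := by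
  rcases Nat.even_or_odd (Fintype.card F) with h | h
  · exact .inr h
  · exact .inl (Ring.two_ne_zero fun h₂ ↦ Nat.not_even_iff_odd.mpr h
      (Nat.even_iff.mpr (FiniteField.even_card_of_char_two h₂)))

variable {F : Type*} [Field F] {g t : SL(2, F)}

lemma sq_eq_one_iff_mem_center (h : (2 : F) ≠ 0 ∨ Odd (orderOf g)) :
    g ^ 2 = 1 ↔ g ∈ Subgroup.center SL(2, F) := by
  constructor
  · intro hg
    rcases h with h | ⟨k, hk⟩
    · have trace_smul : g.1.trace • g.1 = (2 : F) • 1 := by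
        have := sq_eq_neg_one_add_trace_smul g
        rw [hg, Matrix.SpecialLinearGroup.coe_one, neg_one_smul, eq_neg_add_iff_add_eq] at this
        rw [← this]
        module
      have trace_ne_zero : g.1.trace ≠ 0 := by
        intro h₀
        rw [h₀, zero_smul] at trace_smul
        exact h (by simpa using congrFun₂ trace_smul.symm 0 0)
      refine mem_center_of_eq_smul_one (c := (g.1.trace)⁻¹ * 2) ?_
      rw [mul_smul, ← trace_smul, inv_smul_smul₀ trace_ne_zero]
    · have : g = 1 := by
        calc g = g ^ orderOf g * g := by rw [pow_orderOf_eq_one, one_mul]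
          _ = (g ^ 2) ^ (k + 1) := by rw [hk, ← pow_succ, ← pow_mul]; ring_nf
          _ = 1 := by rw [hg, one_pow]
      exact this ▸ Subgroup.one_mem _
  · intro hg
    obtain ⟨r, hr, hrg⟩ := Matrix.SpecialLinearGroup.mem_center_iff.mp hg
    refine Subtype.ext ?_
    rw [Matrix.SpecialLinearGroup.coe_pow, ← hrg, ← map_pow, ← Fintype.card_fin 2, hr, map_one,
      Matrix.SpecialLinearGroup.coe_one]

lemma orderOf_mk_PSL2 (h : (2 : F) ≠ 0 ∨ Odd (orderOf t)) :
    orderOf (t : PSL2 F) = orderOf t / Nat.gcd 2 (orderOf t) := by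
  rw [Nat.gcd_comm, ← orderOf_pow' t two_ne_zero, orderOf_eq_orderOf_iff]
  intro n
  rw [← pow_mul, mul_comm, pow_mul, sq_eq_one_iff_mem_center, ← QuotientGroup.mk_pow,
    QuotientGroup.eq_one_iff]
  exact h.imp_right fun hodd ↦ hodd.of_dvd_nat (orderOf_pow_dvd n)

end Order

section Density

lemma card_trace_eq_le {F : Type*} [Field F] [Fintype F] (τ : F) :
    Nat.card {g : SL(2, F) // g.1.trace = τ} ≤ 2 * Fintype.card F ^ 2 := by
  classical
  let f (g : {g : SL(2, F) // g.1.trace = τ}) : F × (F ⊕ F) :=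
    (g.1.1 0 0, if g.1.1 0 1 = 0 then .inr (g.1.1 1 0) else .inl (g.1.1 0 1))
  have f_injective : Function.Injective f := by
    rintro ⟨g, hg⟩ ⟨h, hh⟩ hgh
    have g_det := g.det_coe
    have h_det := h.det_coe
    rw [Matrix.det_fin_two] at g_det h_det
    rw [Matrix.trace_fin_two] at hg hh
    obtain ⟨eq₀₀ : g.1 0 0 = h.1 0 0, eq_off⟩ := Prod.mk.inj hgh
    have eq₁₁ : g.1 1 1 = h.1 1 1 := by linear_combination hg - hh - eq₀₀
    have off_mul : g.1 0 1 * g.1 1 0 = h.1 0 1 * h.1 1 0 := by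
      linear_combination h_det - g_det + g.1 1 1 * eq₀₀ + h.1 0 0 * eq₁₁
    have : g.1 0 1 = h.1 0 1 ∧ g.1 1 0 = h.1 1 0 := by
      dsimp only at eq_off
      split_ifs at eq_off with hg₀ hh₀ hh₀
      · exact ⟨hg₀.trans hh₀.symm, Sum.inr_injective eq_off⟩
      · have eq₀₁ := Sum.inl_injective eq_off
        exact ⟨eq₀₁, mul_left_cancel₀ hg₀ (by rw [off_mul, eq₀₁])⟩
    refine Subtype.ext (Matrix.SpecialLinearGroup.ext _ _ ?_)
    simp [Fin.forall_fin_two, eq₀₀, eq₁₁, this]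
  calc _ ≤ Nat.card (F × (F ⊕ F)) := Nat.card_le_card_of_injective f f_injective
    _ = _ := by rw [Nat.card_prod, Nat.card_sum, Nat.card_eq_fintype_card]; ring

variable {F : Type*} [Field F] [Fintype F]

lemma card_trace_mem_le (S : Finset F) :
    Nat.card {g : SL(2, F) // g.1.trace ∈ S} ≤ S.card * (2 * Fintype.card F ^ 2) := by
  classical
  have := Fintype.ofFinite SL(2, F)
  rw [Nat.card_eq_fintype_card, Fintype.card_subtype, mul_comm]
  refine Finset.card_le_mul_card_image_of_maps_to (f := fun g : SL(2, F) ↦ g.1.trace)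
    (fun g hg ↦ (Finset.mem_filter.mp hg).2) _ fun τ _ ↦ ?_
  calc _ ≤ (Finset.univ.filter fun g : SL(2, F) ↦ g.1.trace = τ).card :=
        Finset.card_le_card (Finset.filter_subset_filter _ (Finset.subset_univ _))
    _ ≤ _ := by
      rw [← Fintype.card_subtype, ← Nat.card_eq_fintype_card]
      exact card_trace_eq_le τ

lemma invGen_mk_or_invGen_mk {s t y : SL(2, F)} (hF : 100 < Fintype.card F)
    (hs : Fintype.card F ≤ orderOf s + 1) (ht : Fintype.card F ≤ orderOf t + 1)
    (hs_split : IsSplitTrace s.1.trace) (hs₄ : s.1.trace ^ 2 ≠ 4)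
    (ht_split : ¬IsSplitTrace t.1.trace)
    (h₀ : y.1.trace ≠ 0) (h₁ : y.1.trace ^ 2 ≠ 1) (h₄ : y.1.trace ^ 2 ≠ 4) :
    InvGen (QuotientGroup.mk s : PSL2 F) (QuotientGroup.mk y : PSL2 F) ∨
      InvGen (QuotientGroup.mk t : PSL2 F) (QuotientGroup.mk y : PSL2 F) := by
  by_cases hy : IsSplitTrace y.1.trace
  · exact .inr <| invGen_mk_of_isSplitTrace_ne hF ht h₀ h₁
      (fun h ↦ ht_split (isSplitTrace_of_sq_eq_four h)) h₄ fun h ↦ ht_split (h.mpr hy)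
  · exact .inl <| invGen_mk_of_isSplitTrace_ne hF hs h₀ h₁ hs₄ h₄ fun h ↦ hy (h.mp hs_split)

lemma card_not_invGen_le {s t : SL(2, F)} (hF : 100 < Fintype.card F)
    (hs : Fintype.card F ≤ orderOf s + 1) (ht : Fintype.card F ≤ orderOf t + 1)
    (hs_split : IsSplitTrace s.1.trace) (hs₄ : s.1.trace ^ 2 ≠ 4)
    (ht_split : ¬IsSplitTrace t.1.trace) :
    Nat.card {y : PSL2 F // ¬(InvGen (s : PSL2 F) y ∨ InvGen (t : PSL2 F) y)} ≤
      10 * Fintype.card F ^ 2 := by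
  classical
  let S : Finset F := {0, 1, -1, 2, -2}
  have out_trace_mem (y : {y : PSL2 F // ¬(InvGen (s : PSL2 F) y ∨ InvGen (t : PSL2 F) y)}) :
      y.1.out.1.trace ∈ S := by
    by_contra h
    simp only [S, Finset.mem_insert, Finset.mem_singleton, not_or] at h
    refine y.2 ?_
    rw [← QuotientGroup.out_eq' y.1]
    refine invGen_mk_or_invGen_mk hF hs ht hs_split hs₄ ht_split h.1 ?_ ?_
    · rw [Ne, sq_eq_one_iff]
      tauto
    · rw [show (4 : F) = 2 ^ 2 by norm_num, Ne, sq_eq_sq_iff_eq_or_eq_neg]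
      tauto
  calc _ ≤ Nat.card {g : SL(2, F) // g.1.trace ∈ S} :=
        Nat.card_le_card_of_injective (fun y ↦ ⟨y.1.out, out_trace_mem y⟩) fun y z h ↦
          Subtype.ext (Quotient.out_injective (congrArg Subtype.val h))
    _ ≤ S.card * (2 * Fintype.card F ^ 2) := card_trace_mem_le S
    _ ≤ 5 * (2 * Fintype.card F ^ 2) := Nat.mul_le_mul_right _ Finset.card_le_five
    _ = _ := by ring

lemma card_invGen_ge {s t : SL(2, F)}
    (hs : Fintype.card F ≤ orderOf s + 1) (ht : Fintype.card F ≤ orderOf t + 1)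
    (hs_split : IsSplitTrace s.1.trace) (hs₄ : 3 < Fintype.card F → s.1.trace ^ 2 ≠ 4)
    (ht_split : ¬IsSplitTrace t.1.trace) :
    (Nat.card {y : PSL2 F // InvGen (s : PSL2 F) y ∨ InvGen (t : PSL2 F) y} : ℝ) ≥
      (1 - 100 / Fintype.card F) * Nat.card (PSL2 F) := by
  have card_pos : (0 : ℝ) < Fintype.card F := mod_cast Fintype.card_pos
  by_cases! hF : Fintype.card F ≤ 100
  · refine (mul_nonpos_of_nonpos_of_nonneg (sub_nonpos.mpr ?_) (Nat.cast_nonneg _)).trans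
      (Nat.cast_nonneg _)
    rw [one_le_div card_pos]
    exact_mod_cast hF
  have card_bad := card_not_invGen_le hF hs ht hs_split (hs₄ (by lia)) ht_split
  have card_add : Nat.card {y : PSL2 F // InvGen (s : PSL2 F) y ∨ InvGen (t : PSL2 F) y} +
      Nat.card {y : PSL2 F // ¬(InvGen (s : PSL2 F) y ∨ InvGen (t : PSL2 F) y)} =
        Nat.card (PSL2 F) := Set.ncard_add_ncard_compl _
  have card_PSL2_ge := card_SL_two_le_two_mul_card_PSL2 F
  rw [card_SL_two] at card_PSL2_ge
  have bad_mul_le : Nat.card {y : PSL2 F // ¬(InvGen (s : PSL2 F) y ∨ InvGen (t : PSL2 F) y)} *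
      Fintype.card F ≤ 100 * Nat.card (PSL2 F) := by
    have : 10 * Fintype.card F ^ 2 ≤ 50 * (Fintype.card F ^ 2 - 1) := by
      have := Nat.pow_lt_pow_left hF two_ne_zero
      lia
    nlinarith
  rw [ge_iff_le, sub_mul, one_mul, sub_le_iff_le_add, ← card_add, Nat.cast_add, add_le_add_iff_left,
    div_mul_eq_mul_div, le_div_iff₀ card_pos, ← Nat.cast_add, card_add]
  exact_mod_cast bad_mul_le

end Density

theorem stmt_2_general (F : Type*) [Field F] [Fintype F] :
    ∃ x₁ x₂ : PSL2 F,
      orderOf x₁ = (Fintype.card F - 1) / Nat.gcd 2 (Fintype.card F - 1) ∧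
      orderOf x₂ = (Fintype.card F + 1) / Nat.gcd 2 (Fintype.card F - 1) ∧
      (Nat.card {y : PSL2 F // InvGen x₁ y ∨ InvGen x₂ y} : ℝ) ≥
        (1 - 100 / Fintype.card F) * Nat.card (PSL2 F) := by
  have card_gt := Fintype.one_lt_card (α := F)
  obtain ⟨s, hs, hs_split, hs₄⟩ := exists_orderOf_eq_card_sub_one_and_isSplitTrace F
  obtain ⟨t, ht, ht_split⟩ := exists_orderOf_eq_card_add_one_and_not_isSplitTrace F
  have gcd_eq : Nat.gcd 2 (Fintype.card F + 1) = Nat.gcd 2 (Fintype.card F - 1) := by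
    rw [← Nat.gcd_add_self_right 2 (Fintype.card F - 1)]
    congr 1
    lia
  refine ⟨s, t, ?_, ?_, card_invGen_ge (by lia) (by lia) hs_split hs₄ ht_split⟩
  · rw [orderOf_mk_PSL2, hs]
    exact (two_ne_zero_or_even_card F).imp_right fun h ↦ hs ▸ Nat.Even.sub_odd card_gt.le h odd_one
  · rw [orderOf_mk_PSL2, ht, gcd_eq]
    exact (two_ne_zero_or_even_card F).imp_right fun h ↦ ht ▸ h.add_one

theorem stmt_2 :
    ∃ C : ℝ, 0 < C ∧
      ∀ (F : Type) [Field F] [Fintype F],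
        ∃ x₁ x₂ : PSL2 F,
          orderOf x₁ = (Fintype.card F - 1) / Nat.gcd 2 (Fintype.card F - 1) ∧
          orderOf x₂ = (Fintype.card F + 1) / Nat.gcd 2 (Fintype.card F - 1) ∧
          (Nat.card {y : PSL2 F // InvGen x₁ y ∨ InvGen x₂ y} : ℝ) ≥
            (1 - C / Fintype.card F) * Nat.card (PSL2 F) :=
  ⟨100, by norm_num, fun F _ _ ↦ stmt_2_general F⟩
end
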